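/- arXiv:1308.1804 — 4 statements merged into one kernel-verified Lean document; each statement's English description precedes it below -/
import Mathlib

section
/- Let R be a ring, C a big cotilting right R-module with cotilting class X_C, and X ∈ D(R). Then the following are equivalent: (1) Hom_{D(R)}(X, Σ^i C) = 0 for all i > 0; (2) X is isomorphic in D(R) to a complex ⋯ → 0 → X^0 → X^1 → X^2 → ⋯ concentrated in nonnegative degrees with all X^i ∈ X_C; (3) X is isomorphic in D(R) to such a complex with all X^i direct summands of products of copies of C. -/
/-!
Statement 12: Let `R` be a ring, `C` a big cotilting module with cotilting class `X_C` and
`X ∈ D(R)`.  TFAE: (1) `Hom(X, Σ^i C) = 0` for all `i > 0`; (2) `X` is isomorphic to a complex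
concentrated in nonnegative degrees with components in `X_C`; (3) likewise with components
in `Prod C`.
-/

universe e w v u

open CategoryTheory Category Limits

namespace PaperStmt

variable {R : Type v} [Ring R]

/-- `M` belongs to `Prod C`: it is a direct summand of a product of copies of `C`. -/
def InProdOf (C M : ModuleCat.{v} R) : Prop :=
  ∃ (ι : Type v) (s : M ⟶ ∏ᶜ (fun _ : ι => C)) (r : (∏ᶜ (fun _ : ι => C)) ⟶ M),
    s ≫ r = 𝟙 M

/-- `C` has injective dimension at most `n`. -/
def InjDimLE (C : ModuleCat.{v} R) (n : ℕ) : Prop :=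
  ∃ S : ComposableArrows (ModuleCat.{v} R) (n + 3),
    S.Exact ∧ IsZero (S.obj 0) ∧ IsZero (S.obj (Fin.last (n + 3))) ∧
    Nonempty (S.obj ⟨1, by omega⟩ ≅ C) ∧
    ∀ (i : ℕ) (_ : 2 ≤ i) (_ : i ≤ n + 2), Injective (S.obj ⟨i, by omega⟩)

/-- `C` is a big `n`-cotilting module. -/
def IsBigNCotilting [HasExt.{e} (ModuleCat.{v} R)] (n : ℕ) (C : ModuleCat.{v} R) : Prop :=
  InjDimLE C n ∧
  (∀ (ι : Type v) (j : ℕ), 0 < j →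
      Subsingleton (Abelian.Ext (∏ᶜ (fun _ : ι => C)) C j)) ∧
  (∃ (r : ℕ) (S : ComposableArrows (ModuleCat.{v} R) (r + 3)),
    S.Exact ∧ IsZero (S.obj 0) ∧ IsZero (S.obj (Fin.last (r + 3))) ∧
    (∀ (i : ℕ) (_ : 1 ≤ i) (_ : i ≤ r + 1), InProdOf C (S.obj ⟨i, by omega⟩)) ∧
    Injective (S.obj ⟨r + 2, by omega⟩) ∧ IsCoseparator (S.obj ⟨r + 2, by omega⟩))

/-- `C` is a big cotilting module. -/
def IsBigCotilting [HasExt.{e} (ModuleCat.{v} R)] (C : ModuleCat.{v} R) : Prop :=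
  ∃ n : ℕ, IsBigNCotilting n C

/-- Membership in the cotilting class `X_C = {M : Ext^i(M, C) = 0 for all i > 0}`. -/
def InCotiltingClass [HasExt.{e} (ModuleCat.{v} R)] (C M : ModuleCat.{v} R) : Prop :=
  ∀ i : ℕ, 0 < i → Subsingleton (Abelian.Ext M C i)

end PaperStmt

open PaperStmt DerivedCategory


namespace PaperStmt

open Abelian

section ExtLemmas

variable {A : Type*} [Category* A] [Abelian A] [HasExt.{e} A]

lemma ext_X3 {S : ShortComplex A} (hS : S.ShortExact) (C : A) (i : ℕ)
    (h₁ : Subsingleton (Ext S.X₁ C i)) (h₂ : Subsingleton (Ext S.X₂ C (i + 1))) :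
    Subsingleton (Ext S.X₃ C (i + 1)) := by
  refine subsingleton_of_forall_eq 0 fun x => ?_
  obtain ⟨y, rfl⟩ := Ext.contravariant_sequence_exact₃ hS C x (Subsingleton.elim _ _)
    (n₀ := i) (by omega)
  rw [Subsingleton.elim y 0, Ext.comp_zero]

lemma ext_X1 {S : ShortComplex A} (hS : S.ShortExact) (C : A) (i : ℕ)
    (h₂ : Subsingleton (Ext S.X₂ C i)) (h₃ : Subsingleton (Ext S.X₃ C (i + 1))) :
    Subsingleton (Ext S.X₁ C i) := by
  refine subsingleton_of_forall_eq 0 fun x => ?_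
  obtain ⟨y, rfl⟩ := Ext.contravariant_sequence_exact₁ hS C x (n₁ := i + 1) (by omega)
    (Subsingleton.elim _ _)
  rw [Subsingleton.elim y 0, Ext.comp_zero]

lemma ext_X2 {S : ShortComplex A} (hS : S.ShortExact) (C : A) (i : ℕ)
    (h₁ : Subsingleton (Ext S.X₁ C i)) (h₃ : Subsingleton (Ext S.X₃ C i)) :
    Subsingleton (Ext S.X₂ C i) := by
  refine subsingleton_of_forall_eq 0 fun x => ?_
  obtain ⟨y, rfl⟩ := Ext.contravariant_sequence_exact₂ hS C x (Subsingleton.elim _ _)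
  rw [Subsingleton.elim y 0, Ext.comp_zero]

lemma ext_extend {S : ShortComplex A} (hS : S.ShortExact) (C : A)
    (h₃ : Subsingleton (Ext S.X₃ C 1)) (f : S.X₁ ⟶ C) : ∃ g : S.X₂ ⟶ C, S.f ≫ g = f := by
  obtain ⟨y, hy⟩ := Ext.contravariant_sequence_exact₁ hS C (Ext.mk₀ f) (n₁ := 1) (by omega)
    (Subsingleton.elim _ _)
  obtain ⟨g, rfl⟩ := Ext.homEquiv₀.symm.surjective y
  refine ⟨g, Ext.homEquiv₀.symm.injective ?_⟩
  simpa using hy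

lemma ext_X3_one {S : ShortComplex A} (hS : S.ShortExact) (C : A)
    (h : ∀ f : S.X₁ ⟶ C, ∃ g : S.X₂ ⟶ C, S.f ≫ g = f) (h₂ : Subsingleton (Ext S.X₂ C 1)) :
    Subsingleton (Ext S.X₃ C 1) := by
  refine subsingleton_of_forall_eq 0 fun x => ?_
  obtain ⟨y, rfl⟩ := Ext.contravariant_sequence_exact₃ hS C x (Subsingleton.elim _ _)
    (n₀ := 0) (by omega)
  obtain ⟨f, rfl⟩ := Ext.homEquiv₀.symm.surjective y
  obtain ⟨g, rfl⟩ := h f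
  simp only [Ext.homEquiv₀_symm_apply]
  rw [← Ext.mk₀_comp_mk₀, hS.extClass_comp_assoc]

lemma ext_lift {S : ShortComplex A} (hS : S.ShortExact) (M : A)
    (h₁ : Subsingleton (Ext M S.X₁ 1)) (f : M ⟶ S.X₃) : ∃ g : M ⟶ S.X₂, g ≫ S.g = f := by
  obtain ⟨y, hy⟩ := Ext.covariant_sequence_exact₃ M hS (Ext.mk₀ f) (n₁ := 1) (by omega)
    (Subsingleton.elim _ _)
  obtain ⟨g, rfl⟩ := Ext.homEquiv₀.symm.surjective y
  refine ⟨g, Ext.homEquiv₀.symm.injective ?_⟩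
  simpa using hy

lemma ext_co_X3 {S : ShortComplex A} (hS : S.ShortExact) (M : A) (i : ℕ)
    (h₂ : Subsingleton (Ext M S.X₂ i)) (h₁ : Subsingleton (Ext M S.X₁ (i + 1))) :
    Subsingleton (Ext M S.X₃ i) := by
  refine subsingleton_of_forall_eq 0 fun x => ?_
  obtain ⟨y, rfl⟩ := Ext.covariant_sequence_exact₃ M hS x (n₁ := i + 1) (by omega)
    (Subsingleton.elim _ _)
  rw [Subsingleton.elim y 0, Ext.zero_comp]

lemma ext_retract {M M' : A} (C : A) (i : ℕ) (s : M ⟶ M') (r : M' ⟶ M) (h : s ≫ r = 𝟙 M)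
    (h' : Subsingleton (Ext M' C i)) : Subsingleton (Ext M C i) := by
  refine subsingleton_of_forall_eq 0 fun x => ?_
  rw [← Ext.mk₀_id_comp x, ← h, ← Ext.mk₀_comp_mk₀, Ext.comp_assoc_of_second_deg_zero,
    Subsingleton.elim ((Ext.mk₀ r).comp x (zero_add i)) 0, Ext.comp_zero]

lemma ext_isZero {M : A} (C : A) (i : ℕ) (h : IsZero M) : Subsingleton (Ext M C i) := by
  refine subsingleton_of_forall_eq 0 fun x => ?_
  rw [← Ext.mk₀_id_comp x, h.eq_of_src (𝟙 M) 0, Ext.mk₀_zero, Ext.zero_comp]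

lemma ext_projective (M C : A) [Projective M] (i : ℕ) (hi : 0 < i) :
    Subsingleton (Ext M C i) := by
  obtain ⟨j, rfl⟩ : ∃ j, i = j + 1 := ⟨i - 1, by omega⟩
  exact subsingleton_of_forall_eq 0 fun x => Ext.eq_zero_of_projective x

end ExtLemmas

section Kernels

variable {A : Type*} [Category* A] [Abelian A]

/-- the short exact sequence of kernels -/
lemma kernel_ses {X Y Z : A} (f : X ⟶ Y) (g : Y ⟶ Z) (w : f ≫ g = 0)
    (h : (ShortComplex.mk f g w).Exact) :
    (ShortComplex.mk (kernel.ι f) (kernel.lift g f w)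
      (by rw [← cancel_mono (kernel.ι g)]; simp)).ShortExact := by
  have : Epi (kernel.lift g f w) := (ShortComplex.exact_iff_epi_kernel_lift _).1 h
  refine { exact := ?_ }
  refine ShortComplex.exact_of_f_is_kernel _ (KernelFork.IsLimit.ofι' _ _ fun k hk => ?_)
  have hk' : k ≫ f = 0 := by
    have := hk =≫ kernel.ι g
    simpa using this
  exact ⟨kernel.lift f k hk', kernel.lift_ι _ _ _⟩

/-- the short exact sequence of cokernels -/
lemma cokernel_ses {X Y Z : A} (f : X ⟶ Y) (g : Y ⟶ Z) (w : f ≫ g = 0)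
    (h : (ShortComplex.mk f g w).Exact) :
    (ShortComplex.mk (cokernel.desc f g w) (cokernel.π g)
      (by rw [← cancel_epi (cokernel.π f)]; simp)).ShortExact := by
  have : Mono (cokernel.desc f g w) := (ShortComplex.exact_iff_mono_cokernel_desc _).1 h
  refine { exact := ?_ }
  refine ShortComplex.exact_of_g_is_cokernel _ (CokernelCofork.IsColimit.ofπ' _ _ fun k hk => ?_)
  have hk' : g ≫ k = 0 := by
    have := cokernel.π f ≫= hk
    simpa using this
  exact ⟨cokernel.desc g k hk', cokernel.π_desc _ _ _⟩

end Kernels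

end PaperStmt


namespace PaperStmt

open Abelian

section CotiltingFacts

variable {R : Type v} [Ring R]

lemma isZero_kernel_of_exact {A : Type*} [Category* A] [Abelian A] {X Y Z : A}
    (f : X ⟶ Y) (g : Y ⟶ Z) (w : f ≫ g = 0)
    (h : (ShortComplex.mk f g w).Exact) (hX : IsZero X) : IsZero (kernel g) := by
  have : Epi (kernel.lift g f w) := (ShortComplex.exact_iff_epi_kernel_lift _).1 h
  exact IsZero.of_epi (kernel.lift g f w) hX

lemma injDim_of_injDimLE (C : ModuleCat.{v} R) (n : ℕ) (h : InjDimLE C n) :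
    HasInjectiveDimensionLT C (n + 1) := by
  obtain ⟨S, hS, h0, hl, ⟨e⟩, hI⟩ := h
  have key : ∀ (k j : ℕ) (_ : 1 ≤ j) (hj : j + k = n + 1),
      HasInjectiveDimensionLT (kernel (S.map' (j + 1) (j + 2))) (k + 1) := by
    intro k
    induction k with
    | zero =>
      intro j hj1 hj
      obtain rfl : j = n + 1 := by omega
      have hz : S.map' (n + 1 + 1) (n + 1 + 2) = 0 := IsZero.eq_of_tgt hl _ _
      have hinj : Injective (S.obj ⟨n + 2, by omega⟩) := hI (n + 2) (by omega) (by omega)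
      have e' : S.obj ⟨n + 2, by omega⟩ ≅ kernel (S.map' (n + 1 + 1) (n + 1 + 2)) :=
        (kernelZeroIsoSource).symm ≪≫ kernelIsoOfEq hz.symm
      exact hasInjectiveDimensionLT_of_iso e' 1
    | succ k ih =>
      intro j hj1 hj
      have hses := kernel_ses _ _ _ (hS.exact' (j + 1) (j + 2) (j + 3))
      have hinj : Injective (S.obj ⟨j + 1, by omega⟩) := hI (j + 1) (by omega) (by omega)
      have h3 := ih (j + 1) (by omega) (by omega)
      refine hses.hasInjectiveDimensionLT_X₁ (k + 1) h3 ?_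
      dsimp
      exact hasInjectiveDimensionLT_of_ge _ 1 _ (by omega)
  have hses := kernel_ses _ _ _ (hS.exact' 1 2 3)
  have hz := isZero_kernel_of_exact _ _ _ (hS.exact' 0 1 2) h0
  have h2 := hses.hasInjectiveDimensionLT_X₂ (n + 1)
    (by
      have := hz.hasInjectiveDimensionLT_zero
      exact hasInjectiveDimensionLT_of_ge _ 0 _ (by omega))
    (key n 1 (by omega) (by omega))
  exact hasInjectiveDimensionLT_of_iso e (n + 1)

variable [HasExt.{e} (ModuleCat.{v} R)]

/-- The resolution of the injective cogenerator, as an induction principle. -/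
lemma cotilting_induction {C : ModuleCat.{v} R} (hC : IsBigCotilting C) :
    ∃ (S : ShortComplex (ModuleCat.{v} R)), S.ShortExact ∧ InProdOf C S.X₂ ∧
      Injective S.X₃ ∧ IsCoseparator S.X₃ ∧
      ∀ P : ModuleCat.{v} R → Prop, (∀ Z, IsZero Z → P Z) → (∀ M, InProdOf C M → P M) →
        (∀ T : ShortComplex (ModuleCat.{v} R), T.ShortExact → P T.X₁ → P T.X₂ → P T.X₃) →
        P S.X₁ := by
  obtain ⟨n, -, -, r, S, hS, h0, hl, hP, hI, hcos⟩ := hC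
  have hz : S.map' (r + 2) (r + 3) = 0 := IsZero.eq_of_tgt hl _ _
  have hepi : Epi (S.map' (r + 1) (r + 2)) :=
    (ShortComplex.exact_iff_epi _ (by exact hz)).1 (hS.exact' (r + 1) (r + 2) (r + 3))
  refine ⟨ShortComplex.mk (kernel.ι (S.map' (r + 1) (r + 2))) (S.map' (r + 1) (r + 2))
    (kernel.condition _), { exact := ShortComplex.exact_kernel _ }, hP _ (by omega) (by omega),
    hI, hcos, ?_⟩
  intro P hP0 hPP hPT
  have key : ∀ (k : ℕ) (hk : k ≤ r), P (kernel (S.map' (k + 1) (k + 2))) := by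
    intro k
    induction k with
    | zero =>
      intro hk
      exact hP0 _ (isZero_kernel_of_exact _ _ _ (hS.exact' 0 1 2) h0)
    | succ k ih =>
      intro hk
      have hses := kernel_ses _ _ _ (hS.exact' (k + 1) (k + 2) (k + 3))
      exact hPT _ hses (ih (by omega)) (hPP _ (hP _ (by omega) (by omega)))
  exact key r le_rfl

/-- `N` is right orthogonal to the cotilting class. -/
def Orth (C N : ModuleCat.{v} R) : Prop :=
  ∀ M : ModuleCat.{v} R, InCotiltingClass C M → ∀ i : ℕ, 0 < i → Subsingleton (Ext M N i)

/-- a syzygy sequence -/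
lemma exists_syzygy (M : ModuleCat.{v} R) : ∃ S : ShortComplex (ModuleCat.{v} R), S.ShortExact ∧
    S.X₃ = M ∧ Projective S.X₂ :=
  ⟨ShortComplex.mk (kernel.ι (Projective.π M)) (Projective.π M) (kernel.condition _),
    { exact := ShortComplex.exact_kernel _ }, rfl, by dsimp; infer_instance⟩

lemma inClass_syzygy {C : ModuleCat.{v} R} {S : ShortComplex (ModuleCat.{v} R)}
    (hS : S.ShortExact) (h₂ : InCotiltingClass C S.X₂) (h₃ : InCotiltingClass C S.X₃) :
    InCotiltingClass C S.X₁ := fun i hi =>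
  ext_X1 hS C i (h₂ i hi) (h₃ _ (by omega))

lemma inClass_projective (C M : ModuleCat.{v} R) [Projective M] : InCotiltingClass C M :=
  fun i hi => ext_projective M C i hi

/-- Orthogonality is detected by extension along syzygies. -/
lemma orth_of_extend {C N : ModuleCat.{v} R}
    (h : ∀ S : ShortComplex (ModuleCat.{v} R), S.ShortExact → InCotiltingClass C S.X₃ →
      ∀ f : S.X₁ ⟶ N, ∃ g : S.X₂ ⟶ N, S.f ≫ g = f) : Orth C N := by
  have key : ∀ (i : ℕ) (M : ModuleCat.{v} R), InCotiltingClass C M →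
      Subsingleton (Ext M N (i + 1)) := by
    intro i
    induction i with
    | zero =>
      intro M hM
      obtain ⟨S, hS, rfl, hp⟩ := exists_syzygy M
      exact ext_X3_one hS N (h S hS hM) (ext_projective _ _ _ (by omega))
    | succ i ih =>
      intro M hM
      obtain ⟨S, hS, rfl, hp⟩ := exists_syzygy M
      exact ext_X3 hS N _ (ih _ (inClass_syzygy hS (inClass_projective _ _) hM))
        (ext_projective _ _ _ (by omega))
  intro M hM i hi
  obtain ⟨j, rfl⟩ : ∃ j, i = j + 1 := ⟨i - 1, by omega⟩
  exact key j M hM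

lemma orth_inProd {C N : ModuleCat.{v} R} (hN : InProdOf C N) : Orth C N := by
  obtain ⟨ι, s, r, hsr⟩ := hN
  refine orth_of_extend fun S hS h₃ f => ?_
  have : ∀ i : ι, ∃ g : S.X₂ ⟶ C, S.f ≫ g = f ≫ s ≫ Pi.π _ i := fun i =>
    ext_extend hS C (h₃ 1 (by omega)) _
  choose g hg using this
  refine ⟨Pi.lift g ≫ r, ?_⟩
  have : S.f ≫ Pi.lift g = f ≫ s := by
    refine Limits.Pi.hom_ext _ _ fun i => ?_
    simp [hg]
  rw [reassoc_of% this, hsr, comp_id]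

lemma orth_isZero {C N : ModuleCat.{v} R} (hN : IsZero N) : Orth C N :=
  orth_of_extend fun _ _ _ _ => ⟨0, hN.eq_of_tgt _ _⟩

lemma orth_X3 {C : ModuleCat.{v} R} {T : ShortComplex (ModuleCat.{v} R)} (hT : T.ShortExact)
    (h₁ : Orth C T.X₁) (h₂ : Orth C T.X₂) : Orth C T.X₃ := fun M hM i hi =>
  ext_co_X3 hT M i (h₂ M hM i hi) (h₁ M hM _ (by omega))

lemma inProd_inClass {C : ModuleCat.{v} R} (hC : IsBigCotilting C) {M : ModuleCat.{v} R}
    (hM : InProdOf C M) : InCotiltingClass C M := by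
  obtain ⟨n, -, h, -⟩ := hC
  obtain ⟨ι, s, r, hsr⟩ := hM
  exact fun i hi => ext_retract C i s r hsr (h ι i hi)

lemma exists_ext_bound {C : ModuleCat.{v} R} (hC : IsBigCotilting C) :
    ∃ n : ℕ, ∀ (M : ModuleCat.{v} R) (i : ℕ), n < i → Subsingleton (Ext M C i) := by
  obtain ⟨n, h, -⟩ := hC
  have := injDim_of_injDimLE C n h
  exact ⟨n, fun M i hi => HasInjectiveDimensionLT.subsingleton C (n + 1) i hi M⟩

/-- Every module of the cotilting class embeds into a product of copies of `C` with cokernel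
in the cotilting class. -/
lemma exists_embedding {C : ModuleCat.{v} R} (hC : IsBigCotilting C) (M : ModuleCat.{v} R)
    (hM : InCotiltingClass C M) : ∃ (P : ModuleCat.{v} R) (j : M ⟶ P), Mono j ∧ InProdOf C P ∧
      InCotiltingClass C (cokernel j) := by
  let j : M ⟶ ∏ᶜ (fun _ : (M ⟶ C) => C) := Pi.lift (fun f => f)
  have hP : InProdOf C (∏ᶜ (fun _ : (M ⟶ C) => C)) := ⟨_, 𝟙 _, 𝟙 _, comp_id _⟩
  have hmono : Mono j := by
    obtain ⟨S, hS, ⟨ι, s, r, hsr⟩, -, hcos, hind⟩ := cotilting_induction hC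
    have h1 : Orth C S.X₁ := hind (Orth C) (fun _ => orth_isZero) (fun _ => orth_inProd)
      (fun _ => orth_X3)
    refine ⟨fun {Z} a b hab => ?_⟩
    refine (isCoseparator_def _).1 hcos _ _ fun q => ?_
    obtain ⟨q', rfl⟩ := ext_lift hS M (h1 M hM 1 (by omega)) q
    have : a ≫ q' ≫ s = b ≫ q' ≫ s := by
      refine Limits.Pi.hom_ext _ _ fun i => ?_
      have := hab =≫ Pi.π _ (q' ≫ s ≫ Pi.π _ i)
      simpa [j] using this
    have := this =≫ r
    simp only [assoc, hsr, comp_id] at this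
    rw [reassoc_of% this]
  refine ⟨_, j, hmono, hP, ?_⟩
  have hses : (ShortComplex.mk j (cokernel.π j) (cokernel.condition j)).ShortExact :=
    { exact := ShortComplex.exact_cokernel _ }
  intro i hi
  obtain _ | _ | i := i
  · omega
  · refine ext_X3_one hses C (fun f => ⟨Pi.π _ f, by simp [j]⟩) ?_
    exact inProd_inClass hC hP 1 (by omega)
  · exact ext_X3 hses C _ (hM _ (by omega)) (inProd_inClass hC hP _ (by omega))

end CotiltingFacts

end PaperStmt

namespace PaperStmt
open Abelian CochainComplex HomComplex

section
variable {A : Type*} [Category* A] [Abelian A] [HasExt.{e} A]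

lemma ext_cone {K L : CochainComplex A ℤ} (φ : K ⟶ L) (C : A) (i : ℕ) (n : ℤ)
    (h₁ : Subsingleton (Ext (K.X (n + 1)) C i)) (h₂ : Subsingleton (Ext (L.X n) C i)) :
    Subsingleton (Ext ((mappingCone φ).X n) C i) := by
  let S : ShortComplex A := ShortComplex.mk ((mappingCone.inr φ).f n)
    ((mappingCone.fst φ).1.v n (n + 1) rfl) (by simp)
  let s : S.Splitting :=
    { r := (mappingCone.snd φ).v n n (add_zero n)
      s := (mappingCone.inl φ).v (n + 1) n (by omega)
      f_r := by simp [S]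
      s_g := by simp [S]
      id := by
        have := mappingCone.id_X φ n (n + 1) rfl
        dsimp [S]
        rw [add_comm]; exact this }
  exact ext_X2 s.shortExact C i h₂ h₁
end

lemma quasiIso_cone_map {A : Type*} [Category* A] [Abelian A] {K₁ L₁ K₂ L₂ : CochainComplex A ℤ}
    (φ₁ : K₁ ⟶ L₁) (φ₂ : K₂ ⟶ L₂) (a : K₁ ⟶ K₂) (b : L₁ ⟶ L₂) (comm : φ₁ ≫ b = a ≫ φ₂)
    (ha : QuasiIso a) (hb : QuasiIso b) : QuasiIso (mappingCone.map φ₁ φ₂ a b comm) := by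
  let := HasDerivedCategory.standard A
  rw [← DerivedCategory.isIso_Q_map_iff_quasiIso]
  exact Pretriangulated.isIso₃_of_isIso₁₂
    (DerivedCategory.Q.mapTriangle.map (mappingCone.triangleMap φ₁ φ₂ a b comm))
    (DerivedCategory.mappingCone_triangle_distinguished φ₁)
    (DerivedCategory.mappingCone_triangle_distinguished φ₂)
    (inferInstanceAs (IsIso (DerivedCategory.Q.map a)))
    (inferInstanceAs (IsIso (DerivedCategory.Q.map b)))

lemma acyclic_cone {A : Type*} [Category* A] [Abelian A] {K L : CochainComplex A ℤ}
    (s : K ⟶ L) [QuasiIso s] (j : ℤ) : (mappingCone s).ExactAt j := by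
  let := HasDerivedCategory.standard A
  have h : IsZero ((DerivedCategory.Q).obj (mappingCone s)) :=
    Pretriangulated.Triangle.isZero₃_of_isIso₁ _ (DerivedCategory.mappingCone_triangle_distinguished s)
      (inferInstanceAs (IsIso (DerivedCategory.Q.map s)))
  rw [HomologicalComplex.exactAt_iff_isZero_homology]
  exact IsZero.of_iso (Functor.map_isZero (DerivedCategory.homologyFunctor A j) h)
    ((DerivedCategory.homologyFunctorFactors A j).app _).symm

variable {R : Type v} [Ring R]

/-- graded projective cover with zero differential. -/
noncomputable def projK (Y : CochainComplex (ModuleCat.{v} R) ℤ) :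
    CochainComplex (ModuleCat.{v} R) ℤ where
  X j := Projective.over (Y.X (j - 1))
  d _ _ := 0

noncomputable def projAlpha (Y : CochainComplex (ModuleCat.{v} R) ℤ) : Cochain (projK Y) Y (-1) :=
  Cochain.mk fun p q h => Projective.π (Y.X (p - 1)) ≫ (Y.XIsoOfEq (by omega : p - 1 = q)).hom

noncomputable def projPi (Y : CochainComplex (ModuleCat.{v} R) ℤ) :
    mappingCone (𝟙 (projK Y)) ⟶ Y :=
  mappingCone.desc _ (projAlpha Y)
    (Cocycle.homOf (Cocycle.mk (δ (-1) 0 (projAlpha Y)) 1 (by omega) (δ_δ _ _ _ _))) (by simp)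

instance (Y : CochainComplex (ModuleCat.{v} R) ℤ) (n : ℤ) : Epi ((projPi Y).f n) := by
  have : (mappingCone.inl (𝟙 (projK Y))).v (n + 1) n (by omega) ≫ (projPi Y).f n =
      (projAlpha Y).v (n + 1) n (by omega) := by
    simp [projPi]
  have h2 : Epi ((projAlpha Y).v (n + 1) n (by omega)) := by
    exact epi_comp (Projective.π (Y.X (n + 1 - 1)))
      ((Y.XIsoOfEq (by omega : n + 1 - 1 = n)).hom)
  rw [← this] at h2
  exact epi_of_epi ((mappingCone.inl (𝟙 (projK Y))).v (n + 1) n _) _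

instance (Y : CochainComplex (ModuleCat.{v} R) ℤ) : Epi (projPi Y) :=
  HomologicalComplex.epi_of_epi_f _ (fun _ => inferInstance)

lemma projPi_ext [HasExt.{e} (ModuleCat.{v} R)] (Y : CochainComplex (ModuleCat.{v} R) ℤ)
    (C : ModuleCat.{v} R) (n : ℤ) (i : ℕ) (hi : 0 < i) :
    Subsingleton (Ext ((mappingCone (𝟙 (projK Y))).X n) C i) := by
  have : ∀ m, Projective ((projK Y).X m) := fun m => by dsimp [projK]; infer_instance
  exact ext_cone _ _ _ _ (ext_projective _ _ _ hi) (ext_projective _ _ _ hi)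

lemma exists_resolution_aux [HasExt.{e} (ModuleCat.{v} R)] (C : ModuleCat.{v} R) (k : ℕ) :
    ∀ (Y : CochainComplex (ModuleCat.{v} R) ℤ)
      (_ : ∀ (j : ℤ) (i : ℕ), k < i → Subsingleton (Ext (Y.X j) C i)),
    ∃ (F : CochainComplex (ModuleCat.{v} R) ℤ) (s : F ⟶ Y),
      (∀ j, InCotiltingClass C (F.X j)) ∧ QuasiIso s := by
  induction k with
  | zero => exact fun Y h => ⟨Y, 𝟙 Y, fun j i hi => h j i hi, inferInstance⟩
  | succ k ih =>
    intro Y hY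
    let S : ShortComplex (CochainComplex (ModuleCat.{v} R) ℤ) :=
      ShortComplex.mk (kernel.ι (projPi Y)) (projPi Y) (kernel.condition _)
    have hS : S.ShortExact := { exact := ShortComplex.exact_kernel _ }
    have hSj : ∀ j, (S.map (HomologicalComplex.eval _ _ j)).ShortExact := fun j =>
      hS.map_of_exact _
    obtain ⟨F', s, hF', hs⟩ := ih S.X₁ (fun j i hi =>
      ext_X1 (hSj j) C i (projPi_ext Y C j i (by omega)) (hY j (i + 1) (by omega)))
    let a : mappingCone (s ≫ S.f) ⟶ mappingCone S.f :=
      mappingCone.map (s ≫ S.f) S.f s (𝟙 _) (by simp)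
    have ha : QuasiIso a := by
      exact quasiIso_cone_map (s ≫ S.f) S.f s (𝟙 _) (by simp) hs inferInstance
    have := mappingCone.quasiIso_descShortComplex hS
    refine ⟨mappingCone (s ≫ S.f), a ≫ mappingCone.descShortComplex S, ?_, inferInstance⟩
    exact fun j i hi => ext_cone _ _ _ _ (hF' _ i hi) (projPi_ext Y C j i hi)

lemma exists_resolution [HasExt.{e} (ModuleCat.{v} R)] {C : ModuleCat.{v} R}
    (hC : IsBigCotilting C) (Y : CochainComplex (ModuleCat.{v} R) ℤ) :
    ∃ (F : CochainComplex (ModuleCat.{v} R) ℤ) (s : F ⟶ Y),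
      (∀ j, InCotiltingClass C (F.X j)) ∧ QuasiIso s := by
  obtain ⟨n, hn⟩ := exists_ext_bound hC
  exact exists_resolution_aux C n Y fun j i hi => hn _ _ hi
end PaperStmt

namespace PaperStmt
open Abelian CochainComplex HomComplex

section
variable {A : Type*} [Category* A] [Abelian A]

lemma complex_exact (K : CochainComplex A ℤ) (j : ℤ) (h : K.ExactAt (j + 1)) :
    (ShortComplex.mk (K.d j (j + 1)) (K.d (j + 1) (j + 1 + 1)) (K.d_comp_d _ _ _)).Exact :=
  (K.exactAt_iff' j (j + 1) (j + 1 + 1) (by simp) (by simp)).1 h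

lemma kernel_inClass [HasExt.{e} A] (C : A) (K : CochainComplex A ℤ) (hK : ∀ j, K.ExactAt j)
    (hX : ∀ (j : ℤ) (i : ℕ), 0 < i → Subsingleton (Ext (K.X j) C i)) (n : ℕ)
    (hn : ∀ (M : A) (i : ℕ), n < i → Subsingleton (Ext M C i)) :
    ∀ (k i : ℕ) (j : ℤ), 0 < i → n < i + k →
      Subsingleton (Ext (kernel (K.d j (j + 1))) C i) := by
  intro k
  induction k with
  | zero => exact fun i j _ h => hn _ _ h
  | succ k ih =>
    intro i j hi h
    exact ext_X1 (kernel_ses _ _ _ (complex_exact K j (hK _))) C i (hX j i hi)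
        (ih (i + 1) (j + 1) (by omega) (by omega))

lemma acyclic_factor [HasExt.{e} A] (C : A) (K : CochainComplex A ℤ) (hK : ∀ j, K.ExactAt j)
    (hX : ∀ (j : ℤ) (i : ℕ), 0 < i → Subsingleton (Ext (K.X j) C i)) (n : ℕ)
    (hn : ∀ (M : A) (i : ℕ), n < i → Subsingleton (Ext M C i)) (i j k : ℤ)
    (hij : i + 1 = j) (hjk : j + 1 = k) (a : K.X j ⟶ C) (ha : K.d i j ≫ a = 0) :
    ∃ h : K.X k ⟶ C, K.d j k ≫ h = a := by
  subst hij hjk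
  have h₁ := kernel_ses _ _ _ (complex_exact K i (hK _))
  have h₂ := kernel_ses _ _ _ (complex_exact K (i + 1) (hK _))
  have h₃ := kernel_ses _ _ _ (complex_exact K (i + 1 + 1) (hK _))
  have := h₁.epi_g
  have hz : kernel.ι (K.d (i + 1) (i + 1 + 1)) ≫ a = 0 := by
    rw [← cancel_epi (kernel.lift (K.d (i + 1) (i + 1 + 1)) (K.d i (i + 1)) (K.d_comp_d _ _ _))]
    simpa using ha
  have := h₂.epi_g
  let b := h₂.exact.desc a hz
  have hb : kernel.lift (K.d (i + 1 + 1) (i + 1 + 1 + 1)) (K.d (i + 1) (i + 1 + 1))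
    (K.d_comp_d _ _ _) ≫ b = a := h₂.exact.g_desc a hz
  obtain ⟨h, hh⟩ := ext_extend h₃ C
    (kernel_inClass C K hK hX n hn n 1 _ (by omega) (by omega)) b
  refine ⟨h, ?_⟩
  dsimp at hh
  rw [← hb, ← hh]
  simp

lemma Q_map_single_eq_zero [HasDerivedCategory.{w} A] (C : A) (F : CochainComplex A ℤ) (j : ℤ)
    (f : F ⟶ (HomologicalComplex.single A (ComplexShape.up ℤ) j).obj C)
    (h : F.X (j + 1) ⟶ C)
    (hh : F.d j (j + 1) ≫ h = f.f j ≫ (HomologicalComplex.singleObjXSelf _ j C).hom) :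
    DerivedCategory.Q.map f = 0 := by
  let h' := h ≫ (HomologicalComplex.singleObjXSelf (ComplexShape.up ℤ) j C).inv
  have hf : Cochain.ofHom f = δ (-1) 0 (Cochain.single h' (-1)) + Cochain.ofHom 0 := by
    rw [Cochain.δ_single h' (-1) 0 (by omega) j (j + 1) rfl rfl]
    ext p
    by_cases hp : p = j
    · subst hp
      simp [h', reassoc_of% hh]
    · exact (HomologicalComplex.isZero_single_obj_X _ _ _ _ hp).eq_of_tgt _ _
  rw [DerivedCategory.Q_map_eq_of_homotopy _ ((Cochain.equivHomotopy f 0).symm ⟨_, hf⟩)]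
  exact Functor.map_zero _ _ _

lemma Q_map_eq_zero_iff_aux [HasDerivedCategory.{w} A] {F G : CochainComplex A ℤ}
    (f : F ⟶ G) (hf : DerivedCategory.Q.map f = 0) :
    ∃ (F' : CochainComplex A ℤ) (s : F' ⟶ F) (_ : QuasiIso s), Nonempty (Homotopy (s ≫ f) 0) := by
  have h : DerivedCategory.Qh.map ((HomotopyCategory.quotient _ _).map f) =
      DerivedCategory.Qh.map 0 := by
    have := DerivedCategory.quotientCompQhIso_hom_naturality f
    rw [hf, comp_zero] at this
    rw [Functor.map_zero, ← cancel_mono ((DerivedCategory.quotientCompQhIso A).hom.app G)]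
    simpa using this
  rw [MorphismProperty.map_eq_iff_precomp _ (HomotopyCategory.quasiIso A (ComplexShape.up ℤ))] at h
  obtain ⟨X', s, hs, fac⟩ := h
  obtain ⟨X', rfl⟩ := HomotopyCategory.quotient_obj_surjective X'
  obtain ⟨s, rfl⟩ := (HomotopyCategory.quotient _ _).map_surjective s
  refine ⟨X', s, ?_, ⟨HomotopyCategory.homotopyOfEq _ _ ?_⟩⟩
  · rwa [HomotopyCategory.quotient_map_mem_quasiIso_iff] at hs
  · simpa using fac
end

variable {R : Type v} [Ring R] [HasExt.{e} (ModuleCat.{v} R)]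

lemma cone_factor {C : ModuleCat.{v} R} (hC : IsBigCotilting C)
    {F' F : CochainComplex (ModuleCat.{v} R) ℤ} (s : F' ⟶ F) [QuasiIso s]
    (hF' : ∀ j, InCotiltingClass C (F'.X j)) (hF : ∀ j, InCotiltingClass C (F.X j)) (i j k : ℤ)
    (hij : i + 1 = j) (hjk : j + 1 = k) (a : (mappingCone s).X j ⟶ C)
    (ha : (mappingCone s).d i j ≫ a = 0) :
    ∃ h : (mappingCone s).X k ⟶ C, (mappingCone s).d j k ≫ h = a := by
  obtain ⟨n, hn⟩ := exists_ext_bound hC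
  exact acyclic_factor C _ (acyclic_cone s)
    (fun j i hi => ext_cone _ _ _ _ (hF' _ i hi) (hF _ i hi)) n hn i j k hij hjk a ha

variable [HasDerivedCategory.{w} (ModuleCat.{v} R)]

lemma hom_eq_zero {C : ModuleCat.{v} R} (hC : IsBigCotilting C)
    (F : CochainComplex (ModuleCat.{v} R) ℤ) (hF : ∀ j, InCotiltingClass C (F.X j)) (j : ℤ)
    (hj : IsZero (F.X j))
    (φ : DerivedCategory.Q.obj F ⟶
      DerivedCategory.Q.obj ((HomologicalComplex.single _ (ComplexShape.up ℤ) j).obj C)) :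
    φ = 0 := by
  obtain ⟨X', s₀, hs₀, g₀, rfl⟩ := DerivedCategory.right_fac φ
  obtain ⟨F', t, hF', ht⟩ := exists_resolution hC X'
  have : QuasiIso s₀ := by rwa [← DerivedCategory.isIso_Q_map_iff_quasiIso]
  let s := t ≫ s₀
  let g := t ≫ g₀
  obtain ⟨h, hh⟩ := cone_factor hC s hF' hF (j - 1 - 1) (j - 1) j (by omega) (by omega)
    ((mappingCone.fst s).1.v (j - 1) j (by omega) ≫ g.f j ≫
      (HomologicalComplex.singleObjXSelf _ j C).hom) (by
      rw [mappingCone.ext_from_iff s (j - 1) (j - 1 - 1) (by omega)]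
      constructor
      · have hg : F'.d (j - 1) j ≫ g.f j = 0 := by rw [← g.comm]; simp
        simp [reassoc_of% hg]
      · simp)
  have key : DerivedCategory.Q.map g = 0 := by
    refine Q_map_single_eq_zero C F' j g (- (mappingCone.inl s).v (j + 1) j (by omega) ≫ h) ?_
    have := (mappingCone.inl s).v j (j - 1) (by omega) ≫= hh
    have h0 : (mappingCone.inr s).f j = 0 := hj.eq_of_src _ _
    rw [mappingCone.inl_v_d_assoc s j (j - 1) (j + 1) (by omega) (by omega)] at this
    simpa [h0] using this
  rw [Functor.map_comp] at key
  have : DerivedCategory.Q.map g₀ = 0 := by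
    rwa [← cancel_epi (DerivedCategory.Q.map t), comp_zero]
  rw [this, comp_zero]

lemma factor_of_hom_eq_zero {C : ModuleCat.{v} R} (hC : IsBigCotilting C)
    (F : CochainComplex (ModuleCat.{v} R) ℤ) (hF : ∀ j, InCotiltingClass C (F.X j)) (j : ℤ)
    (hj : ∀ φ : DerivedCategory.Q.obj F ⟶
      DerivedCategory.Q.obj ((HomologicalComplex.single _ (ComplexShape.up ℤ) j).obj C), φ = 0)
    (a : F.X j ⟶ C) (ha : F.d (j - 1) j ≫ a = 0) :
    ∃ h : F.X (j + 1) ⟶ C, F.d j (j + 1) ≫ h = a := by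
  let f : F ⟶ (HomologicalComplex.single _ (ComplexShape.up ℤ) j).obj C :=
    HomologicalComplex.mkHomToSingle a (by
      intro i hi
      obtain rfl : i = j - 1 := by simp at hi; omega
      exact ha)
  obtain ⟨X', s₀, hs₀, ⟨H₀⟩⟩ := Q_map_eq_zero_iff_aux f (hj _)
  obtain ⟨F', t, hF', ht⟩ := exists_resolution hC X'
  let s := t ≫ s₀
  have hs : s ≫ f = t ≫ s₀ ≫ f := by simp [s]
  have H : Homotopy (s ≫ f) 0 :=
    (Homotopy.ofEq hs).trans ((H₀.compLeft t).trans (Homotopy.ofEq (by simp)))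
  have hcomm := H.comm j
  let k : F'.X (j + 1) ⟶ C := H.hom (j + 1) j ≫ (HomologicalComplex.singleObjXSelf _ j C).hom
  have hk : s.f j ≫ a = F'.d j (j + 1) ≫ k := by
    rw [dNext_eq H.hom (show (ComplexShape.up ℤ).Rel j (j + 1) by simp),
      prevD_eq H.hom (show (ComplexShape.up ℤ).Rel (j - 1) j by simp)] at hcomm
    have := hcomm =≫ (HomologicalComplex.singleObjXSelf _ j C).hom
    simpa [f, k] using this
  obtain ⟨h, hh⟩ := cone_factor hC s hF' hF (j - 1) j (j + 1) (by omega) (by omega)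
    ((mappingCone.fst s).1.v j (j + 1) (by omega) ≫ k +
      (mappingCone.snd s).v j j (by omega) ≫ a) (by
      rw [mappingCone.ext_from_iff s j (j - 1) (by omega)]
      constructor
      · simp [hk]
      · simp [ha])
  refine ⟨(mappingCone.inr s).f (j + 1) ≫ h, ?_⟩
  have := (mappingCone.inr s).f j ≫= hh
  simpa using this

end PaperStmt

namespace PaperStmt
open Abelian CochainComplex HomComplex

/-- maps from degree `j` of `F` to `N` killed by the differential factor through the next one. -/
def Fac {A : Type*} [Category* A] [Preadditive A] (F : CochainComplex A ℤ) (N : A) (j : ℤ) : Prop :=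
  ∀ g : F.X j ⟶ N, F.d (j - 1) j ≫ g = 0 → ∃ h : F.X (j + 1) ⟶ N, F.d j (j + 1) ≫ h = g

section
variable {A : Type*} [Category* A] [Abelian A]

lemma complex_exact' (K : CochainComplex A ℤ) (j : ℤ) :
    (ShortComplex.mk (K.d (j - 1) j) (K.d j (j + 1)) (K.d_comp_d _ _ _)).Exact ↔ K.ExactAt j :=
  (K.exactAt_iff' (j - 1) j (j + 1) (by simp) (by simp)).symm

lemma exactAt_of_fac (F : CochainComplex A ℤ) (N : A) (hN : IsCoseparator N) (j : ℤ)
    (h : Fac F N j) : F.ExactAt j := by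
  rw [← complex_exact', ShortComplex.exact_iff_mono_cokernel_desc]
  dsimp
  rw [Preadditive.mono_iff_cancel_zero]
  intro K i hi
  rw [isCoseparator_def] at hN
  refine hN _ _ fun g => ?_
  obtain ⟨h', hh'⟩ := h (cokernel.π _ ≫ g) (by simp)
  have : g = cokernel.desc (F.d (j - 1) j) (F.d j (j + 1)) (F.d_comp_d _ _ _) ≫ h' := by
    rw [← cancel_epi (cokernel.π _), ← hh']
    simp
  rw [this, reassoc_of% hi]
  simp

end

variable {R : Type v} [Ring R] [HasExt.{e} (ModuleCat.{v} R)]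

lemma fac_prod {C N : ModuleCat.{v} R} (hN : InProdOf C N)
    (F : CochainComplex (ModuleCat.{v} R) ℤ) (j : ℤ) (h : Fac F C j) : Fac F N j := by
  obtain ⟨ι, s, r, hsr⟩ := hN
  intro g hg
  have : ∀ i : ι, ∃ h : F.X (j + 1) ⟶ C, F.d j (j + 1) ≫ h = g ≫ s ≫ Pi.π _ i := fun i =>
    h _ (by rw [reassoc_of% hg]; simp)
  choose h' hh' using this
  refine ⟨Pi.lift h' ≫ r, ?_⟩
  have : F.d j (j + 1) ≫ Pi.lift h' = g ≫ s := by
    apply Pi.hom_ext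
    intro i
    simp [hh']
  rw [reassoc_of% this, hsr, comp_id]

lemma fac_X3 {C : ModuleCat.{v} R} {T : ShortComplex (ModuleCat.{v} R)} (hT : T.ShortExact)
    (F : CochainComplex (ModuleCat.{v} R) ℤ) (hF : ∀ j, InCotiltingClass C (F.X j)) (j : ℤ)
    (h : Orth C T.X₁) (h₁ : Fac F T.X₁ (j - 1)) (h₂ : Fac F T.X₂ j) : Fac F T.X₃ j := by
  intro g hg
  obtain ⟨g₂, hg₂⟩ := ext_lift hT _ (h _ (hF j) 1 (by omega)) g
  have := hT.mono_f
  have hu : (F.d (j - 1) j ≫ g₂) ≫ T.g = 0 := by rw [assoc, hg₂, hg]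
  let u := hT.exact.lift _ hu
  have hu' : u ≫ T.f = F.d (j - 1) j ≫ g₂ := hT.exact.lift_f _ hu
  obtain ⟨v, hv⟩ := h₁ u (by rw [← cancel_mono T.f, assoc, hu']; simp)
  obtain ⟨v, hv⟩ : ∃ v : F.X j ⟶ T.X₁, F.d (j - 1) j ≫ v = u := by
    have e : j - 1 + 1 = j := by omega
    clear_value u
    revert v
    generalize j - 1 + 1 = j' at e
    subst e
    exact fun v hv => ⟨v, hv⟩
  obtain ⟨h', hh'⟩ := h₂ (g₂ - v ≫ T.f) (by
    rw [Preadditive.comp_sub, ← hu', reassoc_of% hv, sub_self])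
  refine ⟨h' ≫ T.g, ?_⟩
  rw [reassoc_of% hh']
  simp [hg₂]

lemma exactAt_of_neg {C : ModuleCat.{v} R} (hC : IsBigCotilting C)
    (F : CochainComplex (ModuleCat.{v} R) ℤ) (hF : ∀ j, InCotiltingClass C (F.X j))
    (h : ∀ j : ℤ, j < 0 → Fac F C j) (j : ℤ) (hj : j < 0) : F.ExactAt j := by
  obtain ⟨S, hS, hS₂, -, hcos, hind⟩ := cotilting_induction hC
  obtain ⟨o₁, h₁⟩ := hind (fun N => Orth C N ∧ ∀ j : ℤ, j < 0 → Fac F N j)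
    (fun Z hZ => ⟨orth_isZero hZ, fun j _ _ _ => ⟨0, hZ.eq_of_tgt _ _⟩⟩)
    (fun M hM => ⟨orth_inProd hM, fun j hj => fac_prod hM F j (h j hj)⟩)
    (fun T hT h₁ h₂ => ⟨orth_X3 hT h₁.1 h₂.1, fun j hj =>
      fac_X3 hT F hF j h₁.1 (h₁.2 _ (by omega)) (h₂.2 _ hj)⟩)
  exact exactAt_of_fac F S.X₃ hcos j (fac_X3 hS F hF j o₁ (h₁ _ (by omega))
    (fac_prod hS₂ F j (h j hj)))

lemma cokernel_inClass {C : ModuleCat.{v} R} (hC : IsBigCotilting C)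
    (F : CochainComplex (ModuleCat.{v} R) ℤ) (hF : ∀ j, InCotiltingClass C (F.X j))
    (h : ∀ j : ℤ, j < 0 → Fac F C j) :
    InCotiltingClass C (cokernel (F.d (-1) 0)) := by
  have key : ∀ (i : ℕ) (j : ℤ), j < 0 →
      Subsingleton (Ext (cokernel (F.d j (j + 1))) C (i + 1)) := by
    intro i
    induction i with
    | zero =>
      intro j hj
      refine ext_X3_one (cokernel_ses _ _ _ ((complex_exact' F j).2 (exactAt_of_neg hC F hF h j hj)))
        C (fun f => ?_) (hF _ 1 (by omega))
      obtain ⟨h', hh'⟩ := h j hj (cokernel.π _ ≫ f) (by simp)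
      refine ⟨h', ?_⟩
      rw [← cancel_epi (cokernel.π _), ← hh']
      simp
    | succ i ih =>
      intro j hj
      refine ext_X3 (cokernel_ses _ _ _ ((complex_exact' F j).2 (exactAt_of_neg hC F hF h j hj)))
        C (i + 1) ?_ (hF _ _ (by omega))
      have := ih (j - 1) (by omega)
      have e : j - 1 + 1 = j := by omega
      revert this
      dsimp
      generalize j - 1 + 1 = j' at e
      subst e
      exact id
  intro i hi
  obtain ⟨i, rfl⟩ : ∃ k, i = k + 1 := ⟨i - 1, by omega⟩
  exact key i (-1) (by omega)

end PaperStmt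

namespace PaperStmt
open Abelian

section
variable {A : Type*} [Category* A] [Abelian A]

lemma pushout_refine {X₁ X₂ X₃ X₄ : A} {t : X₁ ⟶ X₂} {l : X₁ ⟶ X₃} {r : X₂ ⟶ X₄} {b : X₃ ⟶ X₄}
    (h : IsPushout t l r b) {T : A} (x₂ : T ⟶ X₂) (x₃ : T ⟶ X₃) (hx : x₂ ≫ r = x₃ ≫ b) :
    ∃ (T' : A) (π : T' ⟶ T) (_ : Epi π) (x₁ : T' ⟶ X₁), π ≫ x₂ = x₁ ≫ t ∧ π ≫ x₃ = x₁ ≫ l := by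
  obtain ⟨T', π, hπ, x₁, hx₁⟩ := h.exact_shortComplex.exact_up_to_refinements
    (biprod.lift x₂ (-x₃)) (by
      change biprod.lift x₂ (-x₃) ≫ biprod.desc r b = 0
      simp [hx])
  change π ≫ biprod.lift x₂ (-x₃) = x₁ ≫ biprod.lift t (-l) at hx₁
  refine ⟨T', π, hπ, x₁, ?_, ?_⟩
  · have := hx₁ =≫ biprod.fst
    rw [assoc, assoc, biprod.lift_fst] at this
    refine this.trans (congrArg (fun q => x₁ ≫ q) ?_)
    exact biprod.lift_fst _ _
  · have := hx₁ =≫ biprod.snd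
    rw [assoc, assoc, biprod.lift_snd, Preadditive.comp_neg] at this
    have h' : biprod.lift t (-l) ≫ biprod.snd = -l := biprod.lift_snd _ _
    have h'' := this.trans ((congrArg (fun q => x₁ ≫ q) h').trans (Preadditive.comp_neg _ _))
    exact neg_injective h''

/-- the data of a coresolution process -/
structure CoresData (W : CochainComplex A ℕ) where
  Z : ℕ → A
  P : ℕ → A
  z : ∀ n, W.X n ⟶ Z n
  e : ∀ n, Z n ⟶ W.X (n + 1)
  j : ∀ n, Z n ⟶ P n
  p : ∀ n, P n ⟶ Z (n + 1)
  mono_j : ∀ n, Mono (j n)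
  push : ∀ n, IsPushout (j n) (e n) (p n) (z (n + 1))
  ze : ∀ n, z n ≫ e n = W.d n (n + 1)
  pe : ∀ n, p n ≫ e (n + 1) = 0
  z0 : IsIso (z 0)

namespace CoresData
variable {W : CochainComplex A ℕ} (D : CoresData W)

/-- the coresolution -/
noncomputable abbrev cplx : CochainComplex A ℕ :=
  CochainComplex.of D.P (fun n => D.p n ≫ D.j (n + 1)) (fun n => by
    rw [assoc, (D.push (n + 1)).w_assoc, reassoc_of% D.pe n]
    simp)

lemma cplx_d (n : ℕ) : D.cplx.d n (n + 1) = D.p n ≫ D.j (n + 1) :=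
  CochainComplex.of_d D.P (fun n => D.p n ≫ D.j (n + 1)) n

/-- the map to the coresolution -/
noncomputable def map : W ⟶ D.cplx where
  f n := D.z n ≫ D.j n
  comm' i k h := by
    obtain rfl : i + 1 = k := h
    rw [cplx_d, assoc, (D.push i).w_assoc, reassoc_of% D.ze i]

lemma map_f (n : ℕ) : D.map.f n = D.z n ≫ D.j n := rfl

lemma decomp (n i : ℕ) (hi : (ComplexShape.up ℕ).prev n = i) {T : A} (t : T ⟶ D.Z n) :
    ∃ (T' : A) (π : T' ⟶ T) (_ : Epi π) (y : T' ⟶ W.X n) (w : T' ⟶ D.cplx.X i),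
      π ≫ t ≫ D.e n = y ≫ W.d n (n + 1) ∧ π ≫ t ≫ D.j n = y ≫ D.map.f n + w ≫ D.cplx.d i n := by
  cases n with
  | zero =>
    have := D.z0
    refine ⟨T, 𝟙 _, inferInstance, t ≫ inv (D.z 0), 0, ?_, ?_⟩
    · rw [← D.ze]; simp
    · rw [map_f]; simp
  | succ m =>
    rw [CochainComplex.prev_nat_succ] at hi
    subst hi
    obtain ⟨T', π, hπ, w, y, h⟩ := (D.push m).hom_eq_add_up_to_refinements t
    refine ⟨T', π, hπ, y, w, ?_, ?_⟩
    · rw [reassoc_of% h, Preadditive.add_comp, assoc, assoc, D.pe, D.ze]; simp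
    · rw [reassoc_of% h, Preadditive.add_comp, cplx_d, map_f]
      simp only [assoc]
      exact add_comm _ _

lemma map_mono (n : ℕ) : Mono (HomologicalComplex.homologyMap D.map n) := by
  have := D.mono_j n
  cases n with
  | zero =>
    rw [HomologicalComplex.mono_homologyMap_iff_up_to_refinements _ 0 0 1 (by simp) (by simp)]
    intro T x _ y hy
    have := D.z0
    rw [D.cplx.shape 0 0 (by simp), comp_zero, map_f, ← assoc] at hy
    have hy := zero_of_comp_mono _ hy
    have hy := zero_of_comp_mono _ hy
    exact ⟨T, 𝟙 _, inferInstance, 0, by simp [hy]⟩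
  | succ m =>
    rw [HomologicalComplex.mono_homologyMap_iff_up_to_refinements _ m (m + 1) (m + 1 + 1)
      (by simp) (by simp)]
    intro T x _ y hy
    rw [map_f, cplx_d, ← assoc, ← assoc, cancel_mono] at hy
    obtain ⟨T', π, hπ, t, h₁, h₂⟩ := pushout_refine (D.push m) y x hy.symm
    obtain ⟨T'', π', hπ', y', w, h₃, -⟩ := D.decomp m _ rfl t
    exact ⟨T'', π' ≫ π, inferInstance, y', by rw [assoc, h₂, h₃]⟩

lemma map_epi (n : ℕ) : Epi (HomologicalComplex.homologyMap D.map n) := by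
  rw [HomologicalComplex.epi_homologyMap_iff_up_to_refinements _ _ n (n + 1) rfl (by simp)]
  intro T y hy
  have := D.mono_j (n + 1)
  rw [cplx_d, ← assoc] at hy
  have hy := zero_of_comp_mono _ hy
  obtain ⟨T', π, hπ, t, h₁, h₂⟩ := pushout_refine (D.push n) y 0 (by rw [hy, zero_comp])
  obtain ⟨T'', π', hπ', y', w, h₃, h₄⟩ := D.decomp n _ rfl t
  refine ⟨T'', π' ≫ π, inferInstance, y', ?_, w, ?_⟩
  · rw [← h₃, ← h₂]; simp
  · rw [assoc, h₁, h₄]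

lemma map_quasiIso : QuasiIso D.map := by
  rw [quasiIso_iff]
  intro n
  rw [quasiIsoAt_iff_isIso_homologyMap]
  have := D.map_mono n
  have := D.map_epi n
  exact isIso_of_mono_of_epi _

end CoresData
end

variable {R : Type v} [Ring R] [HasExt.{e} (ModuleCat.{v} R)]

/-- One stage of the coresolution. -/
structure Stage (C : ModuleCat.{v} R) (W : CochainComplex (ModuleCat.{v} R) ℕ) (n : ℕ) where
  Z : ModuleCat.{v} R
  P : ModuleCat.{v} R
  z : W.X n ⟶ Z
  e : Z ⟶ W.X (n + 1)
  j : Z ⟶ P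
  mono_j : Mono j
  ze : z ≫ e = W.d n (n + 1)
  ed : e ≫ W.d (n + 1) (n + 1 + 1) = 0
  hP : InProdOf C P
  hcok : InCotiltingClass C (cokernel j)

lemma pushout_inClass {C : ModuleCat.{v} R} {Z P M : ModuleCat.{v} R} (j : Z ⟶ P) [Mono j]
    (e : Z ⟶ M) (hM : InCotiltingClass C M) (hcok : InCotiltingClass C (cokernel j)) :
    InCotiltingClass C (pushout j e) := by
  let S : ShortComplex (ModuleCat.{v} R) := ShortComplex.mk (pushout.inr j e)
    (pushout.desc (cokernel.π j) 0 (by simp)) (pushout.inr_desc _ _ _)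
  have hm : Mono S.f := by dsimp [S]; infer_instance
  have he : Epi S.g := by
    have h : pushout.inl j e ≫ S.g = cokernel.π j := pushout.inl_desc _ _ _
    have : Epi (pushout.inl j e ≫ S.g) := by rw [h]; infer_instance
    exact epi_of_epi (pushout.inl j e) _
  have hS : S.ShortExact :=
    { exact := by
        refine ShortComplex.exact_of_g_is_cokernel _
          (CokernelCofork.IsColimit.ofπ' _ _ fun k hk => ?_)
        dsimp [S] at hk
        refine ⟨cokernel.desc j (pushout.inl j e ≫ k) ?_, ?_⟩
        · rw [pushout.condition_assoc, hk, comp_zero]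
        · dsimp [S]
          apply pushout.hom_ext
          · exact (pushout.inl_desc_assoc _ _ _ _).trans (cokernel.π_desc _ _ _)
          · exact (pushout.inr_desc_assoc _ _ _ _).trans (zero_comp.trans hk.symm) }
  exact fun i hi => ext_X2 hS C i (hM i hi) (hcok i hi)

/-- the next stage -/
noncomputable def Stage.next {C : ModuleCat.{v} R} (hC : IsBigCotilting C)
    {W : CochainComplex (ModuleCat.{v} R) ℕ} (hW : ∀ n, InCotiltingClass C (W.X n)) {n : ℕ}
    (S : Stage C W n) : Stage C W (n + 1) :=
  have := S.mono_j
  have h := exists_embedding hC (pushout S.j S.e) (pushout_inClass S.j S.e (hW _) S.hcok)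
  { Z := pushout S.j S.e
    P := h.choose
    z := pushout.inr _ _
    e := pushout.desc 0 (W.d (n + 1) (n + 1 + 1)) (by rw [comp_zero, S.ed])
    j := h.choose_spec.choose
    mono_j := h.choose_spec.choose_spec.1
    ze := pushout.inr_desc _ _ _
    ed := by
      apply pushout.hom_ext
      · exact (pushout.inl_desc_assoc _ _ _ _).trans (zero_comp.trans comp_zero.symm)
      · exact (pushout.inr_desc_assoc _ _ _ _).trans ((W.d_comp_d _ _ _).trans comp_zero.symm)
    hP := h.choose_spec.choose_spec.2.1
    hcok := h.choose_spec.choose_spec.2.2 }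

/-- the first stage -/
noncomputable def Stage.first {C : ModuleCat.{v} R} (hC : IsBigCotilting C)
    {W : CochainComplex (ModuleCat.{v} R) ℕ} (hW : ∀ n, InCotiltingClass C (W.X n)) :
    Stage C W 0 :=
  have h := exists_embedding hC (W.X 0) (hW 0)
  { Z := W.X 0
    P := h.choose
    z := 𝟙 _
    e := W.d 0 1
    j := h.choose_spec.choose
    mono_j := h.choose_spec.choose_spec.1
    ze := by simp
    ed := by simp
    hP := h.choose_spec.choose_spec.2.1
    hcok := h.choose_spec.choose_spec.2.2 }

/-- all stages -/
noncomputable def stage {C : ModuleCat.{v} R} (hC : IsBigCotilting C)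
    {W : CochainComplex (ModuleCat.{v} R) ℕ} (hW : ∀ n, InCotiltingClass C (W.X n)) :
    ∀ n, Stage C W n
  | 0 => Stage.first hC hW
  | n + 1 => (stage hC hW n).next hC hW

/-- the coresolution data -/
noncomputable def coresData {C : ModuleCat.{v} R} (hC : IsBigCotilting C)
    {W : CochainComplex (ModuleCat.{v} R) ℕ} (hW : ∀ n, InCotiltingClass C (W.X n)) :
    CoresData W where
  Z n := (stage hC hW n).Z
  P n := (stage hC hW n).P
  z n := (stage hC hW n).z
  e n := (stage hC hW n).e
  j n := (stage hC hW n).j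
  p n := pushout.inl (stage hC hW n).j (stage hC hW n).e
  mono_j n := (stage hC hW n).mono_j
  push n := IsPushout.of_hasPushout (stage hC hW n).j (stage hC hW n).e
  ze n := (stage hC hW n).ze
  pe n := pushout.inl_desc _ _ _
  z0 := inferInstanceAs (IsIso (𝟙 (W.X 0)))

lemma exists_coresolution {C : ModuleCat.{v} R} (hC : IsBigCotilting C)
    (W : CochainComplex (ModuleCat.{v} R) ℕ) (hW : ∀ n, InCotiltingClass C (W.X n)) :
    ∃ (P : CochainComplex (ModuleCat.{v} R) ℕ) (s : W ⟶ P), QuasiIso s ∧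
      ∀ n, InProdOf C (P.X n) :=
  ⟨(coresData hC hW).cplx, (coresData hC hW).map, (coresData hC hW).map_quasiIso,
    fun n => (stage hC hW n).hP⟩

end PaperStmt


namespace PaperStmt
open Abelian

lemma inProd_of_iso {R : Type v} [Ring R] {C M M' : ModuleCat.{v} R} (i : M ≅ M')
    (h : InProdOf C M') : InProdOf C M := by
  obtain ⟨ι, s, r, hsr⟩ := h
  exact ⟨ι, i.hom ≫ s, r ≫ i.inv, by rw [assoc, reassoc_of% hsr, i.hom_inv_id]⟩

variable {R : Type v} [Ring R] [HasExt.{e} (ModuleCat.{v} R)]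

lemma inClass_of_iso {C M M' : ModuleCat.{v} R} (i : M ≅ M') (h : InCotiltingClass C M') :
    InCotiltingClass C M :=
  fun k hk => ext_retract C k i.hom i.inv i.hom_inv_id (h k hk)

lemma truncGE'_inClass {C : ModuleCat.{v} R} (F : CochainComplex (ModuleCat.{v} R) ℤ)
    (hF : ∀ j, InCotiltingClass C (F.X j)) (h : InCotiltingClass C (cokernel (F.d (-1) 0)))
    (n : ℕ) :
    InCotiltingClass C ((F.truncGE' (ComplexShape.embeddingUpIntGE 0)).X n) := by
  cases n with
  | zero =>
    refine inClass_of_iso (F.truncGE'XIsoOpcycles (ComplexShape.embeddingUpIntGE 0)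
      (i := 0) (i' := 0) (by simp) (by rw [ComplexShape.boundaryGE_embeddingUpIntGE_iff])) ?_
    exact inClass_of_iso (IsColimit.coconePointUniqueUpToIso
      (F.opcyclesIsCokernel (-1) 0 (by simp)) (cokernelIsCokernel (F.d (-1) 0))) h
  | succ n =>
    refine inClass_of_iso (F.truncGE'XIso (ComplexShape.embeddingUpIntGE 0)
      (i := n + 1) (i' := (n + 1 : ℕ)) (by simp) (fun h => ?_)) (hF _)
    rw [ComplexShape.boundaryGE_embeddingUpIntGE_iff] at h
    omega

variable [HasDerivedCategory.{w} (ModuleCat.{v} R)]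

lemma two_one {C : ModuleCat.{v} R} (hC : IsBigCotilting C)
    (X : DerivedCategory (ModuleCat.{v} R)) (Y : CochainComplex (ModuleCat.{v} R) ℤ)
    (h0 : ∀ i : ℤ, i < 0 → IsZero (Y.X i)) (h1 : ∀ i : ℤ, 0 ≤ i → InCotiltingClass C (Y.X i))
    (e : X ≅ DerivedCategory.Q.obj Y) (i : ℤ) (hi : 0 < i)
    (f : X ⟶ (((singleFunctor (ModuleCat.{v} R) 0).obj C)⟦i⟧)) : f = 0 := by
  let σ := ((singleFunctors (ModuleCat.{v} R)).shiftIso i (-i) 0 (by omega)).app C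
  have hY : ∀ j, InCotiltingClass C (Y.X j) := fun j => by
    by_cases hj : j < 0
    · exact fun k _ => ext_isZero C k (h0 j hj)
    · exact h1 j (by omega)
  have := hom_eq_zero hC Y hY (-i) (h0 _ (by omega)) (e.inv ≫ f ≫ σ.hom)
  have h2 : f ≫ σ.hom = 0 := by
    rw [← cancel_epi e.inv, comp_zero]
    exact this
  rw [← cancel_mono σ.hom, zero_comp]
  exact h2

lemma one_three {C : ModuleCat.{v} R} (hC : IsBigCotilting C)
    (X : DerivedCategory (ModuleCat.{v} R))
    (h : ∀ i : ℤ, 0 < i →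
        ∀ f : X ⟶ (((singleFunctor (ModuleCat.{v} R) 0).obj C)⟦i⟧), f = 0) :
    ∃ Y : CochainComplex (ModuleCat.{v} R) ℤ,
        (∀ i : ℤ, i < 0 → IsZero (Y.X i)) ∧
        (∀ i : ℤ, 0 ≤ i → InProdOf C (Y.X i)) ∧
        Nonempty (X ≅ DerivedCategory.Q.obj Y) := by
  obtain ⟨F, s, hF, hs⟩ := exists_resolution hC (DerivedCategory.Q.objPreimage X)
  have e₁ : X ≅ DerivedCategory.Q.obj F :=
    (DerivedCategory.Q.objObjPreimageIso X).symm ≪≫ (asIso (DerivedCategory.Q.map s)).symm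
  have hfac : ∀ j : ℤ, j < 0 → Fac F C j := by
    intro j hj g hg
    refine factor_of_hom_eq_zero hC F hF j (fun φ => ?_) g hg
    let σ : (((singleFunctor (ModuleCat.{v} R) 0).obj C)⟦-j⟧) ≅
        DerivedCategory.Q.obj ((HomologicalComplex.single _ (ComplexShape.up ℤ) j).obj C) :=
      ((singleFunctors (ModuleCat.{v} R)).shiftIso (-j) j 0 (by omega)).app C
    have h2 : e₁.hom ≫ φ ≫ σ.inv = 0 := h (-j) (by omega) _
    have h3 : φ ≫ σ.inv = 0 := by
      rw [← cancel_epi e₁.hom, comp_zero]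
      exact h2
    have h4 : (φ ≫ σ.inv) ≫ σ.hom = φ := by
      rw [assoc, σ.inv_hom_id, comp_id]
    rw [← h4, h3, zero_comp]
  have hGE : F.IsGE 0 := (F.isGE_iff 0).2 (exactAt_of_neg hC F hF hfac)
  obtain ⟨P, t, ht, hP⟩ := exists_coresolution hC (F.truncGE' (ComplexShape.embeddingUpIntGE 0))
    (truncGE'_inClass F hF (cokernel_inClass hC F hF hfac))
  refine ⟨P.extend (ComplexShape.embeddingUpIntGE 0), fun i hi => ?_, fun i hi => ?_, ⟨?_⟩⟩
  · refine P.isZero_extend_X _ i fun n hn => ?_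
    simp at hn
    omega
  · obtain ⟨n, rfl⟩ := Int.eq_ofNat_of_zero_le hi
    exact inProd_of_iso (P.extendXIso (ComplexShape.embeddingUpIntGE 0) (i := n) (by simp)) (hP n)
  · have h5 : QuasiIso (F.πTruncGE 0) := inferInstance
    have h6 : QuasiIso
      (HomologicalComplex.extendMap t (ComplexShape.embeddingUpIntGE 0)) := inferInstance
    have h7 := (DerivedCategory.isIso_Q_map_iff_quasiIso _ (HomologicalComplex.extendMap t
      (ComplexShape.embeddingUpIntGE 0))).2 h6
    let e₂ := asIso (DerivedCategory.Q.map
        (HomologicalComplex.extendMap t (ComplexShape.embeddingUpIntGE 0)))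
    exact (e₁ ≪≫ asIso (DerivedCategory.Q.map (F.πTruncGE 0))).trans e₂

end PaperStmt


theorem statement12 (R : Type v) [Ring R] [HasExt.{e} (ModuleCat.{v} R)]
    [HasDerivedCategory.{w} (ModuleCat.{v} R)]
    (C : ModuleCat.{v} R) (hC : IsBigCotilting C)
    (X : DerivedCategory (ModuleCat.{v} R)) :
    ((∀ i : ℤ, 0 < i →
        ∀ f : X ⟶ (((singleFunctor (ModuleCat.{v} R) 0).obj C)⟦i⟧), f = 0) ↔
      (∃ Y : CochainComplex (ModuleCat.{v} R) ℤ,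
        (∀ i : ℤ, i < 0 → IsZero (Y.X i)) ∧
        (∀ i : ℤ, 0 ≤ i → InCotiltingClass C (Y.X i)) ∧
        Nonempty (X ≅ DerivedCategory.Q.obj Y))) ∧
    ((∀ i : ℤ, 0 < i →
        ∀ f : X ⟶ (((singleFunctor (ModuleCat.{v} R) 0).obj C)⟦i⟧), f = 0) ↔
      (∃ Y : CochainComplex (ModuleCat.{v} R) ℤ,
        (∀ i : ℤ, i < 0 → IsZero (Y.X i)) ∧
        (∀ i : ℤ, 0 ≤ i → InProdOf C (Y.X i)) ∧
        Nonempty (X ≅ DerivedCategory.Q.obj Y))) := by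
  have h13 := one_three hC X
  have h32 : (∃ Y : CochainComplex (ModuleCat.{v} R) ℤ,
        (∀ i : ℤ, i < 0 → IsZero (Y.X i)) ∧
        (∀ i : ℤ, 0 ≤ i → InProdOf C (Y.X i)) ∧
        Nonempty (X ≅ DerivedCategory.Q.obj Y)) →
      (∃ Y : CochainComplex (ModuleCat.{v} R) ℤ,
        (∀ i : ℤ, i < 0 → IsZero (Y.X i)) ∧
        (∀ i : ℤ, 0 ≤ i → InCotiltingClass C (Y.X i)) ∧
        Nonempty (X ≅ DerivedCategory.Q.obj Y)) :=
    fun ⟨Y, h0, h1, h2⟩ => ⟨Y, h0, fun i hi => inProd_inClass hC (h1 i hi), h2⟩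
  have h21 : (∃ Y : CochainComplex (ModuleCat.{v} R) ℤ,
        (∀ i : ℤ, i < 0 → IsZero (Y.X i)) ∧
        (∀ i : ℤ, 0 ≤ i → InCotiltingClass C (Y.X i)) ∧
        Nonempty (X ≅ DerivedCategory.Q.obj Y)) → (∀ i : ℤ, 0 < i →
        ∀ f : X ⟶ (((singleFunctor (ModuleCat.{v} R) 0).obj C)⟦i⟧), f = 0) :=
    fun ⟨Y, h0, h1, ⟨h2⟩⟩ => two_one hC X Y h0 h1 h2
  exact ⟨⟨fun h => h32 (h13 h), h21⟩, ⟨h13, fun h => h21 (h32 h)⟩⟩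
end

section
/- Let R be a ring, C a big cotilting right R-module, X_C its cotilting class, and G = {X ∈ D(R) : Hom_{D(R)}(X, Σ^i C) = 0 for all i ≠ 0} the tilted abelian category (the heart of the cotilting t-structure). Then both X_C and Prod C (the class of direct summands of products of copies of C) are coresolving subcategories of G: each is closed under retracts and extensions in G, closed under cokernels of monomorphisms in G, and cogenerating in G (every object of G admits a monomorphism into an object of the class). -/
/-!
Statement 15: Let `R` be a ring, `C` a big cotilting module, `X_C` its cotilting class and
`G ⊆ D(R)` the heart of the cotilting t-structure.  Then both `X_C` and `Prod C` are
coresolving subcategories of `G`: contained in `G`, closed under retracts, extensions and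
cokernels of monomorphisms in `G`, and cogenerating in `G`.  (Short exact sequences in the
heart `G` correspond to distinguished triangles of `D(R)` with all vertices in `G`.)
-/

universe e w v u

open CategoryTheory Category Limits Pretriangulated

namespace PaperStmt

variable {R : Type v} [Ring R]

variable [HasDerivedCategory.{w} (ModuleCat.{v} R)]

/-- Membership in the heart `G` of the cotilting t-structure:
`Hom(X, Σ^i C) = 0` for all `i ≠ 0`. -/
def InHeart (C : ModuleCat.{v} R) (X : DerivedCategory (ModuleCat.{v} R)) : Prop :=
  ∀ i : ℤ, i ≠ 0 →
    ∀ f : X ⟶ (((DerivedCategory.singleFunctor (ModuleCat.{v} R) 0).obj C)⟦i⟧), f = 0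

/-- A class `P` of objects of `D(R)` is a coresolving subcategory of the heart `G`:
it is contained in `G`, closed under retracts, extensions and cokernels of monomorphisms
in `G` (expressed via distinguished triangles), and cogenerating in `G`. -/
def IsCoresolvingInHeart (C : ModuleCat.{v} R)
    (P : DerivedCategory (ModuleCat.{v} R) → Prop) : Prop :=
  (∀ X, P X → InHeart C X) ∧
  (∀ X Y, (∃ (s : Y ⟶ X) (r : X ⟶ Y), s ≫ r = 𝟙 Y) → P X → P Y) ∧
  (∀ T : Triangle (DerivedCategory (ModuleCat.{v} R)),
    (T ∈ distTriang _) → P T.obj₁ → P T.obj₃ → P T.obj₂) ∧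
  (∀ T : Triangle (DerivedCategory (ModuleCat.{v} R)),
    (T ∈ distTriang _) → P T.obj₁ → P T.obj₂ → InHeart C T.obj₃ → P T.obj₃) ∧
  (∀ X, InHeart C X → ∃ (W Z : DerivedCategory (ModuleCat.{v} R))
    (f : X ⟶ W) (g : W ⟶ Z) (h : Z ⟶ X⟦(1 : ℤ)⟧),
      (Triangle.mk f g h ∈ distTriang _) ∧ P W ∧ InHeart C Z)

end PaperStmt

section

open DerivedCategory PaperStmt

namespace PaperAux

section general
variable {A : Type u} [Category.{v} A] [Abelian A] [HasDerivedCategory.{w} A]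

lemma Q_map_surj (K L : CochainComplex A ℤ) [L.IsKInjective] (f : Q.obj K ⟶ Q.obj L) :
    ∃ g : K ⟶ L, Q.map g = f := by
  obtain ⟨g, hg⟩ := (CochainComplex.IsKInjective.Qh_map_bijective
    ((HomotopyCategory.quotient _ _).obj K) L).surjective
      ((quotientCompQhIso A).hom.app K ≫ f ≫ (quotientCompQhIso A).inv.app L)
  obtain ⟨g, rfl⟩ := (HomotopyCategory.quotient _ _).map_surjective g
  refine ⟨g, ?_⟩
  have := quotientCompQhIso_hom_naturality g
  rw [hg] at this
  simp at this
  simpa using this.symm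

lemma Q_map_zero (K L : CochainComplex A ℤ) [L.IsKInjective] (g : K ⟶ L) (hg : Q.map g = 0) :
    Nonempty (Homotopy g 0) := by
  refine ⟨HomotopyCategory.homotopyOfEq _ _ ?_⟩
  apply (CochainComplex.IsKInjective.Qh_map_bijective _ L).injective
  have := quotientCompQhIso_hom_naturality g
  rw [hg, comp_zero] at this
  rw [Functor.map_zero, Functor.map_zero]
  rw [← cancel_mono ((quotientCompQhIso A).hom.app L), zero_comp]
  exact this
end general

variable {R : Type v} [Ring R]

/-- The functor taking a module to a power of it. -/
noncomputable def powF (ι : Type v) : ModuleCat.{v} R ⥤ ModuleCat.{v} R where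
  obj M := ∏ᶜ (fun _ : ι => M)
  map f := Limits.Pi.map (fun _ => f)

noncomputable def powFIso (ι : Type v) :
    powF (R := R) ι ≅ Functor.const (Discrete ι) ⋙ lim :=
  NatIso.ofComponents (fun M => HasLimit.isoOfNatIso (F := Discrete.functor (fun _ : ι => M))
    (G := (Functor.const (Discrete ι)).obj M) (Discrete.natIso (fun _ => Iso.refl _)))
    (by
      intro M N f
      apply limit.hom_ext
      rintro ⟨j⟩
      simp [powF]
      )

/-- The projections. -/
noncomputable def powπ (ι : Type v) (i : ι) : powF (R := R) ι ⟶ 𝟭 _ where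
  app M := Pi.π (fun _ : ι => M) i
  naturality := by intros; simp [powF]

noncomputable def plift {ι : Type v} {X M : ModuleCat.{v} R} (f : ι → (X ⟶ M)) :
    X ⟶ (powF ι).obj M := Pi.lift f

lemma plift_π {ι : Type v} {X M : ModuleCat.{v} R} (f : ι → (X ⟶ M)) (i : ι) :
    plift f ≫ (powπ ι i).app M = f i := by
  exact Limits.limit.lift_π _ _

lemma phom_ext {ι : Type v} {X M : ModuleCat.{v} R} {f g : X ⟶ (powF ι).obj M}
    (h : ∀ i, f ≫ (powπ ι i).app M = g ≫ (powπ ι i).app M) : f = g :=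
  Pi.hom_ext _ _ h

lemma powF_map_π {ι : Type v} {M N : ModuleCat.{v} R} (f : M ⟶ N) (i : ι) :
    (powF ι).map f ≫ (powπ ι i).app N = (powπ ι i).app M ≫ f :=
  (powπ ι i).naturality f

instance (ι : Type v) : (powF (R := R) ι).Additive where
  map_add {X Y f g} := by
    apply phom_ext
    intro j
    simp only [powF_map_π, Preadditive.add_comp, Preadditive.comp_add]

instance (ι : Type v) : PreservesFiniteLimits (powF (R := R) ι) :=
  preservesFiniteLimits_of_natIso (powFIso ι).symm

instance (ι : Type v) : PreservesFiniteColimits (powF (R := R) ι) :=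
  preservesFiniteColimits_of_natIso (powFIso ι).symm

/-- termwise power of a complex -/
noncomputable abbrev powC (ι : Type v) (K : CochainComplex (ModuleCat.{v} R) ℤ) :
    CochainComplex (ModuleCat.{v} R) ℤ :=
  ((powF ι).mapHomologicalComplex _).obj K

noncomputable def powCπ (ι : Type v) (K : CochainComplex (ModuleCat.{v} R) ℤ) (i : ι) :
    powC ι K ⟶ K where
  f n := (powπ ι i).app (K.X n)
  comm' m n _ := by
    have := (powπ ι i).naturality (K.d m n)
    exact this.symm

noncomputable def powLift {ι : Type v} {K L : CochainComplex (ModuleCat.{v} R) ℤ}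
    (f : ι → (K ⟶ L)) : K ⟶ powC ι L where
  f n := plift (fun i => (f i).f n)
  comm' m n _ := by
    apply phom_ext
    intro j
    have h1 : (plift (fun i => (f i).f m) ≫ (powF ι).map (L.d m n)) ≫ (powπ ι j).app (L.X n) =
        (f j).f m ≫ L.d m n := by
      rw [assoc, powF_map_π, ← assoc, plift_π]
    have h2 : (K.d m n ≫ plift (fun i => (f i).f n)) ≫ (powπ ι j).app (L.X n) =
        K.d m n ≫ (f j).f n := by
      rw [assoc, plift_π]
    exact h1.trans (((f j).comm m n).trans h2.symm)

lemma powLift_π {ι : Type v} {K L : CochainComplex (ModuleCat.{v} R) ℤ}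
    (f : ι → (K ⟶ L)) (i : ι) : powLift f ≫ powCπ ι L i = f i := by
  ext n : 1
  exact plift_π _ i

noncomputable def powHomotopy {ι : Type v} {K L : CochainComplex (ModuleCat.{v} R) ℤ}
    (f : K ⟶ powC ι L) (h : ∀ i, Homotopy (f ≫ powCπ ι L i) 0) : Homotopy f 0 where
  hom m n := plift (fun i => (h i).hom m n)
  zero m n hmn := by
    apply phom_ext
    intro j
    erw [plift_π, zero_comp]
    rw [(h j).zero m n hmn]
  comm n := by
    apply phom_ext
    intro j
    have h1 := (h j).comm n
    let p : ∀ a b, K.X a ⟶ (powC ι L).X b := fun a b => plift (fun i => (h i).hom a b)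
    have e : (h j).hom = fun a b => p a b ≫ (powCπ ι L j).f b := by
      ext a b : 2
      exact (plift_π (fun i => (h i).hom a b) j).symm
    rw [e] at h1
    rw [dNext_comp_right, prevD_comp_right, ← Preadditive.add_comp] at h1
    simp only [HomologicalComplex.zero_f, add_zero, HomologicalComplex.comp_f] at h1 ⊢
    exact h1

instance (ι : Type v) {M : ModuleCat.{v} R} [Injective M] : Injective ((powF ι).obj M) := by
  dsimp [powF]; infer_instance

instance (ι : Type v) (K : CochainComplex (ModuleCat.{v} R) ℤ) [K.IsStrictlyGE 0] :
    (powC ι K).IsStrictlyGE 0 := by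
  rw [CochainComplex.isStrictlyGE_iff]
  intro i hi
  exact (powF ι).map_isZero (K.isZero_of_isStrictlyGE 0 i hi)

lemma powC_kinj (ι : Type v) (K : CochainComplex (ModuleCat.{v} R) ℤ) [K.IsStrictlyGE 0]
    [∀ n, Injective (K.X n)] : (powC ι K).IsKInjective :=
  have (n : ℤ) : Injective ((powC ι K).X n) :=
    inferInstanceAs (Injective ((powF ι).obj (K.X n)))
  CochainComplex.isKInjective_of_injective _ 0

noncomputable def powι (ι : Type v) {C : ModuleCat.{v} R} (I : InjectiveResolution C) :
    (CochainComplex.singleFunctor (ModuleCat.{v} R) 0).obj (∏ᶜ (fun _ : ι => C)) ⟶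
      powC ι I.cochainComplex :=
  (HomologicalComplex.singleMapHomologicalComplex (powF ι) (ComplexShape.up ℤ) 0).inv.app C ≫
    ((powF ι).mapHomologicalComplex _).map I.ι'

instance (ι : Type v) {C : ModuleCat.{v} R} (I : InjectiveResolution C) :
    QuasiIso (powι ι I) := by
  have h1 : QuasiIso (((powF ι).mapHomologicalComplex (ComplexShape.up ℤ)).map I.ι') :=
    inferInstance
  have h2 : IsIso ((HomologicalComplex.singleMapHomologicalComplex (powF (R := R) ι)
    (ComplexShape.up ℤ) 0).inv.app C) := inferInstance
  have h3 : QuasiIso ((HomologicalComplex.singleMapHomologicalComplex (powF (R := R) ι)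
    (ComplexShape.up ℤ) 0).inv.app C) := @quasiIso_of_isIso _ _ _ _ _ _ _ _ h2 _ _
  exact quasiIso_comp (hφ := h3) (hφ' := h1)

lemma powι_π (ι : Type v) {C : ModuleCat.{v} R} (I : InjectiveResolution C) (i : ι) :
    powι ι I ≫ powCπ ι _ i =
      (CochainComplex.singleFunctor (ModuleCat.{v} R) 0).map (Pi.π (fun _ : ι => C) i) ≫ I.ι' := by
  have nat : ((powF ι).mapHomologicalComplex _).map I.ι' ≫ powCπ ι _ i =
      powCπ ι _ i ≫ I.ι' := by
    ext n : 1
    exact (powπ ι i).naturality (I.ι'.f n)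
  unfold powι
  refine (Category.assoc _ _ _).trans ?_
  refine (congrArg (_ ≫ ·) nat).trans ?_
  refine (Category.assoc _ _ _).symm.trans ?_
  congr 1
  apply HomologicalComplex.from_single_hom_ext
  have h1 := (powπ ι i).naturality (HomologicalComplex.singleObjXSelf (.up ℤ) 0 C).inv
  have h2 := HomologicalComplex.singleMapHomologicalComplex_inv_app_self (powF (R := R) ι)
    (ComplexShape.up ℤ) 0 C
  have h3 := HomologicalComplex.single_map_f_self (c := ComplexShape.up ℤ) 0
    (Pi.π (fun _ : ι => C) i)
  refine (congrArg (· ≫ _) h2).trans (Eq.trans ?_ h3.symm)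
  refine (Category.assoc _ _ _).trans ?_
  exact congrArg (_ ≫ ·) h1

section
variable [HasDerivedCategory.{w} (ModuleCat.{v} R)]

lemma pow_hom_zero_aux {C : ModuleCat.{v} R} {ι : Type v} {K : CochainComplex (ModuleCat.{v} R) ℤ}
    (f : Q.obj K ⟶ Q.obj ((CochainComplex.singleFunctor (ModuleCat.{v} R) 0).obj
      (∏ᶜ (fun _ : ι => C))))
    (hf : ∀ i, f ≫ Q.map ((CochainComplex.singleFunctor (ModuleCat.{v} R) 0).map
      (Pi.π (fun _ : ι => C) i)) = 0) : f = 0 := by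
  let I := InjectiveResolution.of C
  have := powC_kinj ι I.cochainComplex
  have hi : IsIso (Q.map (powι ι I)) := inferInstance
  obtain ⟨g, hg⟩ := Q_map_surj _ _ (f ≫ Q.map (powι ι I))
  have hz : ∀ i, Q.map (g ≫ powCπ ι _ i) = 0 := by
    intro i
    rw [Functor.map_comp, hg, assoc, ← Functor.map_comp, powι_π, Functor.map_comp, ← assoc,
      hf, zero_comp]
  have hh := powHomotopy g (fun i => (Q_map_zero _ _ _ (hz i)).some)
  have hg0 : Q.map g = 0 := by rw [Q_map_eq_of_homotopy _ hh, Functor.map_zero]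
  rw [hg0] at hg
  rw [← cancel_mono (Q.map (powι ι I)), ← hg, zero_comp]

/-- Joint injectivity of the projections of a power in the derived category. -/
lemma pow_hom_zero {C : ModuleCat.{v} R} {ι : Type v} {Y : DerivedCategory (ModuleCat.{v} R)}
    (f : Y ⟶ (singleFunctor _ 0).obj (∏ᶜ (fun _ : ι => C)))
    (hf : ∀ i, f ≫ (singleFunctor _ 0).map (Pi.π (fun _ : ι => C) i) = 0) : f = 0 := by
  obtain ⟨K, ⟨e⟩⟩ : ∃ K, Nonempty (Q.obj K ≅ Y) := ⟨_, ⟨Q.objObjPreimageIso Y⟩⟩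
  have h4 : e.hom ≫ f = 0 := by
    apply pow_hom_zero_aux
    intro i
    have := (Category.assoc e.hom f ((singleFunctor _ 0).map (Pi.π (fun _ : ι => C) i)))
    rw [hf i, comp_zero] at this
    exact this
  rw [← cancel_epi e.hom, h4, comp_zero]

lemma exists_pow_env_aux (C : ModuleCat.{v} R) (K : CochainComplex (ModuleCat.{v} R) ℤ) :
    ∃ (ι : Type v) (φ : Q.obj K ⟶ Q.obj ((CochainComplex.singleFunctor (ModuleCat.{v} R) 0).obj
      (∏ᶜ (fun _ : ι => C)))),
      ∀ f : Q.obj K ⟶ Q.obj ((CochainComplex.singleFunctor (ModuleCat.{v} R) 0).obj C),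
        ∃ g, f = φ ≫ g := by
  let I := InjectiveResolution.of C
  let ι : Type v := K ⟶ I.cochainComplex
  have hi : IsIso (Q.map (powι ι I)) := inferInstance
  have hi2 : IsIso (Q.map I.ι') := inferInstance
  refine ⟨ι, Q.map (powLift (fun i : ι => i)) ≫ inv (Q.map (powι ι I)), ?_⟩
  intro f
  obtain ⟨g, hg⟩ := Q_map_surj _ _ (f ≫ Q.map I.ι')
  refine ⟨Q.map ((CochainComplex.singleFunctor (ModuleCat.{v} R) 0).map
      (Pi.π (fun _ : ι => C) g)), ?_⟩
  have h1 : inv (Q.map (powι ι I)) ≫ Q.map ((CochainComplex.singleFunctor (ModuleCat.{v} R) 0).map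
      (Pi.π (fun _ : ι => C) g)) = Q.map (powCπ ι _ g) ≫ inv (Q.map I.ι') := by
    rw [IsIso.inv_comp_eq, ← assoc, IsIso.eq_comp_inv, ← Functor.map_comp, ← Functor.map_comp,
      powι_π]
  have h2 : f = Q.map g ≫ inv (Q.map I.ι') := by
    rw [hg]; simp
  have h3 := powLift_π (fun i : ι => i) g
  rw [assoc, h1, ← assoc, ← Functor.map_comp, h3]
  exact h2

/-- Every object has a weak envelope map to a power of `C`. -/
lemma exists_pow_env (C : ModuleCat.{v} R) (Y : DerivedCategory (ModuleCat.{v} R)) :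
    ∃ (ι : Type v) (φ : Y ⟶ (singleFunctor _ 0).obj (∏ᶜ (fun _ : ι => C))),
      ∀ f : Y ⟶ (singleFunctor _ 0).obj C, ∃ g, f = φ ≫ g := by
  obtain ⟨K, ⟨e⟩⟩ : ∃ K, Nonempty (Q.obj K ≅ Y) := ⟨_, ⟨Q.objObjPreimageIso Y⟩⟩
  obtain ⟨ι, φ, hφ⟩ := exists_pow_env_aux C K
  let φ' : Q.obj K ⟶ (singleFunctor _ 0).obj (∏ᶜ (fun _ : ι => C)) := φ
  have hφ' : ∀ f : Q.obj K ⟶ (singleFunctor _ 0).obj C, ∃ g, f = φ' ≫ g := hφ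
  refine ⟨ι, e.inv ≫ φ', fun f => ?_⟩
  obtain ⟨g, hg⟩ := hφ' (e.hom ≫ f)
  exact ⟨g, by rw [assoc, ← hg, e.inv_hom_id_assoc]⟩

end

end PaperAux

namespace PaperAux

section general
variable {A : Type u} [Category.{v} A] [Abelian A] [HasDerivedCategory.{w} A]

/-- Vanishing of `Hom(X, Σ^j M)`. -/
def Van (X : DerivedCategory A) (j : ℤ) (M : A) : Prop :=
  ∀ f : X ⟶ ((singleFunctor A 0).obj M)⟦j⟧, f = 0

lemma Van.retract {X : DerivedCategory A} {j : ℤ} {M N : A} (h : Van X j M)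
    (s : N ⟶ M) (r : M ⟶ N) (hs : s ≫ r = 𝟙 N) : Van X j N := by
  intro f
  have h1 := h (f ≫ ((singleFunctor A 0).map s)⟦j⟧')
  have h2 : ((singleFunctor A 0).map s)⟦j⟧' ≫ ((singleFunctor A 0).map r)⟦j⟧' = 𝟙 _ := by
    rw [← Functor.map_comp, ← Functor.map_comp, hs, CategoryTheory.Functor.map_id,
      CategoryTheory.Functor.map_id]
  rw [← comp_id f, ← h2, ← assoc, h1, zero_comp]

lemma Van.retract_left {X Y : DerivedCategory A} {j : ℤ} {M : A} (h : Van X j M)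
    (s : Y ⟶ X) (r : X ⟶ Y) (hs : s ≫ r = 𝟙 Y) : Van Y j M := by
  intro f
  rw [← id_comp f, ← hs, assoc, h (r ≫ f), comp_zero]

lemma zero_of_iso {X Y Z : DerivedCategory A} (e : Y ≅ Z) (h : ∀ f : X ⟶ Z, f = 0)
    (f : X ⟶ Y) : f = 0 := by
  rw [← cancel_mono e.hom, h (f ≫ e.hom), zero_comp]

lemma Van.ses {X : DerivedCategory A} {S : ShortComplex A} (hS : S.ShortExact)
    (h1 : ∀ i : ℤ, 0 < i → Van X i S.X₁) (h2 : ∀ i : ℤ, 0 < i → Van X i S.X₂)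
    (i : ℤ) (hi : 0 < i) : Van X i S.X₃ := by
  intro f
  have hT := Triangle.shift_distinguished _ hS.singleTriangle_distinguished i
  obtain ⟨g, hg⟩ := Triangle.coyoneda_exact₃ _ hT f
    (zero_of_iso ((shiftFunctorAdd' (DerivedCategory A) i 1 (i + 1) rfl).symm.app
      ((singleFunctor A 0).obj S.X₁)) (h1 (i + 1) (by omega)) _)
  exact hg.trans ((congrArg (· ≫ _) (h2 i hi g)).trans zero_comp)

lemma hom_shift_zero {X Y : DerivedCategory A} (a m b : ℤ) (hb : a + m = b)
    (h : ∀ f : X ⟶ Y⟦a⟧, f = 0) (f : X⟦m⟧ ⟶ Y⟦b⟧) : f = 0 := by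
  obtain ⟨g, hg⟩ := (shiftFunctor (DerivedCategory A) m).map_surjective
    (f ≫ (shiftFunctorAdd' (DerivedCategory A) a m b hb).hom.app Y)
  rw [← cancel_mono ((shiftFunctorAdd' (DerivedCategory A) a m b hb).hom.app Y), ← hg, h g,
    Functor.map_zero, zero_comp]

lemma ses_coker {S : ShortComplex A} (hS : S.Exact) :
    (ShortComplex.mk (cokernel.desc S.f S.g S.zero) (cokernel.π S.g) (by
      rw [← cancel_epi (cokernel.π S.f)]; simp)).ShortExact where
  exact := by
    have := ShortComplex.exact_cokernel S.g
    refine (ShortComplex.exact_iff_of_epi_of_isIso_of_mono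
      (S₁ := ShortComplex.mk S.g (cokernel.π S.g) (by simp))
      (S₂ := ShortComplex.mk (cokernel.desc S.f S.g S.zero) (cokernel.π S.g) (by
      rw [← cancel_epi (cokernel.π S.f)]; simp))
      { τ₁ := cokernel.π S.f, τ₂ := 𝟙 _, τ₃ := 𝟙 _ }).1 this
  mono_f := hS.mono_cokernelDesc
  epi_g := by dsimp; infer_instance

lemma Van.coker_zero {X : DerivedCategory A} {i : ℤ} {M N : A} (h : Van X i N) (f : M ⟶ N)
    (hf : f = 0) : Van X i (cokernel f) :=
  h.retract (cokernel.desc _ (𝟙 _) (by rw [hf, zero_comp])) (cokernel.π _)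
    (by rw [← cancel_epi (cokernel.π _)]; simp)

lemma Van.coker_end {X : DerivedCategory A} {i : ℤ} {S : ShortComplex A} (hS : S.Exact)
    (hg : Epi S.g) (h : Van X i (cokernel S.f)) : Van X i S.X₃ := by
  have m1 := hS.mono_cokernelDesc
  have m3 : Epi (cokernel.desc _ _ S.zero) := by
    refine epi_of_epi_fac (f := cokernel.π _) (h := S.g) ?_
    simp
  have m4 : IsIso (cokernel.desc _ _ S.zero) := isIso_of_mono_of_epi _
  exact h.retract (inv (cokernel.desc _ _ S.zero)) _ (IsIso.inv_hom_id _)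

lemma van_chain {X : DerivedCategory A} {r : ℕ} (S : ComposableArrows A (r + 3))
    (hS : S.Exact) (h0 : IsZero (S.obj 0)) (hl : IsZero (S.obj (Fin.last (r + 3))))
    (h : ∀ (k : ℕ) (_ : 1 ≤ k) (hk : k ≤ r + 1), ∀ i : ℤ, 0 < i →
      Van X i (S.obj ⟨k, by omega⟩)) (i : ℤ) (hi : 0 < i) : Van X i (S.obj ⟨r + 2, by omega⟩) := by
  have key : ∀ (k : ℕ) (hk : k + 1 ≤ r + 1), ∀ i : ℤ, 0 < i →
      Van X i (cokernel (S.map' k (k+1))) := by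
    intro k
    induction k with
    | zero =>
      intro hk i hi
      have h00 : S.map' 0 1 = 0 := h0.eq_of_src _ _
      exact (h 1 (by omega) (by omega) i hi).coker_zero _ h00
    | succ k ih =>
      intro hk i hi
      exact Van.ses (ses_coker (hS.exact' k (k+1) (k+2))) (ih (by omega))
        (h (k+2) (by omega) (by omega)) i hi
  have e1 := hS.exact' r (r+1) (r+2)
  have e2 := hS.exact' (r+1) (r+2) (r+3)
  have m2 : Epi (S.map' (r+1) (r+2)) := e2.epi_f (hl.eq_of_tgt _ _)
  exact Van.coker_end e1 m2 (key r (by omega) i hi)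

lemma Van.of_iso {X Y : DerivedCategory A} {j : ℤ} {M : A} (h : Van X j M) (e : Y ≅ X) :
    Van Y j M := h.retract_left e.hom e.inv e.hom_inv_id

lemma isGE_of_van {X : DerivedCategory A} {E : A} [Injective E] (hE : IsCoseparator E)
    (h : ∀ i : ℤ, 0 < i → Van X i E) : X.IsGE 0 := by
  obtain ⟨K, ⟨e⟩⟩ : ∃ K, Nonempty (Q.obj K ≅ X) := ⟨_, ⟨Q.objObjPreimageIso X⟩⟩
  rw [isGE_iff]
  intro n hn
  refine IsZero.of_iso ?_ ((homologyFunctor A n).mapIso e.symm ≪≫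
    (homologyFunctorFactors A n).app K)
  change IsZero (K.homology n)
  rw [IsZero.iff_id_eq_zero]
  rw [isCoseparator_def] at hE
  refine hE _ _ fun a => ?_
  rw [zero_comp, id_comp]
  let b : K.opcycles n ⟶ E := Injective.factorThru a (K.homologyι n)
  have hb : K.homologyι n ≫ b = a := Injective.comp_factorThru _ _
  let φ : K ⟶ (HomologicalComplex.single A (ComplexShape.up ℤ) n).obj E :=
    HomologicalComplex.mkHomToSingle (K.pOpcycles n ≫ b) (by intro i hi; simp)
  have hφ : Q.map φ = 0 := by
    have h2 := (h (-n) (by omega)).of_iso e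
    let iso : Q.obj ((HomologicalComplex.single A (ComplexShape.up ℤ) n).obj E) ≅
      ((singleFunctor A 0).obj E)⟦-n⟧ :=
      (((singleFunctors A).shiftIso (-n) n 0 (by omega)).app E).symm
    have h3 := h2 (Q.map φ ≫ iso.hom)
    rw [← cancel_mono iso.hom, h3, zero_comp]
  have hφ2 : HomologicalComplex.homologyMap φ n = 0 := by
    have := (homologyFunctorFactors A n).hom.naturality φ
    rw [Functor.comp_map, hφ, Functor.map_zero, zero_comp] at this
    change 0 = _ ≫ HomologicalComplex.homologyMap φ n at this
    exact (cancel_epi ((homologyFunctorFactors A n).hom.app K)).1 (this.symm.trans comp_zero.symm)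
  have h4 := HomologicalComplex.homologyι_naturality φ n
  rw [hφ2, zero_comp] at h4
  have h5 : HomologicalComplex.opcyclesMap φ n ≫
      (HomologicalComplex.singleObjOpcyclesSelfIso (ComplexShape.up ℤ) n E).inv = b := by
    rw [← cancel_epi (K.pOpcycles n)]
    simp [φ]
  rw [← hb, ← h5, ← assoc, ← h4, zero_comp]

end general

end PaperAux

namespace PaperAux
section main
variable {R : Type v} [Ring R] [HasDerivedCategory.{w} (ModuleCat.{v} R)]

lemma Van.pow {C : ModuleCat.{v} R} {ι : Type v} {X : DerivedCategory (ModuleCat.{v} R)} {j : ℤ}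
    (h : Van X j C) : Van X j (∏ᶜ (fun _ : ι => C)) := by
  intro f
  let S := singleFunctor (ModuleCat.{v} R) 0
  let e := shiftFunctorCompIsoId (DerivedCategory (ModuleCat.{v} R)) j (-j) (by omega)
  have h1 : f⟦-j⟧' ≫ e.hom.app (S.obj (∏ᶜ (fun _ : ι => C))) = 0 := by
    apply pow_hom_zero
    intro i
    have h2 := e.hom.naturality (S.map (Pi.π (fun _ : ι => C) i))
    have h3 : f ≫ (S.map (Pi.π (fun _ : ι => C) i))⟦j⟧' = 0 := h _
    have h4 : f⟦-j⟧' ≫ ((S.map (Pi.π (fun _ : ι => C) i))⟦j⟧')⟦-j⟧' = 0 := by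
      rw [← Functor.map_comp, h3, Functor.map_zero]
    rw [assoc]
    refine (congrArg (_ ≫ ·) h2.symm).trans ?_
    refine (Category.assoc _ _ _).symm.trans ?_
    exact (congrArg (· ≫ _) h4).trans zero_comp
  have h5 : f⟦-j⟧' = 0 := by
    rw [← cancel_mono (e.hom.app (S.obj (∏ᶜ (fun _ : ι => C)))), zero_comp]
    exact h1
  apply (shiftFunctor (DerivedCategory (ModuleCat.{v} R)) (-j)).map_injective
  rw [h5, Functor.map_zero]

lemma Van.prod {C M : ModuleCat.{v} R} (hM : InProdOf C M) {X : DerivedCategory (ModuleCat.{v} R)}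
    {j : ℤ} (h : Van X j C) : Van X j M := by
  obtain ⟨ι, s, r, hsr⟩ := hM
  exact (h.pow (ι := ι)).retract s r hsr

lemma inHeart_iff {C : ModuleCat.{v} R} {X : DerivedCategory (ModuleCat.{v} R)} :
    InHeart C X ↔ ∀ i : ℤ, i ≠ 0 → Van X i C := Iff.rfl

lemma inHeart_retract {C : ModuleCat.{v} R} {X Y : DerivedCategory (ModuleCat.{v} R)}
    (h : InHeart C X) (s : Y ⟶ X) (r : X ⟶ Y) (hs : s ≫ r = 𝟙 Y) : InHeart C Y :=
  fun i hi => (show Van X i C from h i hi).retract_left s r hs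

lemma inHeart_ext {C : ModuleCat.{v} R} (T : Triangle (DerivedCategory (ModuleCat.{v} R)))
    (hT : T ∈ distTriang _) (h1 : InHeart C T.obj₁) (h3 : InHeart C T.obj₃) :
    InHeart C T.obj₂ := by
  intro i hi f
  obtain ⟨g, hg⟩ := Triangle.yoneda_exact₂ T hT f (h1 i hi _)
  rw [hg, h3 i hi g, comp_zero]

lemma IsLE.retract {X Y : DerivedCategory (ModuleCat.{v} R)} {n : ℤ} (h : X.IsLE n)
    (s : Y ⟶ X) (r : X ⟶ Y) (hs : s ≫ r = 𝟙 Y) : Y.IsLE n := by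
  rw [isLE_iff] at h ⊢
  intro i hi
  rw [IsZero.iff_id_eq_zero, ← CategoryTheory.Functor.map_id, ← hs, Functor.map_comp,
    (h i hi).eq_of_tgt ((homologyFunctor _ i).map s) 0, zero_comp]

lemma single_van_iff [HasExt.{e} (ModuleCat.{v} R)] {C M : ModuleCat.{v} R} (n : ℕ) :
    Subsingleton (Abelian.Ext M C n) ↔
      Van ((singleFunctor (ModuleCat.{v} R) 0).obj M) (n : ℤ) C := by
  have e : Abelian.Ext M C n ≃ (((singleFunctor (ModuleCat.{v} R) 0).obj M) ⟶
    ((singleFunctor (ModuleCat.{v} R) 0).obj C)⟦(n : ℤ)⟧) := Abelian.Ext.homEquiv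
  rw [e.subsingleton_congr]
  constructor
  · intro h f
    exact Subsingleton.elim _ _
  · intro h
    exact ⟨fun a b => (h a).trans (h b).symm⟩

lemma single_van_neg {C M : ModuleCat.{v} R} (i : ℤ) (hi : i < 0) :
      Van ((singleFunctor (ModuleCat.{v} R) 0).obj M) i C := by
  intro f
  have : (((singleFunctor (ModuleCat.{v} R) 0).obj C)⟦i⟧).IsGE (-i) :=
    TStructure.t.isGE_shift _ 0 i (-i) (by omega)
  exact TStructure.t.zero f 0 (-i) (by omega)

lemma single_inHeart_iff [HasExt.{e} (ModuleCat.{v} R)] {C M : ModuleCat.{v} R} :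
    InCotiltingClass C M ↔ InHeart C ((singleFunctor (ModuleCat.{v} R) 0).obj M) := by
  constructor
  · intro h i hi
    obtain hi | hi := lt_or_gt_of_ne hi
    · exact single_van_neg i hi
    · obtain ⟨n, rfl⟩ := Int.eq_ofNat_of_zero_le hi.le
      exact (single_van_iff n).1 (h n (by omega))
  · intro h n hn
    exact (single_van_iff n).2 (h n (by omega))

lemma isGE_of_inHeart [HasExt.{e} (ModuleCat.{v} R)] {C : ModuleCat.{v} R}
    (hC : IsBigCotilting C) {X : DerivedCategory (ModuleCat.{v} R)} (hX : InHeart C X) :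
    X.IsGE 0 := by
  obtain ⟨n, -, -, r, S, hS, h0, hl, hP, hI, hE⟩ := hC
  apply isGE_of_van hE
  intro i hi
  refine van_chain S hS h0 hl ?_ i hi
  intro k hk hk' i hi
  exact Van.prod (hP k hk hk') (hX i hi.ne')

lemma inX_iff [HasExt.{e} (ModuleCat.{v} R)] {C : ModuleCat.{v} R}
    (hC : IsBigCotilting C) {X : DerivedCategory (ModuleCat.{v} R)} :
    (∃ M : ModuleCat.{v} R, InCotiltingClass C M ∧
      Nonempty (X ≅ (singleFunctor (ModuleCat.{v} R) 0).obj M)) ↔ X.IsLE 0 ∧ InHeart C X := by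
  constructor
  · rintro ⟨M, hM, ⟨e⟩⟩
    exact ⟨IsLE.retract (inferInstance : ((singleFunctor (ModuleCat.{v} R) 0).obj M).IsLE 0)
      e.hom e.inv e.hom_inv_id,
      inHeart_retract (single_inHeart_iff.1 hM) e.hom e.inv e.hom_inv_id⟩
  · rintro ⟨h1, h2⟩
    have := isGE_of_inHeart hC h2
    obtain ⟨M, ⟨e⟩⟩ := exists_iso_singleFunctor_obj_of_isGE_of_isLE X 0
    exact ⟨M, single_inHeart_iff.2 (inHeart_retract h2 e.inv e.hom e.inv_hom_id), ⟨e⟩⟩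

lemma pow_inX [HasExt.{e} (ModuleCat.{v} R)] {C : ModuleCat.{v} R}
    (hC : IsBigCotilting C) (ι : Type v) : InCotiltingClass C (∏ᶜ (fun _ : ι => C)) := by
  obtain ⟨n, -, h, -⟩ := hC
  exact fun j hj => h ι j hj

lemma pow_inHeart [HasExt.{e} (ModuleCat.{v} R)] {C : ModuleCat.{v} R}
    (hC : IsBigCotilting C) (ι : Type v) :
    InHeart C ((singleFunctor (ModuleCat.{v} R) 0).obj (∏ᶜ (fun _ : ι => C))) :=
  single_inHeart_iff.1 (pow_inX hC ι)

lemma cogen [HasExt.{e} (ModuleCat.{v} R)] {C : ModuleCat.{v} R}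
    (hC : IsBigCotilting C) {X : DerivedCategory (ModuleCat.{v} R)} (hX : InHeart C X) :
    ∃ (ι : Type v) (Z : DerivedCategory (ModuleCat.{v} R))
    (f : X ⟶ (singleFunctor (ModuleCat.{v} R) 0).obj (∏ᶜ (fun _ : ι => C)))
    (g : (singleFunctor (ModuleCat.{v} R) 0).obj (∏ᶜ (fun _ : ι => C)) ⟶ Z)
    (h : Z ⟶ X⟦(1 : ℤ)⟧), (Triangle.mk f g h ∈ distTriang _) ∧ InHeart C Z := by
  obtain ⟨ι, φ, hφ⟩ := exists_pow_env C X
  obtain ⟨Z, g, h, hT⟩ := distinguished_cocone_triangle φ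
  refine ⟨ι, Z, φ, g, h, hT, ?_⟩
  intro i hi a
  obtain ⟨b, hb⟩ := Triangle.yoneda_exact₃ _ hT a (pow_inHeart hC ι i hi _)
  change X⟦(1 : ℤ)⟧ ⟶ _ at b
  change a = h ≫ b at hb
  by_cases hi1 : i = 1
  · subst hi1
    obtain ⟨c, rfl⟩ := (shiftFunctor (DerivedCategory (ModuleCat.{v} R)) (1 : ℤ)).map_surjective b
    obtain ⟨d, rfl⟩ := hφ c
    have h0 : h ≫ φ⟦(1 : ℤ)⟧' = 0 := comp_distTriang_mor_zero₃₁ _ hT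
    rw [hb, Functor.map_comp, ← assoc, h0, zero_comp]
  · have : b = 0 := hom_shift_zero (i - 1) 1 i (by omega) (hX (i - 1) (by omega)) b
    rw [hb, this, comp_zero]

lemma invRotate_mor_zero (T : Triangle (DerivedCategory (ModuleCat.{v} R))) (h : T.mor₃ = 0) :
    T.invRotate.mor₁ = 0 := by
  simp [Triangle.invRotate, h]
  rfl

lemma inProd_iff [HasExt.{e} (ModuleCat.{v} R)] {C : ModuleCat.{v} R}
    (hC : IsBigCotilting C) {X : DerivedCategory (ModuleCat.{v} R)} :
    (∃ M : ModuleCat.{v} R, InProdOf C M ∧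
      Nonempty (X ≅ (singleFunctor (ModuleCat.{v} R) 0).obj M)) ↔
    InHeart C X ∧ ∀ Z, InHeart C Z → ∀ f : Z ⟶ X⟦(1 : ℤ)⟧, f = 0 := by
  constructor
  · rintro ⟨M, hM, ⟨e⟩⟩
    constructor
    · obtain ⟨ι, s, r, hsr⟩ := hM
      refine inHeart_retract (pow_inHeart hC ι) (e.hom ≫ (singleFunctor _ 0).map s)
        ((singleFunctor _ 0).map r ≫ e.inv) ?_
      rw [assoc, ← Functor.map_comp_assoc, hsr, CategoryTheory.Functor.map_id, id_comp,
        e.hom_inv_id]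
    · intro Z hZ
      exact zero_of_iso ((shiftFunctor _ (1 : ℤ)).mapIso e) (Van.prod hM (hZ 1 one_ne_zero))
  · rintro ⟨h1, h2⟩
    obtain ⟨ι, Z, f, g, h, hT, hZ⟩ := cogen hC h1
    have h0 : h = 0 := h2 Z hZ h
    have hT' := inv_rot_of_distTriang _ hT
    have hz : (Triangle.mk f g h).invRotate.mor₁ = 0 := invRotate_mor_zero _ h0
    obtain ⟨r, hr⟩ := Triangle.yoneda_exact₂ _ hT' (𝟙 X)
      ((congrArg (· ≫ _) hz).trans zero_comp)
    change (singleFunctor (ModuleCat.{v} R) 0).obj (∏ᶜ (fun _ : ι => C)) ⟶ X at r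
    change 𝟙 X = f ≫ r at hr
    have hle : X.IsLE 0 := IsLE.retract (inferInstance :
      ((singleFunctor (ModuleCat.{v} R) 0).obj (∏ᶜ (fun _ : ι => C))).IsLE 0) f r hr.symm
    have hge := isGE_of_inHeart hC h1
    obtain ⟨M, ⟨e⟩⟩ := exists_iso_singleFunctor_obj_of_isGE_of_isLE X 0
    obtain ⟨s', hs'⟩ := (singleFunctor (ModuleCat.{v} R) 0).map_surjective (e.inv ≫ f)
    obtain ⟨r', hr'⟩ := (singleFunctor (ModuleCat.{v} R) 0).map_surjective (r ≫ e.hom)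
    refine ⟨M, ⟨ι, s', r', ?_⟩, ⟨e⟩⟩
    apply (singleFunctor (ModuleCat.{v} R) 0).map_injective
    rw [Functor.map_comp, hs', hr', assoc, ← assoc f, ← hr, id_comp, e.inv_hom_id,
      CategoryTheory.Functor.map_id]

lemma coresX [HasExt.{e} (ModuleCat.{v} R)] {C : ModuleCat.{v} R}
    (hC : IsBigCotilting C) :
    IsCoresolvingInHeart C (fun X => X.IsLE 0 ∧ InHeart C X) := by
  refine ⟨fun X h => h.2, ?_, ?_, ?_, ?_⟩
  · rintro X Y ⟨s, r, hs⟩ ⟨h1, h2⟩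
    exact ⟨IsLE.retract h1 s r hs, inHeart_retract h2 s r hs⟩
  · rintro T hT ⟨h1, h1'⟩ ⟨h3, h3'⟩
    exact ⟨TStructure.t.isLE₂ T hT 0 h1 h3, inHeart_ext T hT h1' h3'⟩
  · rintro T hT ⟨h1, h1'⟩ ⟨h2, h2'⟩ h3
    refine ⟨TStructure.t.isLE₂ T.rotate (rot_of_distTriang _ hT) 0 h2 ?_, h3⟩
    have : (T.obj₁⟦(1 : ℤ)⟧).IsLE (-1) := TStructure.t.isLE_shift _ 0 1 (-1) (by omega)
    exact TStructure.t.isLE_of_le (T.obj₁⟦(1 : ℤ)⟧) (-1) 0 (by omega)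
  · intro X hX
    obtain ⟨ι, Z, f, g, h, hT, hZ⟩ := cogen hC hX
    exact ⟨_, Z, f, g, h, hT, ⟨inferInstance, pow_inHeart hC ι⟩, hZ⟩

lemma coresProd [HasExt.{e} (ModuleCat.{v} R)] {C : ModuleCat.{v} R}
    (hC : IsBigCotilting C) :
    IsCoresolvingInHeart C
      (fun X => InHeart C X ∧ ∀ Z, InHeart C Z → ∀ f : Z ⟶ X⟦(1 : ℤ)⟧, f = 0) := by
  have hret : ∀ X Y : DerivedCategory (ModuleCat.{v} R),
      (∃ (s : Y ⟶ X) (r : X ⟶ Y), s ≫ r = 𝟙 Y) →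
      (InHeart C X ∧ ∀ Z, InHeart C Z → ∀ f : Z ⟶ X⟦(1 : ℤ)⟧, f = 0) →
      (InHeart C Y ∧ ∀ Z, InHeart C Z → ∀ f : Z ⟶ Y⟦(1 : ℤ)⟧, f = 0) := by
    rintro X Y ⟨s, r, hs⟩ ⟨h1, h2⟩
    refine ⟨inHeart_retract h1 s r hs, fun Z hZ f => ?_⟩
    have h3 := h2 Z hZ (f ≫ s⟦(1 : ℤ)⟧')
    rw [← comp_id f, ← CategoryTheory.Functor.map_id, ← hs, Functor.map_comp, ← assoc, h3,
      zero_comp]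
  refine ⟨fun X h => h.1, hret, ?_, ?_, ?_⟩
  · rintro T hT ⟨h1, h1'⟩ ⟨h3, h3'⟩
    refine ⟨inHeart_ext T hT h1 h3, fun Z hZ f => ?_⟩
    have hT' := Triangle.shift_distinguished _ hT 1
    obtain ⟨g, hg⟩ := Triangle.coyoneda_exact₂ _ hT' f (h3' Z hZ _)
    exact hg.trans ((congrArg (· ≫ _) (h1' Z hZ g)).trans zero_comp)
  · rintro T hT ⟨h1, h1'⟩ h2 h3
    refine hret T.obj₂ T.obj₃ ?_ h2
    obtain ⟨s, hs⟩ := Triangle.coyoneda_exact₃ T hT (𝟙 _) (h1' _ h3 _)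
    exact ⟨s, T.mor₂, hs.symm⟩
  · intro X hX
    obtain ⟨ι, Z, f, g, h, hT, hZ⟩ := cogen hC hX
    refine ⟨_, Z, f, g, h, hT, (inProd_iff hC).1 ⟨_, ⟨ι, 𝟙 _, 𝟙 _, id_comp _⟩, ⟨Iso.refl _⟩⟩, hZ⟩

end main
end PaperAux

end

open PaperStmt DerivedCategory

theorem statement15 (R : Type v) [Ring R] [HasExt.{e} (ModuleCat.{v} R)]
    [HasDerivedCategory.{w} (ModuleCat.{v} R)]
    (C : ModuleCat.{v} R) (hC : IsBigCotilting C) :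
    IsCoresolvingInHeart C (fun X => ∃ M : ModuleCat.{v} R, InCotiltingClass C M ∧
      Nonempty (X ≅ (singleFunctor (ModuleCat.{v} R) 0).obj M)) ∧
    IsCoresolvingInHeart C (fun X => ∃ M : ModuleCat.{v} R, InProdOf C M ∧
      Nonempty (X ≅ (singleFunctor (ModuleCat.{v} R) 0).obj M)) := by
  constructor
  · have := PaperAux.coresX hC
    simp only [← PaperAux.inX_iff hC] at this
    exact this
  · have := PaperAux.coresProd hC
    simp only [← PaperAux.inProd_iff hC] at this
    exact this
end

section
/- Let R be a ring, C a big cotilting right R-module of injective dimension n, and G = {X ∈ D(R) : Hom_{D(R)}(X, Σ^i C) = 0 for all i ≠ 0} the tilted abelian category. Then for every X ∈ G, considered as a complex of R-modules, the cohomology modules satisfy H^i(X) = 0 for all i < 0 and all i > n. -/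
/-!
Statement 16: Let `R` be a ring, `C` a big cotilting module of injective dimension `n`, and
`G ⊆ D(R)` the heart of the cotilting t-structure.  Then for every `X ∈ G` the cohomology
modules satisfy `H^i(X) = 0` for `i < 0` and `i > n`.
-/

universe e w v u

open CategoryTheory Category Limits

open PaperStmt DerivedCategory

namespace Aux16

open Pretriangulated

section Res

variable {A : Type u} [Category.{v} A] [Abelian A]

/-- Modules with a finite resolution by modules in the class `P`. -/
inductive FinRes (P : A → Prop) : A → Prop
  | zero (M : A) (hM : IsZero M) : FinRes P M
  | step (S : ShortComplex A) (hS : S.ShortExact) (h₁ : FinRes P S.X₁) (h₂ : P S.X₂) :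
      FinRes P S.X₃

lemma FinRes.of_iso {P : A → Prop} {M N : A} (h : FinRes P M) (e : M ≅ N) : FinRes P N := by
  cases h with
  | zero _ hM => exact .zero _ (hM.of_iso e.symm)
  | step S hS h₁ h₂ =>
    exact FinRes.step (ShortComplex.mk S.f (S.g ≫ e.hom) (by simp))
      (ShortComplex.shortExact_of_iso
        (ShortComplex.isoMk (S₁ := S) (Iso.refl _) (Iso.refl _) e (by simp) (by simp)) hS) h₁ h₂

end Res

section General

variable {A : Type u} [Category.{v} A] [Abelian A] [HasDerivedCategory.{w} A]

/-- All morphisms `W ⟶ M[j]` vanish. -/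
def Van (W : DerivedCategory A) (M : A) (j : ℤ) : Prop :=
  ∀ f : W ⟶ ((singleFunctor A 0).obj M)⟦j⟧, f = 0

lemma Van.retract {W : DerivedCategory A} {M N : A} {j : ℤ} (h : Van W M j)
    (s : N ⟶ M) (r : M ⟶ N) (hsr : s ≫ r = 𝟙 N) : Van W N j := by
  intro f
  have h1 := h (f ≫ ((singleFunctor A 0).map s)⟦j⟧')
  calc f = f ≫ ((singleFunctor A 0).map (s ≫ r))⟦j⟧' := by rw [hsr]; simp
    _ = (f ≫ ((singleFunctor A 0).map s)⟦j⟧') ≫ ((singleFunctor A 0).map r)⟦j⟧' := by simp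
    _ = 0 := by rw [h1, zero_comp]

lemma Van.of_isZero (W : DerivedCategory A) {M : A} (hM : IsZero M) (j : ℤ) : Van W M j := by
  intro f
  apply IsZero.eq_of_tgt
  exact Functor.map_isZero _ (Functor.map_isZero _ hM)

lemma Van.shift {W : DerivedCategory A} {M : A} {a b c : ℤ} (h : Van W M a)
    (hc : c + b = a) :
    ∀ f : W ⟶ (((singleFunctor A 0).obj M)⟦c⟧)⟦b⟧, f = 0 := by
  intro f
  have h1 := h (f ≫ (shiftFunctorAdd' (DerivedCategory A) c b a hc).inv.app _)
  rw [← cancel_mono ((shiftFunctorAdd' (DerivedCategory A) c b a hc).inv.app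
    ((singleFunctor A 0).obj M)), h1, zero_comp]

lemma Van.source_shift {W : DerivedCategory A} {M : A} {a b c : ℤ} (h : Van W M a)
    (hc : b + c = a) : Van (W⟦-b⟧) M c := by
  intro f
  apply (shiftFunctor (DerivedCategory A) b).map_injective
  rw [Functor.map_zero]
  have h1 := h.shift (a := a) (b := b) (c := c) (by lia)
    ((shiftFunctorCompIsoId (DerivedCategory A) (-b) b (by simp)).inv.app W ≫ f⟦b⟧')
  rw [← cancel_epi ((shiftFunctorCompIsoId (DerivedCategory A) (-b) b (by simp)).inv.app W)]
  rw [comp_zero]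
  exact h1

lemma Van.target {W : DerivedCategory A} {M : A} {j : ℤ} (h : Van (W⟦-j⟧) M 0) : Van W M j := by
  intro f
  have h1 := h (f⟦-j⟧' ≫ (shiftFunctorAdd' (DerivedCategory A) j (-j) 0 (by simp)).inv.app _)
  apply (shiftFunctor (DerivedCategory A) (-j)).map_injective
  rw [Functor.map_zero]
  rw [← cancel_mono ((shiftFunctorAdd' (DerivedCategory A) j (-j) 0 (by simp)).inv.app
    ((singleFunctor A 0).obj M)), h1, zero_comp]

lemma lift_of_comp_eq_zero {S : ShortComplex A} (hS : S.ShortExact) (W : DerivedCategory A)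
    (j k : ℤ) (hk : j + 1 = k)
    (f : W ⟶ ((singleFunctor A 0).obj S.X₃)⟦j⟧) (h₂ : Van W S.X₂ j) :
    ∃ δ : ((singleFunctor A 0).obj S.X₃)⟦j⟧ ⟶ ((singleFunctor A 0).obj S.X₁)⟦k⟧,
      f ≫ δ = 0 → f = 0 := by
  obtain ⟨a, b, hab⟩ : ∃ (a : ((singleFunctor A 0).obj S.X₂)⟦j⟧ ⟶
        ((singleFunctor A 0).obj S.X₃)⟦j⟧)
      (b : ((singleFunctor A 0).obj S.X₃)⟦j⟧ ⟶ (((singleFunctor A 0).obj S.X₁)⟦j⟧)⟦(1 : ℤ)⟧),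
      ∀ f : W ⟶ ((singleFunctor A 0).obj S.X₃)⟦j⟧, f ≫ b = 0 → ∃ g, f = g ≫ a := by
    have hT := Triangle.shift_distinguished _ hS.singleTriangle_distinguished j
    exact ⟨_, _, fun f hf => Triangle.coyoneda_exact₃ _ hT f hf⟩
  refine ⟨b ≫ (shiftFunctorAdd' (DerivedCategory A) j 1 k hk).inv.app _, fun hf => ?_⟩
  have hf' : f ≫ b = 0 := by
    rw [← cancel_mono ((shiftFunctorAdd' (DerivedCategory A) j 1 k hk).inv.app
      ((singleFunctor A 0).obj S.X₁)), zero_comp, ← hf, assoc]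
  obtain ⟨g, hg⟩ := hab f hf'
  rw [hg, h₂ g, zero_comp]

lemma FinRes.van {P : A → Prop} {M : A} (h : FinRes P M) (W : DerivedCategory A) (j : ℤ)
    (hW : ∀ N, P N → ∀ k, j ≤ k → Van W N k) : Van W M j := by
  induction h generalizing j with
  | zero M hM => exact Van.of_isZero _ hM _
  | step S hS h₁ h₂ ih =>
    intro f
    obtain ⟨δ, hδ⟩ := lift_of_comp_eq_zero hS W j (j + 1) rfl f (hW _ h₂ _ le_rfl)
    exact hδ (ih (j + 1) (fun N hN k hk => hW N hN k (by lia)) _)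

lemma FinRes.comp_eq_zero {P : A → Prop} {X W : DerivedCategory A} (f : X ⟶ W)
    (hX : ∀ N, P N → ∀ j < 0, Van X N j)
    (hW : ∀ N, FinRes P N → Van W N 0) (m : ℕ) (c : ℤ) (hc : c + m = 0) (M : A)
    (hM : FinRes P M) (g : W ⟶ ((singleFunctor A 0).obj M)⟦c⟧) : f ≫ g = 0 := by
  induction m generalizing c M with
  | zero =>
    obtain rfl : c = 0 := by simpa using hc
    rw [hW M hM g, comp_zero]
  | succ m ih =>
    cases hM with
    | zero _ h => rw [Van.of_isZero _ h _ g, comp_zero]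
    | step S hS h₁ h₂ =>
      obtain ⟨δ, hδ⟩ := lift_of_comp_eq_zero hS X c (c + 1) rfl (f ≫ g)
        (hX _ h₂ c (by push_cast at hc; lia))
      apply hδ
      rw [assoc]
      exact ih (c + 1) (by push_cast at hc; lia) _ h₁ _

lemma isZero_homology {Q₀ : A} [Injective Q₀] (hQ : IsCoseparator Q₀) (X : DerivedCategory A)
    (i j : ℤ) (hij : j + i = 0) (h : Van X Q₀ j) : IsZero ((homologyFunctor A i).obj X) := by
  obtain ⟨K, ⟨e⟩⟩ : ∃ K : CochainComplex A ℤ, Nonempty (Q.obj K ≅ X) :=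
    ⟨Q.objPreimage X, ⟨Q.objObjPreimageIso X⟩⟩
  have hK : ∀ g : Q.obj K ⟶ Q.obj ((HomologicalComplex.single A (.up ℤ) i).obj Q₀), g = 0 := by
    intro g
    have e' : ((singleFunctor A 0).obj Q₀)⟦j⟧ ≅
      Q.obj ((HomologicalComplex.single A (.up ℤ) i).obj Q₀) :=
        ((singleFunctors A).shiftIso j i 0 hij).app Q₀
    have := h (e.inv ≫ g ≫ e'.inv)
    rw [← cancel_epi e.inv, ← cancel_mono e'.inv, assoc, this, comp_zero, zero_comp]
  refine IsZero.of_iso ?_ ((homologyFunctor A i).mapIso e.symm ≪≫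
    (homologyFunctorFactors A i).app K)
  change IsZero (K.homology i)
  rw [IsZero.iff_id_eq_zero]
  refine (Preadditive.isCoseparator_iff _).1 hQ _ (fun φ => ?_)
  rw [id_comp]
  let ψ : K.opcycles i ⟶ Q₀ := Injective.factorThru φ (K.homologyι i)
  have hψ : K.homologyι i ≫ ψ = φ := Injective.comp_factorThru _ _
  let g : K ⟶ (HomologicalComplex.single A (.up ℤ) i).obj Q₀ :=
    HomologicalComplex.mkHomToSingle (K.pOpcycles i ≫ ψ) (by simp)
  have hg : HomologicalComplex.homologyMap g i = 0 := by
    have h1 := homologyFunctorFactors_hom_naturality g i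
    rw [hK (Q.map g), Functor.map_zero, zero_comp] at h1
    exact (cancel_epi ((homologyFunctorFactors A i).hom.app K)).1 (h1.symm.trans comp_zero.symm)
  have h2 : HomologicalComplex.opcyclesMap g i =
      ψ ≫ (HomologicalComplex.singleObjOpcyclesSelfIso (.up ℤ) i Q₀).hom := by
    rw [← cancel_epi (K.pOpcycles i), HomologicalComplex.p_opcyclesMap,
      ← cancel_mono (HomologicalComplex.singleObjOpcyclesSelfIso (.up ℤ) i Q₀).inv]
    simp [g]
  have h3 := HomologicalComplex.homologyι_naturality g i
  rw [hg, zero_comp, h2, reassoc_of% hψ] at h3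
  rw [← cancel_mono (HomologicalComplex.singleObjOpcyclesSelfIso (.up ℤ) i Q₀).hom, ← h3,
    zero_comp]

lemma van_of_injDim [HasExt.{e} A] {M : A} {n : ℕ} [HasInjectiveDimensionLT M n] (N : A) (j : ℤ)
    (hj : (n : ℤ) ≤ j) : Van ((singleFunctor A 0).obj N) M j := by
  obtain ⟨j, rfl⟩ := Int.eq_ofNat_of_zero_le (show 0 ≤ j by lia)
  have := HasInjectiveDimensionLT.subsingleton M n j (by lia) N
  intro f
  exact (Abelian.Ext.homEquiv (X := N) (Y := M) (n := j)).symm.injective (Subsingleton.elim _ _)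

end General

section Arrows

variable {A : Type u} [Category.{v} A] [Abelian A]

lemma kernelSES_aux {X Y Z : A} (f : X ⟶ Y) (g : Y ⟶ Z) (hz : f ≫ g = 0)
    (hex : (ShortComplex.mk f g hz).Exact) :
    ∃ T : ShortComplex A, T.ShortExact ∧ T.X₁ = kernel f ∧ T.X₂ = X ∧ T.X₃ = kernel g := by
  refine ⟨ShortComplex.mk (kernel.ι f) (kernel.lift _ _ hz) ?_, ?_, rfl, rfl, rfl⟩
  · rw [← cancel_mono (kernel.ι _)]; simp
  · have hepi : Epi (kernel.lift _ _ hz) := by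
      exact (ShortComplex.exact_iff_epi_kernel_lift _).1 hex
    refine { exact := ?_, mono_f := ?_, epi_g := hepi }
    · apply ShortComplex.exact_of_f_is_kernel
      refine KernelFork.IsLimit.ofι' _ _ (fun {W} k hk => ⟨kernel.lift _ k (?_ : k ≫ f = 0),
        kernel.lift_ι _ _ _⟩)
      have := hk =≫ kernel.ι g
      simpa using this
    · dsimp; infer_instance

lemma kernelSES {N : ℕ} (S : ComposableArrows A N) (hS : S.Exact) (i : ℕ) (hi : i + 2 ≤ N) :
    ∃ T : ShortComplex A, T.ShortExact ∧ T.X₁ = kernel (S.map' i (i + 1)) ∧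
      T.X₂ = S.obj ⟨i, by omega⟩ ∧ T.X₃ = kernel (S.map' (i + 1) (i + 2)) :=
  kernelSES_aux _ _ _ (hS.exact i)

lemma finRes_of_arrows (P : A → Prop) (r : ℕ) (S : ComposableArrows A (r + 3)) (hS : S.Exact)
    (h0 : IsZero (S.obj 0)) (hl : IsZero (S.obj (Fin.last (r + 3))))
    (hP : ∀ (i : ℕ) (_ : 1 ≤ i) (_ : i ≤ r + 1), P (S.obj ⟨i, by omega⟩)) :
    FinRes P (S.obj ⟨r + 2, by omega⟩) := by
  have key : ∀ (i : ℕ) (hi : i + 1 ≤ r + 2), FinRes P (kernel (S.map' (i + 1) (i + 2))) := by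
    intro i
    induction i with
    | zero =>
      intro _
      obtain ⟨T, hT, h1, h2, h3⟩ := kernelSES S hS 0 (by omega)
      refine .zero _ ?_
      rw [← h3]
      have := hT.epi_g
      refine IsZero.of_epi T.g ?_
      rw [h2]
      exact h0
    | succ i ih =>
      intro hi
      obtain ⟨T, hT, h1, h2, h3⟩ := kernelSES S hS (i + 1) (by omega)
      change FinRes P (kernel (S.map' (i + 1 + 1) (i + 1 + 2)))
      rw [← h3]
      refine .step T hT ?_ ?_
      · rw [h1]
        exact ih (by omega)
      · rw [h2]
        exact hP (i + 1) (by omega) (by omega)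
  have hz : S.map' (r + 1 + 1) (r + 1 + 2) = 0 := IsZero.eq_of_tgt hl _ _
  have := key (r + 1) (by omega)
  have h5 : IsIso (kernel.ι (S.map' (r + 1 + 1) (r + 1 + 2))) := by
    rw [hz]; infer_instance
  exact this.of_iso (@asIso _ _ _ _ _ h5)

lemma injDim_of_arrows (n : ℕ) (S : ComposableArrows A (n + 3)) (hS : S.Exact)
    (h0 : IsZero (S.obj 0)) (hl : IsZero (S.obj (Fin.last (n + 3))))
    (hP : ∀ (i : ℕ) (_ : 2 ≤ i) (_ : i ≤ n + 2), Injective (S.obj ⟨i, by omega⟩)) :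
    HasInjectiveDimensionLT (S.obj ⟨1, by omega⟩) (n + 1) := by
  have key : ∀ (k i : ℕ) (hi : i + k = n + 2) (_ : 2 ≤ i),
      HasInjectiveDimensionLT (kernel (S.map' i (i + 1))) (k + 1) := by
    intro k
    induction k with
    | zero =>
      intro i hi h2
      obtain rfl : i = n + 2 := by omega
      have hz : S.map' (n + 2) (n + 2 + 1) = 0 := IsZero.eq_of_tgt hl _ _
      have h5 : IsIso (kernel.ι (S.map' (n + 2) (n + 2 + 1))) := by
        rw [hz]; infer_instance
      have := hP (n + 2) (by omega) (by omega)
      have h6 : HasInjectiveDimensionLT (S.obj ⟨n + 2, by omega⟩) (0 + 1) := by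
        rw [zero_add]; infer_instance
      exact hasInjectiveDimensionLT_of_iso (@asIso _ _ _ _ _ h5).symm _
    | succ k ih =>
      intro i hi h2
      obtain ⟨T, hT, h1, h2, h3⟩ := kernelSES S hS i (by omega)
      rw [← h1]
      refine hT.hasInjectiveDimensionLT_X₁ _ ?_ ?_
      · rw [h3]
        exact ih (i + 1) (by omega) (by omega)
      · rw [h2]
        have := hP i (by omega) (by omega)
        exact hasInjectiveDimensionLT_of_ge _ 1 _ (by omega)
  obtain ⟨T, hT, h1, h2, h3⟩ := kernelSES S hS 1 (by omega)
  obtain ⟨T', hT', h1', h2', h3'⟩ := kernelSES S hS 0 (by omega)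
  have hz : IsZero T.X₁ := by
    rw [h1]
    change IsZero (kernel (S.map' (0 + 1) (0 + 2)))
    rw [← h3']
    have := hT'.epi_g
    refine IsZero.of_epi T'.g ?_
    rw [h2']
    exact h0
  have := hT.isIso_g_iff.2 hz
  have h4 : HasInjectiveDimensionLT T.X₃ (n + 1) := by
    rw [h3]
    exact key n 2 (by omega) le_rfl
  have h5 : HasInjectiveDimensionLT T.X₂ (n + 1) :=
    hasInjectiveDimensionLT_of_iso (asIso T.g).symm _
  rw [h2] at h5
  exact h5

end Arrows


section Prod

variable {A : Type u} [Category.{v} A] [Abelian A] [HasDerivedCategory.{w} A]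

lemma exists_hom_of_isKInjective {K P : CochainComplex A ℤ} [P.IsKInjective]
    (f : Q.obj K ⟶ Q.obj P) : ∃ g : K ⟶ P, Q.map g = f := by
  obtain ⟨g, hg⟩ := (CochainComplex.IsKInjective.Qh_map_bijective
    ((HomotopyCategory.quotient _ _).obj K) P).surjective
    ((quotientCompQhIso A).hom.app K ≫ f ≫ (quotientCompQhIso A).inv.app P)
  obtain ⟨g, rfl⟩ := (HomotopyCategory.quotient A (.up ℤ)).map_surjective g
  refine ⟨g, ?_⟩
  have h1 := (quotientCompQhIso A).hom.naturality g
  rw [← cancel_epi ((quotientCompQhIso A).hom.app K), ← h1]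
  have h2 : (HomotopyCategory.quotient A (.up ℤ) ⋙ Qh).map g = _ := hg
  rw [h2]
  simp

lemma homotopy_of_isKInjective {K P : CochainComplex A ℤ} [P.IsKInjective]
    (g : K ⟶ P) (hg : Q.map g = 0) : Nonempty (Homotopy g 0) := by
  refine ⟨HomotopyCategory.homotopyOfEq _ _ ?_⟩
  apply (CochainComplex.IsKInjective.Qh_map_bijective
    ((HomotopyCategory.quotient _ _).obj K) P).injective
  have h1 := (quotientCompQhIso A).hom.naturality g
  rw [hg, comp_zero] at h1
  rw [Functor.map_zero, Functor.map_zero]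
  rw [← cancel_mono ((quotientCompQhIso A).hom.app P), zero_comp]
  exact h1

lemma homotopy_assemble {ι : Type*} {K P J : CochainComplex A ℤ} (p : ι → (P ⟶ J))
    (hlift : ∀ (i j : ℤ) (φ : ι → (K.X i ⟶ J.X j)),
      ∃ ψ : K.X i ⟶ P.X j, ∀ a, ψ ≫ (p a).f j = φ a)
    (hext : ∀ (i j : ℤ) (f g : K.X i ⟶ P.X j),
      (∀ a, f ≫ (p a).f j = g ≫ (p a).f j) → f = g)
    (g : K ⟶ P) (hp : ∀ a, Nonempty (Homotopy (g ≫ p a) 0)) : Nonempty (Homotopy g 0) := by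
  let H (a : ι) : Homotopy (g ≫ p a) 0 := (hp a).some
  choose h hh using fun (i j : ℤ) => hlift i j (fun a => (H a).hom i j)
  refine ⟨{ hom := h, zero := fun i j hij => ?_, comm := fun i => ?_ }⟩
  · apply hext
    intro a
    rw [hh, (H a).zero i j hij, zero_comp]
  · apply hext
    intro a
    have h1 := (H a).comm i
    rw [HomologicalComplex.comp_f] at h1
    rw [h1]
    simp only [HomologicalComplex.zero_f, add_zero, Preadditive.add_comp]
    congr 1
    · rw [dNext_eq _ (show (ComplexShape.up ℤ).Rel i (i + 1) from rfl),
        dNext_eq _ (show (ComplexShape.up ℤ).Rel i (i + 1) from rfl), assoc, hh]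
    · rw [prevD_eq _ (show (ComplexShape.up ℤ).Rel (i - 1) i by simp),
        prevD_eq _ (show (ComplexShape.up ℤ).Rel (i - 1) i by simp), assoc,
        ← (p a).comm, ← assoc, hh]

variable (F : A ⥤ A) [F.Additive] [PreservesFiniteLimits F] [PreservesFiniteColimits F]
  {ι : Type*} (π : ι → (F ⟶ 𝟭 A))

lemma injective_of_lift
    (hlift : ∀ {X M : A} (φ : ι → (X ⟶ M)), ∃ ψ : X ⟶ F.obj M, ∀ a, ψ ≫ (π a).app M = φ a)
    (hext : ∀ {X M : A} (f g : X ⟶ F.obj M),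
      (∀ a, f ≫ (π a).app M = g ≫ (π a).app M) → f = g)
    (I : A) [Injective I] : Injective (F.obj I) where
  factors {X Y} g f _ := by
    obtain ⟨ψ, hψ⟩ := hlift (M := I) (fun a => Injective.factorThru (g ≫ (π a).app I) f)
    refine ⟨ψ, hext _ _ (fun a => ?_)⟩
    rw [assoc, hψ]
    exact Injective.comp_factorThru _ _

lemma van_of_lift [EnoughInjectives A]
    (hlift : ∀ {X M : A} (φ : ι → (X ⟶ M)), ∃ ψ : X ⟶ F.obj M, ∀ a, ψ ≫ (π a).app M = φ a)
    (hext : ∀ {X M : A} (f g : X ⟶ F.obj M),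
      (∀ a, f ≫ (π a).app M = g ≫ (π a).app M) → f = g)
    (W : DerivedCategory A) (C : A) (hW : ∀ f : W ⟶ (singleFunctor A 0).obj C, f = 0)
    (f : W ⟶ (singleFunctor A 0).obj (F.obj C)) : f = 0 := by
  obtain ⟨K, ⟨e⟩⟩ : ∃ K : CochainComplex A ℤ, Nonempty (Q.obj K ≅ W) :=
    ⟨Q.objPreimage W, ⟨Q.objObjPreimageIso W⟩⟩
  let R : InjectiveResolution C := injectiveResolution C
  let J := R.cochainComplex
  have : J.IsKInjective := CochainComplex.isKInjective_of_injective _ 0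
  let P : CochainComplex A ℤ := (F.mapHomologicalComplex (.up ℤ)).obj J
  have : P.IsStrictlyGE 0 := by
    rw [CochainComplex.isStrictlyGE_iff]
    intro i hi
    exact F.map_isZero (J.isZero_of_isStrictlyGE 0 i hi)
  have (n : ℤ) : Injective (P.X n) := injective_of_lift F π hlift hext (J.X n)
  have : P.IsKInjective := CochainComplex.isKInjective_of_injective _ 0
  have q : QuasiIso ((F.mapHomologicalComplex (.up ℤ)).map R.ι') := inferInstance
  have hq := (isIso_Q_map_iff_quasiIso A _).2 q
  have hq' : IsIso (Q.map R.ι') := (isIso_Q_map_iff_quasiIso A _).2 inferInstance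
  let e₁ : (singleFunctor A 0).obj (F.obj C) ≅ Q.obj P :=
    Q.mapIso ((HomologicalComplex.singleMapHomologicalComplex F (.up ℤ) 0).app C).symm ≪≫
      @asIso _ _ _ _ _ hq
  let e₂ : (singleFunctor A 0).obj C ≅ Q.obj J := @asIso _ _ _ _ _ hq'
  obtain ⟨g, hg⟩ := exists_hom_of_isKInjective (e.hom ≫ f ≫ e₁.hom)
  suffices h : Q.map g = 0 by
    rw [← cancel_epi e.hom, ← cancel_mono e₁.hom, assoc, ← hg, h, comp_zero, zero_comp]
  let p (a : ι) : P ⟶ J :=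
    { f := fun i => (π a).app (J.X i)
      comm' := fun i j _ => ((π a).naturality (J.d i j)).symm }
  have hp (a : ι) : Nonempty (Homotopy (g ≫ p a) 0) := by
    apply homotopy_of_isKInjective
    have := hW (e.inv ≫ Q.map (g ≫ p a) ≫ e₂.inv)
    rw [← cancel_epi e.inv, ← cancel_mono e₂.inv, assoc, this, comp_zero, zero_comp]
  obtain ⟨HH⟩ := homotopy_assemble p (fun i j φ => hlift (X := K.X i) (M := J.X j) φ)
    (fun i j u v huv => hext (X := K.X i) (M := J.X j) u v huv) g hp
  rw [Q_map_eq_of_homotopy A HH, Functor.map_zero]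

end Prod

section Mod

variable {R : Type v} [Ring R] [HasDerivedCategory.{w} (ModuleCat.{v} R)]

lemma van_prod (ι : Type v) (C : ModuleCat.{v} R) (W : DerivedCategory (ModuleCat.{v} R))
    (hW : ∀ f : W ⟶ (singleFunctor (ModuleCat.{v} R) 0).obj C, f = 0)
    (f : W ⟶ (singleFunctor (ModuleCat.{v} R) 0).obj (∏ᶜ (fun _ : ι => C))) : f = 0 := by
  let F : ModuleCat.{v} R ⥤ ModuleCat.{v} R := Functor.const (Discrete ι) ⋙ lim
  have : PreservesFiniteLimits F := inferInstance
  have : PreservesFiniteColimits F := inferInstance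
  have : F.Additive := Functor.additive_of_preserves_binary_products _
  let π (a : ι) : F ⟶ 𝟭 _ :=
    { app := fun M => limit.π ((Functor.const (Discrete ι)).obj M) ⟨a⟩
      naturality := fun M N f => by simp [F] }
  let e : (∏ᶜ (fun _ : ι => C)) ≅ F.obj C :=
    HasLimit.isoOfNatIso (Discrete.natIso (fun _ => Iso.refl _))
  have h := van_of_lift F π
    (fun {X M} φ => ⟨limit.lift ((Functor.const (Discrete ι)).obj M)
      ⟨X, Discrete.natTrans (fun a => φ a.as)⟩, fun a => by simp [π]⟩)
    (fun {X M} f g hfg => limit.hom_ext (fun ⟨a⟩ => hfg a)) W C hW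
    (f ≫ (singleFunctor (ModuleCat.{v} R) 0).map e.hom)
  rw [← cancel_mono ((singleFunctor (ModuleCat.{v} R) 0).map e.hom), h, zero_comp]

lemma van_inProdOf {C N : ModuleCat.{v} R} (hN : InProdOf C N)
    {W : DerivedCategory (ModuleCat.{v} R)} {j : ℤ} (h : Van W C j) : Van W N j := by
  obtain ⟨ι, s, r, hsr⟩ := hN
  refine Van.retract (Van.target ?_) s r hsr
  have h1 : Van (W⟦-j⟧) C 0 := h.source_shift (by simp)
  let z := (shiftFunctorZero (DerivedCategory (ModuleCat.{v} R)) ℤ)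
  intro f
  have h2 := van_prod ι C (W⟦-j⟧) (fun f => by
    exact (cancel_mono (z.inv.app _)).1 ((h1 (f ≫ z.inv.app _)).trans zero_comp.symm)) (f ≫ z.hom.app _)
  exact (cancel_mono (z.hom.app _)).1 (h2.trans zero_comp.symm)

end Mod

end Aux16

theorem statement16 (R : Type v) [Ring R] [HasExt.{e} (ModuleCat.{v} R)]
    [HasDerivedCategory.{w} (ModuleCat.{v} R)]
    (C : ModuleCat.{v} R) (n : ℕ) (hC : IsBigCotilting C) (hdim : InjDimLE C n)
    (X : DerivedCategory (ModuleCat.{v} R)) (hX : InHeart C X) :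
    ∀ i : ℤ, (i < 0 ∨ (n : ℤ) < i) →
      IsZero ((homologyFunctor (ModuleCat.{v} R) i).obj X) := by
  obtain ⟨S', hS', h0', hl', ⟨e⟩, hI⟩ := hdim
  have hd0 := Aux16.injDim_of_arrows n S' hS' h0' hl' hI
  have hd : HasInjectiveDimensionLT C (n + 1) := hasInjectiveDimensionLT_of_iso e _
  obtain ⟨_, -, -, r, S, hS, h0, hl, hP, hinj, hcos⟩ := hC
  have hres := Aux16.finRes_of_arrows (InProdOf C) r S hS h0 hl hP
  have hV : ∀ N, InProdOf C N → ∀ k : ℤ, k ≠ 0 → Aux16.Van X N k := fun N hN k hk =>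
    Aux16.van_inProdOf hN (hX k hk)
  intro i hi
  refine Aux16.isZero_homology hcos X i (-i) (by simp) ?_
  rcases hi with hi | hi
  · exact hres.van X (-i) (fun N hN k hk => hV N hN k (by lia))
  · intro f
    have hW : ∀ N, Aux16.FinRes (InProdOf C) N → Aux16.Van
        (((singleFunctor (ModuleCat.{v} R) 0).obj (S.obj ⟨r + 2, by omega⟩))⟦-i⟧) N 0 := by
      intro N hN
      refine Aux16.Van.source_shift (a := i) ?_ (by simp)
      exact hN.van _ i (fun N' hN' k hk => Aux16.van_inProdOf hN'
        (Aux16.van_of_injDim (n := n + 1) _ k (by push_cast; lia)))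
    have := Aux16.FinRes.comp_eq_zero f (fun N hN j hj => hV N hN j (by lia)) hW i.toNat (-i)
      (by lia) _ hres (𝟙 _)
    rwa [comp_id] at this
end

section
/- Let R be a ring, C a big cotilting right R-module, and G the tilted abelian category (the heart of the cotilting t-structure on D(R)). Then C, viewed as an object of G, is an injective cogenerator of G; moreover, an object W ∈ G is injective in G if and only if W is, up to isomorphism, a direct summand of a product of copies of C. -/
/-!
Statement 18: Let `R` be a ring, `C` a big cotilting module and `G` the heart of the cotilting
t-structure on `D(R)`.  Then `C` (viewed in `G`) is an injective cogenerator of `G`, and an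
object `W ∈ G` is injective in `G` iff it is a direct summand of a product of copies of `C`.
(Injectivity is expressed by the lifting property against monomorphisms of `G`, and
cogeneration by the coseparating property, all inside the full subcategory `G ⊆ D(R)`.)
-/

universe e w v u

open CategoryTheory Category Limits

namespace PaperStmt

variable {R : Type v} [Ring R]

variable [HasDerivedCategory.{w} (ModuleCat.{v} R)]

/-- A morphism between objects of the heart that is a monomorphism in the heart. -/
def HeartMono (C : ModuleCat.{v} R) {X Y : DerivedCategory (ModuleCat.{v} R)}
    (f : X ⟶ Y) : Prop :=
  InHeart C X ∧ InHeart C Y ∧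
    ∀ (Z : DerivedCategory (ModuleCat.{v} R)), InHeart C Z →
      ∀ g h : Z ⟶ X, g ≫ f = h ≫ f → g = h

/-- `W` is an injective object of the heart: it belongs to the heart, and morphisms into `W`
extend along monomorphisms of the heart. -/
def HeartInjective (C : ModuleCat.{v} R) (W : DerivedCategory (ModuleCat.{v} R)) : Prop :=
  InHeart C W ∧
    ∀ ⦃X Y : DerivedCategory (ModuleCat.{v} R)⦄ (f : X ⟶ Y), HeartMono C f →
      ∀ g : X ⟶ W, ∃ h : Y ⟶ W, f ≫ h = g

/-- `W` is a cogenerator (coseparator) of the heart. -/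
def HeartCogen (C : ModuleCat.{v} R) (W : DerivedCategory (ModuleCat.{v} R)) : Prop :=
  ∀ X Y : DerivedCategory (ModuleCat.{v} R), InHeart C X → InHeart C Y →
    ∀ f g : X ⟶ Y, (∀ h : Y ⟶ W, f ≫ h = g ≫ h) → f = g

end PaperStmt

namespace Cot
open CategoryTheory Category Limits DerivedCategory Pretriangulated
section
variable {A : Type u} [Category.{v} A] [Abelian A] [HasDerivedCategory.{w} A]

lemma exists_Q_map {K : CochainComplex A ℤ} {L : CochainComplex A ℤ} [L.IsKInjective]
    (h : Q.obj K ⟶ Q.obj L) : ∃ φ : K ⟶ L, h = Q.map φ := by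
  obtain ⟨g, hg⟩ := (CochainComplex.IsKInjective.Qh_map_bijective
    ((HomotopyCategory.quotient _ _).obj K) L).surjective
    ((quotientCompQhIso A).hom.app K ≫ h ≫ (quotientCompQhIso A).inv.app L)
  obtain ⟨φ, rfl⟩ := (HomotopyCategory.quotient _ _).map_surjective g
  refine ⟨φ, ?_⟩
  have := (quotientCompQhIso A).hom.naturality φ
  simp only [Functor.comp_map] at this
  rw [hg] at this
  simp at this
  exact this

lemma Q_map_eq_zero {K L : CochainComplex A ℤ} (φ : K ⟶ L) (h : Homotopy φ 0) :
    Q.map φ = 0 := by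
  have h2 := HomotopyCategory.eq_of_homotopy _ _ h
  have := (quotientCompQhIso A).hom.naturality φ
  simp only [Functor.comp_map] at this
  rw [h2, Functor.map_zero, Functor.map_zero, zero_comp] at this
  rw [← cancel_epi ((quotientCompQhIso A).hom.app K), ← this, comp_zero]

set_option linter.unusedSectionVars false

/-- the stalk complex in degree `0`. -/
noncomputable abbrev stalk (J : A) : CochainComplex A ℤ :=
  (HomologicalComplex.single A (ComplexShape.up ℤ) 0).obj J

lemma stalk_isZero (J : A) (i : ℤ) (hi : i ≠ 0) : IsZero ((stalk J).X i) :=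
  HomologicalComplex.isZero_single_obj_X (ComplexShape.up ℤ) 0 J i hi

lemma stalk_injective (J : A) [Injective J] : Injective ((stalk J).X 0) :=
  Injective.of_iso (HomologicalComplex.singleObjXSelf (ComplexShape.up ℤ) 0 J).symm ‹_›

instance stalk_isKInjective (J : A) [Injective J] : (stalk J).IsKInjective := by
  have : ∀ i, Injective ((stalk J).X i) := by
    intro i
    by_cases hi : i = 0
    · subst hi
      exact stalk_injective J
    · exact (stalk_isZero J i hi).injective
  have : CochainComplex.IsStrictlyGE (stalk J) 0 :=
    inferInstanceAs (CochainComplex.IsStrictlyGE ((CochainComplex.singleFunctor A 0).obj J) 0)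
  exact CochainComplex.isKInjective_of_injective _ 0

/-- the stalk complex as an object of the derived category. -/
noncomputable def sIso (J : A) : (singleFunctor A 0).obj J ≅ Q.obj (stalk J) := Iso.refl _

/-- homology of `Q.obj K`. -/
noncomputable def hIso (K : CochainComplex A ℤ) :
    (homologyFunctor A 0).obj (Q.obj K) ≅ K.homology 0 := (homologyFunctorFactors A 0).app K

lemma hIso_nat {K L : CochainComplex A ℤ} (φ : K ⟶ L) :
    (homologyFunctor A 0).map (Q.map φ) ≫ (hIso L).hom =
      (hIso K).hom ≫ HomologicalComplex.homologyMap φ 0 :=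
  homologyFunctorFactors_hom_naturality φ 0

lemma hom_eq_zero_aux {K : CochainComplex A ℤ} {J : A} [Injective J]
    (φ : K ⟶ stalk J)
    (hφ : HomologicalComplex.homologyMap φ 0 = 0) : Nonempty (Homotopy φ 0) := by
  have hJ := stalk_injective J
  have h1 : K.iCycles 0 ≫ φ.f 0 = 0 := by
    have : HomologicalComplex.cyclesMap φ 0 = 0 := by
      have h2 : HomologicalComplex.cyclesMap φ 0 ≫ (stalk J).homologyπ 0 = 0 := by
        rw [← HomologicalComplex.homologyπ_naturality, hφ, comp_zero]
      have : IsIso ((stalk J).homologyπ 0) :=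
        (stalk J).isIso_homologyπ (-1) 0 (by simp)
          ((stalk_isZero J (-1) (by simp)).eq_of_src _ _)
      rwa [← cancel_mono ((stalk J).homologyπ 0), zero_comp]
    rw [← HomologicalComplex.cyclesMap_i, this, zero_comp]
  have hex : (ShortComplex.mk (K.iCycles 0) (K.d 0 1) (by simp)).Exact :=
    ShortComplex.exact_of_f_is_kernel _ (K.cyclesIsKernel 0 1 (by simp))
  let ψ : K.X 1 ⟶ (stalk J).X 0 := hex.descToInjective (φ.f 0) h1
  have hψ : K.d 0 1 ≫ ψ = φ.f 0 := hex.comp_descToInjective _ _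
  let h : ∀ i j, (ComplexShape.up ℤ).Rel j i → (K.X i ⟶ (stalk J).X j) := fun i j hij =>
    if hj : j = 0 then eqToHom (by simp at hij; subst hj; subst hij; simp) ≫ ψ ≫
      eqToHom (by rw [hj]) else 0
  have : φ = Homotopy.nullHomotopicMap' h := by
    apply HomologicalComplex.hom_ext
    intro i
    by_cases hi : i = 0
    · subst hi
      rw [Homotopy.nullHomotopicMap'_f (k₂ := -1) (k₁ := 0) (k₀ := 1) (by simp) (by simp)]
      simp [h, hψ]
    · exact (stalk_isZero J i hi).eq_of_tgt _ _
  rw [this]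
  exact ⟨Homotopy.nullHomotopy' h⟩

lemma hom_eq_zero {X : DerivedCategory A} {J : A} [Injective J]
    (f : X ⟶ (singleFunctor A 0).obj J) (hf : (homologyFunctor A 0).map f = 0) : f = 0 := by
  let e := Q.objObjPreimageIso X
  obtain ⟨φ, hφ⟩ := exists_Q_map (e.hom ≫ f ≫ (sIso J).hom)
  rw [← cancel_epi e.hom, comp_zero, ← cancel_mono (sIso J).hom, assoc, zero_comp, hφ]
  obtain ⟨h⟩ := hom_eq_zero_aux φ (by
    have := hIso_nat φ
    rw [← hφ, Functor.map_comp, Functor.map_comp, hf, zero_comp, comp_zero, zero_comp] at this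
    rw [← cancel_epi (hIso _).hom, ← this, comp_zero])
  exact Q_map_eq_zero φ h

lemma exists_hom {X : DerivedCategory A} {J : A} [Injective J]
    (α : (homologyFunctor A 0).obj X ⟶ (homologyFunctor A 0).obj ((singleFunctor A 0).obj J)) :
    ∃ f : X ⟶ (singleFunctor A 0).obj J, (homologyFunctor A 0).map f = α := by
  obtain ⟨K, ⟨e⟩⟩ : ∃ K, Nonempty (Q.obj K ≅ X) := ⟨_, ⟨Q.objObjPreimageIso X⟩⟩
  have hJ := stalk_injective J
  let β : K.homology 0 ⟶ (stalk J).homology 0 :=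
    (hIso K).inv ≫ (homologyFunctor A 0).map e.hom ≫ α ≫
      (homologyFunctor A 0).map (sIso J).hom ≫ (hIso _).hom
  have i1 : IsIso ((stalk J).homologyι 0) :=
        (stalk J).isIso_homologyι 0 1 (by simp) ((stalk_isZero J 1 (by simp)).eq_of_tgt _ _)
  have i2 : IsIso ((stalk J).pOpcycles 0) :=
        (stalk J).isIso_pOpcycles (-1) 0 (by simp)
          ((stalk_isZero J (-1) (by simp)).eq_of_src _ _)
  let γ : K.opcycles 0 ⟶ (stalk J).X 0 :=
    Injective.factorThru (β ≫ (stalk J).homologyι 0 ≫ inv ((stalk J).pOpcycles 0))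
      (K.homologyι 0)
  have hγ : K.homologyι 0 ≫ γ = (β ≫ (stalk J).homologyι 0 ≫ inv ((stalk J).pOpcycles 0)) :=
    Injective.comp_factorThru _ _
  let φ : K ⟶ (stalk J) := HomologicalComplex.mkHomToSingle (K.pOpcycles 0 ≫ γ ≫
    (HomologicalComplex.singleObjXSelf (ComplexShape.up ℤ) 0 J).hom) (by simp)
  have hφ0 : φ.f 0 = K.pOpcycles 0 ≫ γ := by
    simp only [φ, HomologicalComplex.mkHomToSingle_f, assoc]
    rw [Iso.hom_inv_id, comp_id]
  have hφ : HomologicalComplex.homologyMap φ 0 = β := by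
    rw [← cancel_mono ((stalk J).homologyι 0), HomologicalComplex.homologyι_naturality]
    have : HomologicalComplex.opcyclesMap φ 0 = γ ≫ (stalk J).pOpcycles 0 := by
      rw [← cancel_epi (K.pOpcycles 0), HomologicalComplex.p_opcyclesMap, hφ0, assoc]
    rw [this, reassoc_of% hγ]
    simp
  refine ⟨e.inv ≫ Q.map φ ≫ (sIso J).inv, ?_⟩
  have := hIso_nat φ
  rw [hφ] at this
  simp only [β, Iso.hom_inv_id_assoc] at this
  rw [← assoc, ← assoc, cancel_mono] at this
  rw [Functor.map_comp, Functor.map_comp, this, assoc, assoc, ← Functor.map_comp_assoc,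
    ← Functor.map_comp, Iso.inv_hom_id, Iso.hom_inv_id, CategoryTheory.Functor.map_id,
    CategoryTheory.Functor.map_id,
    id_comp, comp_id]

end
end Cot

namespace Cot
open CategoryTheory Category Limits DerivedCategory Pretriangulated
section
set_option linter.unusedSectionVars false
variable {A : Type u} [Category.{v} A] [Abelian A] [HasDerivedCategory.{w} A]

lemma ses_lift₁ {S : ShortComplex A} (hS : S.ShortExact) {X : DerivedCategory A}
    (x : X ⟶ (singleFunctor A 0).obj S.X₁) (hx : x ≫ (singleFunctor A 0).map S.f = 0) :
    ∃ y : X⟦(1 : ℤ)⟧ ⟶ (singleFunctor A 0).obj S.X₃, x⟦(1 : ℤ)⟧' = y ≫ hS.singleδ :=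
  Triangle.coyoneda_exact₁ _ hS.singleTriangle_distinguished (x⟦(1 : ℤ)⟧') (by
    change x⟦(1 : ℤ)⟧' ≫ ((singleFunctor A 0).map S.f)⟦(1 : ℤ)⟧' = 0
    rw [← Functor.map_comp, hx, Functor.map_zero])

lemma ses_lift₂ {S : ShortComplex A} (hS : S.ShortExact) {X : DerivedCategory A}
    (x : X ⟶ (singleFunctor A 0).obj S.X₂) (hx : x ≫ (singleFunctor A 0).map S.g = 0) :
    ∃ y : X ⟶ (singleFunctor A 0).obj S.X₁, x = y ≫ (singleFunctor A 0).map S.f :=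
  Triangle.coyoneda_exact₂ _ hS.singleTriangle_distinguished x hx

lemma ses_lift₃ {S : ShortComplex A} (hS : S.ShortExact) {X : DerivedCategory A}
    (x : X ⟶ (singleFunctor A 0).obj S.X₃) (hx : x ≫ hS.singleδ = 0) :
    ∃ y : X ⟶ (singleFunctor A 0).obj S.X₂, x = y ≫ (singleFunctor A 0).map S.g :=
  Triangle.coyoneda_exact₃ _ hS.singleTriangle_distinguished x hx

lemma ses_g_δ {S : ShortComplex A} (hS : S.ShortExact) :
    (singleFunctor A 0).map S.g ≫ hS.singleδ = 0 :=
  comp_distTriang_mor_zero₂₃ _ hS.singleTriangle_distinguished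

lemma ses_δ_f {S : ShortComplex A} (hS : S.ShortExact) :
    hS.singleδ ≫ ((singleFunctor A 0).map S.f)⟦(1 : ℤ)⟧' = 0 :=
  comp_distTriang_mor_zero₃₁ _ hS.singleTriangle_distinguished

lemma ses_δ_nat {S S' : ShortComplex A} (hS : S.ShortExact) (hS' : S'.ShortExact) (φ : S ⟶ S') :
    hS.singleδ ≫ ((singleFunctor A 0).map φ.τ₁)⟦(1 : ℤ)⟧' =
      (singleFunctor A 0).map φ.τ₃ ≫ hS'.singleδ :=
  (ShortComplex.ShortExact.singleTriangle.map hS hS' φ).comm₃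

lemma shift_inj {X Y : DerivedCategory A} {f g : X ⟶ Y} (i : ℤ) (h : f⟦i⟧' = g⟦i⟧') : f = g :=
  (shiftFunctor (DerivedCategory A) i).map_injective h

lemma homology_shift_zero {X : DerivedCategory A} (i j k : ℤ) (hk : j + i = k)
    (h : IsZero ((homologyFunctor A k).obj X)) : IsZero ((homologyFunctor A i).obj (X⟦j⟧)) :=
  h.of_iso (((homologyFunctor A 0).shiftIso j i k hk).app X)

variable [EnoughInjectives A]

/-- embedding into an injective. -/
noncomputable abbrev injSes (M : A) : ShortComplex A :=
  ShortComplex.mk (Injective.ι M) (cokernel.π (Injective.ι M)) (by simp)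

lemma injSes_shortExact (M : A) : (injSes M).ShortExact :=
  { exact := ShortComplex.exact_cokernel _ }

/-- induction principle along injective dimension. -/
lemma inj_induction (P : A → ℕ → Prop) (h0 : ∀ J, Injective J → P J 0)
    (h1 : ∀ M n, P (Injective.under M) 0 → P (cokernel (Injective.ι M)) n → P M (n + 1))
    (M : A) (n : ℕ) (hM : HasInjectiveDimensionLT M (n + 1)) : P M n := by
  induction n generalizing M with
  | zero => exact h0 _ (injective_iff_hasInjectiveDimensionLT_one.2 hM)
  | succ n ih =>
    refine h1 _ _ (h0 _ inferInstance) (ih _ ?_)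
    exact ((injSes_shortExact M).hasInjectiveDimensionLT_X₃_iff n
      (inferInstanceAs (Injective (Injective.under M)))).2 hM

lemma hom_zero_of_homology (M : A) (n : ℕ) (hM : HasInjectiveDimensionLT M (n + 1)) :
    ∀ X : DerivedCategory A, (∀ j : ℤ, 0 ≤ j → j ≤ n → IsZero ((homologyFunctor A j).obj X)) →
      ∀ f : X ⟶ (singleFunctor A 0).obj M, f = 0 := by
  refine inj_induction (fun M n => ∀ X : DerivedCategory A,
    (∀ j : ℤ, 0 ≤ j → j ≤ n → IsZero ((homologyFunctor A j).obj X)) →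
      ∀ f : X ⟶ (singleFunctor A 0).obj M, f = 0) ?_ ?_ M n hM
  · intro J hJ X hX f
    exact hom_eq_zero f ((hX 0 le_rfl le_rfl).eq_of_src _ _)
  · intro M n hJ hM X hX f
    obtain ⟨y, hy⟩ := ses_lift₁ (injSes_shortExact M) f
      (hJ X (fun j h0 h1 => hX j h0 (by push_cast at *; lia)) _)
    apply shift_inj 1
    have : y = 0 := hM _ (fun j h0 h1 => homology_shift_zero j 1 (1 + j) rfl
      (hX _ (by lia) (by push_cast; lia))) y
    rw [hy, this, zero_comp, Functor.map_zero]

lemma small_hom [LocallySmall.{v} A] (M : A) (n : ℕ) (hM : HasInjectiveDimensionLT M (n + 1)) :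
    ∀ X : DerivedCategory A, Small.{v} (X ⟶ (singleFunctor A 0).obj M) := by
  refine inj_induction (fun M n => ∀ X : DerivedCategory A,
    Small.{v} (X ⟶ (singleFunctor A 0).obj M)) ?_ ?_ M n hM
  · intro J hJ X
    refine small_of_injective (β := ((homologyFunctor A 0).obj X ⟶
      (homologyFunctor A 0).obj ((singleFunctor A 0).obj J)))
      (f := fun f => (homologyFunctor A 0).map f) ?_
    intro f g h
    rw [← sub_eq_zero]
    apply hom_eq_zero
    rw [Functor.map_sub, sub_eq_zero]
    exact h
  · intro M n hJ hM X
    have hJX := hJ X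
    have hMX := hM (X⟦(1 : ℤ)⟧)
    let j := (singleFunctor A 0).map (injSes M).f
    have h1 : ∀ x : X ⟶ (singleFunctor A 0).obj M,
      ∃ b : X ⟶ (singleFunctor A 0).obj M, b ≫ j = x ≫ j ∧
        ∀ x', x' ≫ j = x ≫ j → True := fun x => ⟨x, rfl, fun _ _ => trivial⟩
    let b : (X ⟶ (singleFunctor A 0).obj (injSes M).X₂) → (X ⟶ (singleFunctor A 0).obj M) :=
      fun c => Function.invFun (fun x => x ≫ j) c
    have hb : ∀ x, b (x ≫ j) ≫ j = x ≫ j := fun x =>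
      Function.invFun_eq (f := fun x : X ⟶ (singleFunctor A 0).obj M => x ≫ j) ⟨x, rfl⟩
    have h2 : ∀ x : X ⟶ (singleFunctor A 0).obj M,
        ∃ y : X⟦(1 : ℤ)⟧ ⟶ (singleFunctor A 0).obj (injSes M).X₃,
          (x - b (x ≫ j))⟦(1 : ℤ)⟧' = y ≫ (injSes_shortExact M).singleδ := fun x =>
      ses_lift₁ (injSes_shortExact M) _ (by
        have := hb x
        rw [← sub_eq_zero, ← Preadditive.sub_comp, ← neg_eq_zero, ← Preadditive.neg_comp, neg_sub]
          at this
        exact this)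
    choose y hy using h2
    refine small_of_injective (β := (X ⟶ (singleFunctor A 0).obj (Injective.under M)) ×
      (X⟦(1 : ℤ)⟧ ⟶ (singleFunctor A 0).obj (cokernel (Injective.ι M))))
      (f := fun x => (x ≫ j, y x)) ?_
    intro x x' h
    simp only [Prod.mk.injEq] at h
    have e1 := hy x
    have e2 := hy x'
    rw [h.2, ← e2] at e1
    have := shift_inj 1 e1
    rw [h.1] at this
    exact sub_left_injective this

end

section
set_option linter.unusedSectionVars false
variable {A : Type u} [Category.{v} A] [Abelian A]

/-- product of a short complex -/
noncomputable abbrev prodSes [HasProducts.{v} A] (ι : Type v) (S : ShortComplex A) :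
    ShortComplex A where
  X₁ := ∏ᶜ fun _ : ι => S.X₁
  X₂ := ∏ᶜ fun _ : ι => S.X₂
  X₃ := ∏ᶜ fun _ : ι => S.X₃
  f := Limits.Pi.map (fun _ : ι => S.f)
  g := Limits.Pi.map (fun _ : ι => S.g)
  zero := by
    apply Pi.hom_ext
    intro b
    simp

lemma prodSes_shortExact [HasProducts.{v} A] [AB4Star A] (ι : Type v) (S : ShortComplex A)
    (hS : S.ShortExact) : (prodSes ι S).ShortExact where
  exact := by
    apply ShortComplex.exact_of_f_is_kernel
    have := hS.mono_f
    have : Mono (prodSes ι S).f := inferInstanceAs (Mono (Limits.Pi.map (fun _ : ι => S.f)))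
    refine KernelFork.IsLimit.ofι' _ _ (fun {W} k hk => ⟨Pi.lift (f := fun _ : ι => S.X₁) fun b => hS.exact.lift (k ≫ Pi.π (fun _ : ι => S.X₂) b) ?_, ?_⟩)
    · have := congrArg (fun t => t ≫ Pi.π (fun _ : ι => S.X₃) b) hk
      simpa using this
    · apply Pi.hom_ext
      intro b
      simp
  mono_f := by
    have := hS.mono_f
    exact inferInstanceAs (Mono (Limits.Pi.map (fun _ : ι => S.f)))
  epi_g := by
    have := hS.epi_g
    have : ∀ j : Discrete ι, Epi ((Discrete.natTrans (F := Discrete.functor (fun _ : ι => S.X₂))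
        (G := Discrete.functor (fun _ : ι => S.X₃)) (fun _ => S.g)).app j) := fun _ => hS.epi_g
    have : Epi (Discrete.natTrans (F := Discrete.functor (fun _ : ι => S.X₂))
        (G := Discrete.functor (fun _ : ι => S.X₃)) (fun _ => S.g)) := NatTrans.epi_of_epi_app _
    exact inferInstanceAs (Epi (lim.map (Discrete.natTrans
      (F := Discrete.functor (fun _ : ι => S.X₂))
        (G := Discrete.functor (fun _ : ι => S.X₃)) (fun _ => S.g))))

/-- projection of product ses -/
noncomputable def prodSesπ [HasProducts.{v} A] (ι : Type v) (S : ShortComplex A) (a : ι) :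
    prodSes ι S ⟶ S where
  τ₁ := Pi.π (fun _ : ι => S.X₁) a
  τ₂ := Pi.π (fun _ : ι => S.X₂) a
  τ₃ := Pi.π (fun _ : ι => S.X₃) a

variable [HasDerivedCategory.{w} A] [EnoughInjectives A] [HasProducts.{v} A] [AB4Star A]

/-- The single functor commutes with powers of `M`. -/
def ProdGood (M : A) : Prop := ∀ (ι : Type v) (X : DerivedCategory A),
  (∀ x : X ⟶ (singleFunctor A 0).obj (∏ᶜ fun _ : ι => M),
    (∀ a, x ≫ (singleFunctor A 0).map (Pi.π _ a) = 0) → x = 0) ∧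
  (∀ f : ι → (X ⟶ (singleFunctor A 0).obj M),
    ∃ x : X ⟶ (singleFunctor A 0).obj (∏ᶜ fun _ : ι => M),
      ∀ a, x ≫ (singleFunctor A 0).map (Pi.π _ a) = f a)

lemma prodGood_injective (J : A) [Injective J] : ProdGood J := by
  intro ι X
  let e := singleFunctorCompHomologyFunctorIso A 0
  have nat : ∀ a, (homologyFunctor A 0).map ((singleFunctor A 0).map (Pi.π (fun _ : ι => J) a)) =
      e.hom.app (∏ᶜ fun _ : ι => J) ≫ Pi.π (fun _ : ι => J) a ≫ e.inv.app J := by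
    intro a
    have := NatIso.naturality_2 e (Pi.π (fun _ : ι => J) a)
    exact this.symm
  constructor
  · intro x hx
    apply hom_eq_zero
    rw [← cancel_mono (e.hom.app _), zero_comp]
    apply Pi.hom_ext
    intro a
    have := congrArg (homologyFunctor A 0).map (hx a)
    rw [Functor.map_comp, nat, Functor.map_zero, ← assoc, ← assoc] at this
    rw [← cancel_mono (e.inv.app _), this, zero_comp, zero_comp]
  · intro f
    obtain ⟨x, hx⟩ := exists_hom (X := X) (J := ∏ᶜ fun _ : ι => J)
      ((Pi.lift fun a => (homologyFunctor A 0).map (f a) ≫ e.hom.app J) ≫ e.inv.app _)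
    refine ⟨x, fun a => ?_⟩
    rw [← sub_eq_zero]
    apply hom_eq_zero
    rw [Functor.map_sub, sub_eq_zero, Functor.map_comp, hx, nat]
    simp

lemma prodGood_step (S : ShortComplex A) (hS : S.ShortExact) (h2 : ProdGood S.X₂)
    (h3 : ProdGood S.X₃) : ProdGood S.X₁ := by
  intro ι X
  let s := singleFunctor A 0
  have hP := prodSes_shortExact ι S hS
  have nf : ∀ a, s.map (prodSes ι S).f ≫ s.map (Pi.π (fun _ : ι => S.X₂) a) =
      s.map (Pi.π (fun _ : ι => S.X₁) a) ≫ s.map S.f := fun a => by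
    rw [← s.map_comp, ← s.map_comp]; simp [prodSes]
  have ng : ∀ a, s.map (prodSes ι S).g ≫ s.map (Pi.π (fun _ : ι => S.X₃) a) =
      s.map (Pi.π (fun _ : ι => S.X₂) a) ≫ s.map S.g := fun a => by
    rw [← s.map_comp, ← s.map_comp]; simp [prodSes]
  have nd : ∀ a, hP.singleδ ≫ (s.map (Pi.π (fun _ : ι => S.X₁) a))⟦(1 : ℤ)⟧' =
      s.map (Pi.π (fun _ : ι => S.X₃) a) ≫ hS.singleδ := fun a =>
    ses_δ_nat hP hS (prodSesπ ι S a)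
  constructor
  · intro x hx
    obtain ⟨y, hy⟩ := ses_lift₁ hP x ((h2 ι X).1 _ (fun a => by
      rw [assoc, nf, ← assoc, hx, zero_comp]))
    have hz : ∀ a, ∃ z : X⟦(1 : ℤ)⟧ ⟶ s.obj S.X₂,
        y ≫ s.map (Pi.π (fun _ : ι => S.X₃) a) = z ≫ s.map S.g := fun a =>
      ses_lift₃ hS _ (by
        rw [assoc, ← nd, ← assoc, ← hy, ← Functor.map_comp, hx, Functor.map_zero])
    choose z hz using hz
    obtain ⟨Z, hZ⟩ := (h2 ι (X⟦(1 : ℤ)⟧)).2 z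
    have : y = Z ≫ s.map (prodSes ι S).g := by
      rw [← sub_eq_zero]
      refine (h3 ι _).1 _ (fun a => ?_)
      rw [Preadditive.sub_comp, hz, assoc, ng, ← assoc, hZ, sub_self]
    apply shift_inj 1
    rw [hy, this, assoc, ses_g_δ hP, comp_zero, Functor.map_zero]
  · intro f
    obtain ⟨t, ht⟩ := (h2 ι X).2 (fun a => f a ≫ s.map S.f)
    obtain ⟨x', hx'⟩ := ses_lift₂ hP t ((h3 ι X).1 _ (fun a => by
      rw [assoc, ng, ← assoc, ht, assoc, ← s.map_comp, S.zero, s.map_zero, comp_zero]))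
    have hy : ∀ a, ∃ y : X⟦(1 : ℤ)⟧ ⟶ s.obj S.X₃,
        (f a - x' ≫ s.map (Pi.π (fun _ : ι => S.X₁) a))⟦(1 : ℤ)⟧' = y ≫ hS.singleδ := fun a =>
      ses_lift₁ hS _ (by
        rw [Preadditive.sub_comp, assoc, ← nf, ← assoc, ← hx', ht, sub_self])
    choose y hy using hy
    obtain ⟨Y, hY⟩ := (h3 ι _).2 y
    obtain ⟨u, hu⟩ := (shiftFunctor (DerivedCategory A) (1 : ℤ)).map_surjective (Y ≫ hP.singleδ)
    refine ⟨x' + u, fun a => ?_⟩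
    rw [Preadditive.add_comp, ← eq_sub_iff_add_eq']
    apply shift_inj 1
    rw [hy, Functor.map_comp, hu, assoc, nd, ← assoc, hY]

lemma prodGood (M : A) (n : ℕ) (hM : HasInjectiveDimensionLT M (n + 1)) : ProdGood M :=
  inj_induction (fun M _ => ProdGood M) (fun J _ => prodGood_injective J)
    (fun M _ h1 h2 => prodGood_step (injSes M) (injSes_shortExact M) h1 h2) M n hM

end
end Cot

namespace Cot
open CategoryTheory Category Limits Pretriangulated
section
set_option linter.unusedSectionVars false
variable {D : Type u} [Category.{v} D] [HasZeroObject D] [HasShift D ℤ] [Preadditive D]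
  [∀ n : ℤ, (shiftFunctor D n).Additive] [Pretriangulated D]

/-- All maps from `X` to `c⟦i⟧` vanish. -/
def W (c X : D) (i : ℤ) : Prop := ∀ f : X ⟶ c⟦i⟧, f = 0

lemma exists_shift_desc {c X : D} (a j i : ℤ) (h : j + a = i) (f : X⟦a⟧ ⟶ c⟦i⟧) :
    ∃ g : X ⟶ c⟦j⟧, f = g⟦a⟧' ≫ (shiftFunctorAdd' D j a i h).inv.app c := by
  obtain ⟨g, hg⟩ := (shiftFunctor D a).map_surjective
    (f ≫ (shiftFunctorAdd' D j a i h).hom.app c)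
  exact ⟨g, by simp [hg]⟩

lemma W_shift {c X : D} (a j i : ℤ) (h : j + a = i) : W c (X⟦a⟧) i ↔ W c X j := by
  constructor
  · intro H g
    have := H (g⟦a⟧' ≫ (shiftFunctorAdd' D j a i h).inv.app c)
    apply (shiftFunctor D a).map_injective
    rw [← cancel_mono ((shiftFunctorAdd' D j a i h).inv.app c), this]
    simp
  · intro H f
    obtain ⟨g, rfl⟩ := exists_shift_desc a j i h f
    rw [H g, Functor.map_zero, zero_comp]

lemma W_of_iso {c X Y : D} (e : X ≅ Y) {i : ℤ} (h : W c X i) : W c Y i := fun f => by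
  rw [← cancel_epi e.hom, h (e.hom ≫ f), comp_zero]

section tri
variable {c X Y Z : D} {f : X ⟶ Y} {g : Y ⟶ Z} {h : Z ⟶ X⟦(1 : ℤ)⟧}

lemma tri_ex₁ (hT : Triangle.mk f g h ∈ distTriang D) {i : ℤ} (hZ : W c Z (i + 1)) (a : X ⟶ c⟦i⟧) : ∃ b : Y ⟶ c⟦i⟧, a = f ≫ b := by
  have hT' := inv_rot_of_distTriang _ hT
  refine Triangle.yoneda_exact₂ _ hT' a ?_
  have : W c (Z⟦(-1 : ℤ)⟧) i := (W_shift (-1) (i + 1) i (by lia)).2 hZ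
  exact this _

lemma tri_ex₂ (hT : Triangle.mk f g h ∈ distTriang D) {i : ℤ} (b : Y ⟶ c⟦i⟧) (hb : f ≫ b = 0) : ∃ z : Z ⟶ c⟦i⟧, b = g ≫ z :=
  Triangle.yoneda_exact₂ _ hT b hb

lemma tri_ex₃ (hT : Triangle.mk f g h ∈ distTriang D) {i : ℤ} (z : Z ⟶ c⟦i⟧) (hz : g ≫ z = 0) : ∃ a : X⟦(1 : ℤ)⟧ ⟶ c⟦i⟧, z = h ≫ a :=
  Triangle.yoneda_exact₃ _ hT z hz

lemma W₁ (hT : Triangle.mk f g h ∈ distTriang D) {i : ℤ} (hY : W c Y i) (hZ : W c Z (i + 1)) : W c X i := fun a => by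
  obtain ⟨b, rfl⟩ := tri_ex₁ hT hZ a
  rw [hY b, comp_zero]

lemma W₂ (hT : Triangle.mk f g h ∈ distTriang D) {i : ℤ} (hX : W c X i) (hZ : W c Z i) : W c Y i := fun b => by
  obtain ⟨z, rfl⟩ := tri_ex₂ hT b (hX _)
  rw [hZ z, comp_zero]

lemma W₃ (hT : Triangle.mk f g h ∈ distTriang D) {i : ℤ} (j : ℤ) (hj : j + 1 = i) (hX : ∀ a : X ⟶ c⟦j⟧, ∃ b, a = f ≫ b) (hY : W c Y i) :
    W c Z i := fun z => by
  obtain ⟨a, rfl⟩ := tri_ex₃ hT z (hY _)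
  obtain ⟨a', rfl⟩ := exists_shift_desc 1 j i hj a
  obtain ⟨b, rfl⟩ := hX a'
  have : h ≫ f⟦(1 : ℤ)⟧' = 0 := comp_distTriang_mor_zero₃₁ _ hT
  rw [Functor.map_comp, assoc, reassoc_of% this, zero_comp]

lemma W₃' (hT : Triangle.mk f g h ∈ distTriang D) {i : ℤ} (j : ℤ) (hj : j + 1 = i) (hX : W c X j)
    (hY : ∀ b : Y ⟶ c⟦i⟧, f ≫ b = 0 → b = 0) : W c Z i := fun z => by
  have h0 : f ≫ g = 0 := comp_distTriang_mor_zero₁₂ _ hT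
  obtain ⟨a, rfl⟩ := tri_ex₃ hT z (hY _ (by rw [reassoc_of% h0, zero_comp]))
  rw [(W_shift 1 j i hj).2 hX a, comp_zero]

lemma bij_of_W (hT : Triangle.mk f g h ∈ distTriang D) (hZ : W c Z 0) (hZ' : W c Z 1) :
    Function.Bijective (fun b : Y ⟶ c⟦(0 : ℤ)⟧ => f ≫ b) := by
  constructor
  · intro b b' hb
    rw [← sub_eq_zero]
    obtain ⟨z, hz⟩ := tri_ex₂ hT (b - b') (by
      rw [Preadditive.comp_sub, sub_eq_zero]; exact hb)
    rw [hz, hZ z, comp_zero]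
  · intro a
    obtain ⟨b, rfl⟩ := tri_ex₁ hT (i := 0) hZ' a
    exact ⟨b, rfl⟩

end tri

/-- The heart condition. -/
def Heart (c X : D) : Prop := ∀ i : ℤ, i ≠ 0 → W c X i

variable (c : D)

/-- there are enough approximations by objects in the heart. -/
def HE : Prop := ∀ X : D, ∃ (E : D) (u : X ⟶ E), Heart c E ∧ ∀ g : X ⟶ c, ∃ e : E ⟶ c, g = u ≫ e

lemma HE_shift (h : HE c) (X : D) (k : ℤ) : ∃ (E : D) (u : X ⟶ E),
    (∀ i : ℤ, i ≠ k → W c E i) ∧ ∀ g : X ⟶ c⟦k⟧, ∃ e : E ⟶ c⟦k⟧, g = u ≫ e := by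
  obtain ⟨E, u, hE, hu⟩ := h (X⟦-k⟧)
  let e := (shiftFunctorCompIsoId D (-k) k (by lia)).app X
  refine ⟨E⟦k⟧, e.inv ≫ u⟦k⟧', fun i hi => (W_shift k (i - k) i (by lia)).2 (hE _ (by lia)),
    fun g => ?_⟩
  obtain ⟨g', hg'⟩ := (shiftFunctor D k).map_surjective (e.hom ≫ g)
  obtain ⟨e', rfl⟩ := hu g'
  refine ⟨e'⟦k⟧', ?_⟩
  rw [assoc, ← Functor.map_comp, hg', Iso.inv_hom_id_assoc]

/-- Truncation hypothesis. -/
def HT : Prop := ∃ K : ℕ, ∀ (k : ℕ), K ≤ k → ∀ Y : D, (∀ i : ℤ, i ≠ 0 → i ≠ -k → W c Y i) →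
  ∃ (T : D) (p : T ⟶ Y), Heart c T ∧ Function.Bijective (fun b : Y ⟶ c⟦(0 : ℤ)⟧ => p ≫ b)

lemma comp_bij {X Y Z d : D} {p : X ⟶ Y} {q : Y ⟶ Z}
    (hp : Function.Bijective (fun b : Y ⟶ d => p ≫ b))
    (hq : Function.Bijective (fun b : Z ⟶ d => q ≫ b)) :
    Function.Bijective (fun b : Z ⟶ d => (p ≫ q) ≫ b) := by
  have := hp.comp hq
  convert this using 2
  simp

lemma iterate (hE : HE c) (F : D) (hF : ∀ i : ℤ, i ≠ 0 → i ≠ -1 → W c F i) (k : ℕ) :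
    ∃ (Y : D) (p : Y ⟶ F), (∀ i : ℤ, i ≠ 0 → i ≠ -(k + 1 : ℕ) → W c Y i) ∧
      Function.Bijective (fun b : F ⟶ c⟦(0 : ℤ)⟧ => p ≫ b) := by
  induction k with
  | zero => exact ⟨F, 𝟙 F, by simpa using hF, by
      simp only [id_comp]; exact Function.bijective_id⟩
  | succ k ih =>
    obtain ⟨Y, p, hY, hp⟩ := ih
    obtain ⟨E, u, hE, hu⟩ := HE_shift c hE Y (-(k + 1 : ℕ))
    obtain ⟨Y', f, δ, hT⟩ := distinguished_cocone_triangle₁ u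
    refine ⟨Y', f ≫ p, ?_, comp_bij (bij_of_W hT (hE _ (by lia)) (hE _ (by lia))) hp⟩
    intro i h0 hk
    by_cases hik : i = -(k + 1 : ℕ)
    · subst hik
      intro a
      obtain ⟨b, rfl⟩ := tri_ex₁ hT (hE _ (by lia)) a
      obtain ⟨b', rfl⟩ := hu b
      have h0 : f ≫ u = 0 := comp_distTriang_mor_zero₁₂ _ hT
      rw [reassoc_of% h0, zero_comp]
    · exact W₁ hT (hY i h0 hik) (hE _ (by lia))

lemma keyA (hE : HE c) (hT : HT c) (F : D) (hF : ∀ i : ℤ, i ≠ 0 → i ≠ -1 → W c F i) :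
    ∃ (T : D) (p : T ⟶ F), Heart c T ∧
      Function.Bijective (fun b : F ⟶ c⟦(0 : ℤ)⟧ => p ≫ b) := by
  obtain ⟨K, hK⟩ := hT
  obtain ⟨Y, p, hY, hp⟩ := iterate c hE F hF K
  obtain ⟨T, q, hT, hq⟩ := hK (K + 1) (by lia) Y hY
  exact ⟨T, q ≫ p, hT, comp_bij hq hp⟩

lemma fiber_W {F X Y : D} {j : F ⟶ X} {f : X ⟶ Y} {δ : Y ⟶ F⟦(1 : ℤ)⟧}
    (hT : Triangle.mk j f δ ∈ distTriang D) (hX : Heart c X) (hY : Heart c Y) :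
    ∀ i : ℤ, i ≠ 0 → i ≠ -1 → W c F i := fun i h0 h1 =>
  W₁ hT (hX i h0) (hY _ (by lia))

lemma ext_of_mono₀ (hE : HE c) (hT : HT c) {X Y : D} (hX : Heart c X) (hY : Heart c Y)
    (f : X ⟶ Y) (hf : ∀ Z : D, Heart c Z → ∀ g : Z ⟶ X, g ≫ f = 0 → g = 0)
    (g : X ⟶ c⟦(0 : ℤ)⟧) : ∃ h : Y ⟶ c⟦(0 : ℤ)⟧, f ≫ h = g := by
  obtain ⟨F, j, δ, hF⟩ := distinguished_cocone_triangle₁ f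
  obtain ⟨T, p, hT, hp⟩ := keyA c hE hT F (fiber_W c hF hX hY)
  have h0 : j ≫ f = 0 := comp_distTriang_mor_zero₁₂ _ hF
  have hpj : p ≫ j = 0 := hf T hT _ (by rw [assoc, h0, comp_zero])
  obtain ⟨h, hh⟩ := tri_ex₂ hF g (hp.1 (by
    dsimp only
    rw [comp_zero, reassoc_of% hpj, zero_comp]))
  exact ⟨h, hh.symm⟩

lemma cogen₀ (hE : HE c) (hT : HT c) (hz : ∀ Z : D, (∀ i, W c Z i) → IsZero Z)
    {X Y : D} (hX : Heart c X) (hY : Heart c Y)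
    (f : X ⟶ Y) (hf : ∀ h : Y ⟶ c⟦(0 : ℤ)⟧, f ≫ h = 0) : f = 0 := by
  obtain ⟨F, j, δ, hF⟩ := distinguished_cocone_triangle₁ f
  obtain ⟨T, p, hT, hp⟩ := keyA c hE hT F (fiber_W c hF hX hY)
  have h0 : j ≫ f = 0 := comp_distTriang_mor_zero₁₂ _ hF
  have hj : Function.Bijective (fun b : X ⟶ c⟦(0 : ℤ)⟧ => j ≫ b) := by
    constructor
    · intro b b' hb
      rw [← sub_eq_zero]
      obtain ⟨z, hz⟩ := tri_ex₂ hF (b - b') (by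
        rw [Preadditive.comp_sub, sub_eq_zero]; exact hb)
      rw [hz, hf]
    · intro a
      obtain ⟨b, rfl⟩ := tri_ex₁ hF (i := 0) (hY 1 (by simp)) a
      exact ⟨b, rfl⟩
  have hq := comp_bij hp hj
  obtain ⟨Z, g, h, hZ⟩ := distinguished_cocone_triangle (p ≫ j)
  have hZ0 : IsZero Z := hz Z (fun i => by
    by_cases hi : i = 0
    · subst hi
      exact W₃' hZ (-1) rfl (hT _ (by simp)) (fun b hb => hq.1 (by
        dsimp only
        rw [hb, comp_zero]))
    · by_cases h1 : i = 1
      · subst h1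
        refine W₃ hZ 0 rfl (fun a => ?_) (hX 1 hi)
        obtain ⟨b, rfl⟩ := hq.2 a
        exact ⟨b, rfl⟩
      · refine W₃ hZ (i - 1) (by lia) (fun a => ⟨0, ?_⟩) (hX i hi)
        rw [comp_zero]
        exact hT _ (by lia) a)
  have hi : IsIso (p ≫ j) := (Triangle.isZero₃_iff_isIso₁ _ hZ).1 hZ0
  rw [← cancel_epi (p ≫ j), assoc, h0, comp_zero, comp_zero]

lemma ext_of_mono (hE : HE c) (hT : HT c) {X Y : D} (hX : Heart c X) (hY : Heart c Y)
    (f : X ⟶ Y) (hf : ∀ Z : D, Heart c Z → ∀ g : Z ⟶ X, g ≫ f = 0 → g = 0)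
    (g : X ⟶ c) : ∃ h : Y ⟶ c, f ≫ h = g := by
  let e := (shiftFunctorZero D ℤ).app c
  obtain ⟨h, hh⟩ := ext_of_mono₀ c hE hT hX hY f hf (g ≫ e.inv)
  exact ⟨h ≫ e.hom, by rw [reassoc_of% hh, Iso.inv_hom_id, comp_id]⟩

lemma cogen (hE : HE c) (hT : HT c) (hz : ∀ Z : D, (∀ i, W c Z i) → IsZero Z)
    {X Y : D} (hX : Heart c X) (hY : Heart c Y)
    (f : X ⟶ Y) (hf : ∀ h : Y ⟶ c, f ≫ h = 0) : f = 0 := by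
  let e := (shiftFunctorZero D ℤ).app c
  refine cogen₀ c hE hT hz hX hY f (fun h => ?_)
  rw [← cancel_mono e.hom, assoc, hf, zero_comp]

end
end Cot

namespace Cot
open CategoryTheory Category Limits DerivedCategory Pretriangulated
section
set_option linter.unusedSectionVars false
variable {A : Type u} [Category.{v} A] [Abelian A]

/-- the cycles of an exact sequence. -/
noncomputable def K {m : ℕ} (S : ComposableArrows A m) (i : ℕ) (hi : i + 1 ≤ m) : A :=
  kernel (S.map' i (i + 1))

lemma ker_ses {X Y Z : A} (f : X ⟶ Y) (g : Y ⟶ Z) (hw : f ≫ g = 0)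
    (hex : (ShortComplex.mk _ _ hw).Exact) :
    ∃ w, (ShortComplex.mk (kernel.ι f) (kernel.lift g f hw) w).ShortExact := by
  have hepi : Epi (kernel.lift g f hw) := hex.epi_kernelLift
  have w : kernel.ι f ≫ kernel.lift g f hw = 0 := by
    rw [← cancel_mono (kernel.ι g)]
    simp
  have hm : Mono (ShortComplex.mk (kernel.ι f) (kernel.lift g f hw) w).f :=
    inferInstanceAs (Mono (kernel.ι f))
  refine ⟨w, @ShortComplex.ShortExact.mk _ _ _ _ ?_ hm hepi⟩
  apply ShortComplex.exact_of_f_is_kernel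
  have h : ∀ {W : A} (k : W ⟶ X) (hk : k ≫ kernel.lift g f hw = 0), k ≫ f = 0 := by
    intro W k hk
    have := congrArg (fun t => t ≫ kernel.ι g) hk
    simpa using this
  exact KernelFork.IsLimit.ofι' _ _ (fun {W} k hk => ⟨kernel.lift f k (h k hk),
    kernel.lift_ι f k (h k hk)⟩)

lemma K_ses {m : ℕ} (S : ComposableArrows A m) (hS : S.Exact) (i : ℕ) (hi : i + 2 ≤ m) :
    ∃ (f : K S i (by lia) ⟶ S.obj ⟨i, by lia⟩) (g : S.obj ⟨i, by lia⟩ ⟶ K S (i + 1) hi)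
      (w : f ≫ g = 0), (ShortComplex.mk f g w).ShortExact := by
  have hw : S.map' i (i + 1) ≫ S.map' (i + 1) (i + 2) = 0 := hS.zero i hi
  have hex : (ShortComplex.mk _ _ hw).Exact := hS.exact i hi
  obtain ⟨w, h⟩ := ker_ses _ _ hw hex
  exact ⟨_, _, w, h⟩

lemma K_last {m : ℕ} (S : ComposableArrows A (m + 1)) (h : IsZero (S.obj (Fin.last (m + 1)))) :
    Nonempty (K S m le_rfl ≅ S.obj ⟨m, by lia⟩) := by
  have h0 : S.map' m (m + 1) = 0 := h.eq_of_tgt _ _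
  exact ⟨kernelIsoOfEq h0 ≪≫ kernelZeroIsoSource⟩

lemma K_one {m : ℕ} (S : ComposableArrows A m) (hS : S.Exact) (h : IsZero (S.obj 0))
    (hm : 2 ≤ m) : IsZero (K S 1 hm) := by
  obtain ⟨f, g, w, hT⟩ := K_ses S hS 0 hm
  have := hT.epi_g
  exact IsZero.of_epi (f := g) h

end

section
set_option linter.unusedSectionVars false
variable {R : Type v} [Ring R]
open PaperStmt

lemma injDim {C : ModuleCat.{v} R} {n : ℕ} (h : InjDimLE C n) :
    HasInjectiveDimensionLT C (n + 1) := by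
  obtain ⟨S, hS, h0, hl, ⟨e⟩, hinj⟩ := h
  have key : ∀ l : ℕ, ∀ hl : l ≤ n, HasInjectiveDimensionLT (K S (n + 2 - l) (by lia)) (l + 1) := by
    intro l
    induction l with
    | zero =>
      intro _
      obtain ⟨e'⟩ := K_last S hl
      have := hinj (n + 2) (by lia) (by lia)
      have := Injective.of_iso e'.symm this
      exact injective_iff_hasInjectiveDimensionLT_one.1 this
    | succ l ih =>
      intro hln
      obtain ⟨f, g, w, hT⟩ := K_ses S hS (n + 2 - (l + 1)) (by lia)
      have := hinj (n + 2 - (l + 1)) (by lia) (by lia)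
      have := ih (by lia)
      have e : n + 2 - (l + 1) + 1 = n + 2 - l := by lia
      refine (hT.hasInjectiveDimensionLT_X₃_iff l ?_).1 ?_
      · assumption
      · simp only [e]
        exact this
  have := key n le_rfl
  have h2 : n + 2 - n = 2 := by lia
  simp only [h2] at this
  obtain ⟨f, g, w, hT⟩ := K_ses S hS 1 (by lia)
  have hK := K_one S hS h0 (by lia)
  have : IsIso g := by
    have := hT.epi_g
    have := hT.exact.mono_g (hK.eq_of_src _ _)
    exact isIso_of_mono_of_epi g
  exact hasInjectiveDimensionLT_of_iso ((asIso g).symm ≪≫ e) _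

end
end Cot

namespace Cot
open CategoryTheory Category Limits DerivedCategory Pretriangulated
section
set_option linter.unusedSectionVars false
variable {A : Type u} [Category.{v} A] [Abelian A] [HasDerivedCategory.{w} A]
  (C : A)

lemma hom_zero_of_W_zero {c X : DerivedCategory A} (h : W c X 0) (f : X ⟶ c) : f = 0 := by
  let e := (shiftFunctorZero (DerivedCategory A) ℤ).app c
  rw [← cancel_mono e.inv, zero_comp]
  exact h _

/-- Vanishing predicate. -/
def PV (M : A) (l : ℕ) : Prop := ∀ X : DerivedCategory A,
  (∀ j : ℤ, 0 ≤ j → j < l → W ((singleFunctor A 0).obj C) X j) →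
    ∀ f : X ⟶ (singleFunctor A 0).obj M, f = 0

lemma PV_zero {M : A} (h : IsZero M) : PV C M 0 := fun _ _ _ =>
  ((singleFunctor A 0).map_isZero h).eq_of_tgt _ _

lemma PV_iso {M N : A} (e : M ≅ N) {l : ℕ} (h : PV C M l) : PV C N l := fun X hX f => by
  rw [← cancel_mono ((singleFunctor A 0).map e.inv), zero_comp]
  exact h X hX _

lemma PV_step {S : ShortComplex A} (hS : S.ShortExact) (l : ℕ) (h1 : PV C S.X₁ l)
    (h2 : PV C S.X₂ 1) : PV C S.X₃ (l + 1) := by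
  intro X hX f
  let e := (shiftFunctorCompIsoId (DerivedCategory A) (-1 : ℤ) 1 (by lia)).app X
  obtain ⟨g, hg⟩ := (shiftFunctor (DerivedCategory A) (1 : ℤ)).map_surjective
    (e.hom ≫ f ≫ hS.singleδ)
  have hg0 : g = 0 := h1 _ (fun j h0 hj => (W_shift (-1) (j + 1) j (by lia)).2
    (hX _ (by lia) (by push_cast; lia))) g
  obtain ⟨y, rfl⟩ := ses_lift₃ hS f (by
    rw [← cancel_epi e.hom, ← hg, hg0, Functor.map_zero, comp_zero])
  rw [h2 X (fun j h0 hj => hX j h0 (by push_cast at *; lia)) y, zero_comp]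

lemma homology_zero {Q : A} [Injective Q] (hQ : IsCoseparator Q) {l : ℕ} (h : PV C Q l)
    (X : DerivedCategory A)
    (hX : ∀ j : ℤ, 0 ≤ j → j < l → W ((singleFunctor A 0).obj C) X j) :
    IsZero ((homologyFunctor A 0).obj X) := by
  rw [IsZero.iff_id_eq_zero]
  refine hQ.def _ _ (fun α => ?_)
  let e := (singleFunctorCompHomologyFunctorIso A 0).app Q
  obtain ⟨f, hf⟩ := exists_hom (α ≫ e.inv)
  rw [h X hX f, Functor.map_zero] at hf
  rw [id_comp, zero_comp, ← cancel_mono e.inv, ← hf, zero_comp]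

lemma homology_zero_deg {Q : A} [Injective Q] (hQ : IsCoseparator Q) {l : ℕ} (h : PV C Q l)
    (X : DerivedCategory A) (i : ℤ)
    (hX : ∀ j : ℤ, -i ≤ j → j < l - i → W ((singleFunctor A 0).obj C) X j) :
    IsZero ((homologyFunctor A i).obj X) := by
  have := homology_zero C hQ h (X⟦i⟧) (fun j h0 h1 =>
    (W_shift i (j - i) j (by lia)).2 (hX _ (by lia) (by lia)))
  exact this.of_iso (((homologyFunctor A 0).shiftIso i 0 i (by lia)).app X).symm

lemma isZero_of_homology (X : DerivedCategory A)
    (h : ∀ i, IsZero ((homologyFunctor A i).obj X)) : IsZero X := by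
  have : IsIso (0 : X ⟶ X) := by
    rw [isIso_iff]
    intro n
    rw [(h n).eq_of_src ((homologyFunctor A n).map (0 : X ⟶ X)) (𝟙 _)]
    infer_instance
  rw [IsZero.iff_id_eq_zero, ← IsIso.hom_inv_id (0 : X ⟶ X), zero_comp]

variable [EnoughInjectives A]

lemma W_of_homology {n : ℕ} (hC : HasInjectiveDimensionLT C (n + 1)) (X : DerivedCategory A)
    (i : ℤ) (h : ∀ j : ℤ, -i ≤ j → j ≤ n - i → IsZero ((homologyFunctor A j).obj X)) :
    W ((singleFunctor A 0).obj C) X i := by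
  have h0 : W ((singleFunctor A 0).obj C) (X⟦-i⟧) 0 := fun f => by
    let e := (shiftFunctorZero (DerivedCategory A) ℤ).app ((singleFunctor A 0).obj C)
    rw [← cancel_mono e.hom, zero_comp]
    refine hom_zero_of_homology C n hC _ (fun j hj0 hj1 => ?_) _
    exact homology_shift_zero j (-i) (-i + j) rfl (h _ (by lia) (by lia))
  exact (W_shift (-i) i 0 (by lia)).1 h0

lemma HT_holds {n : ℕ} (hC : HasInjectiveDimensionLT C (n + 1))
    {Q : A} [Injective Q] (hQ : IsCoseparator Q) {b : ℕ} (h : PV C Q b) :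
    HT ((singleFunctor A 0).obj C) := by
  refine ⟨n + b + 1, fun k hk Y hY => ?_⟩
  have hHY : ∀ j : ℤ, b ≤ j → j < k → IsZero ((homologyFunctor A j).obj Y) := fun j h0 h1 =>
    homology_zero_deg C hQ h Y j (fun i _ _ => hY i (by lia) (by lia))
  obtain ⟨T, U, hT, hU, p, q, δ, hTri⟩ := TStructure.t.exists_triangle Y (b : ℤ) (b + 1) rfl
  have : T.IsLE b := ⟨hT⟩
  have : U.IsGE (b + 1) := ⟨hU⟩
  have hHT : ∀ j : ℤ, b < j → IsZero ((homologyFunctor A j).obj T) := fun j hj =>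
    isZero_of_isLE T b j hj
  have hHU : ∀ j : ℤ, j < k → IsZero ((homologyFunctor A j).obj U) := fun j hj => by
    by_cases hjb : j < b + 1
    · exact isZero_of_isGE U (b + 1) j hjb
    · have ex := HomologySequence.exact₃ _ hTri j (j + 1) rfl
      exact ex.isZero_X₂ ((hHY j (by lia) hj).eq_of_src _ _) ((hHT (j + 1) (by lia)).eq_of_tgt _ _)
  have hWU : ∀ i : ℤ, n - i < k → W ((singleFunctor A 0).obj C) U i := fun i hi =>
    W_of_homology C hC U i (fun j _ _ => hHU j (by lia))
  refine ⟨T, p, fun i hi => ?_, bij_of_W hTri (hWU 0 (by lia)) (hWU 1 (by lia))⟩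
  by_cases hib : i < -b
  · exact W_of_homology C hC T i (fun j _ _ => hHT j (by lia))
  · exact W₁ hTri (hY i hi (by lia)) (hWU (i + 1) (by lia))

lemma zero_holds {Q : A} [Injective Q] (hQ : IsCoseparator Q) {b : ℕ} (h : PV C Q b)
    (Z : DerivedCategory A) (hZ : ∀ i, W ((singleFunctor A 0).obj C) Z i) : IsZero Z :=
  isZero_of_homology Z (fun i => homology_zero_deg C hQ h Z i (fun j _ _ => hZ j))

lemma W_single_neg {n : ℕ} (hC : HasInjectiveDimensionLT C (n + 1)) (M : A) (i : ℤ) (hi : i < 0) :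
    W ((singleFunctor A 0).obj C) ((singleFunctor A 0).obj M) i :=
  W_of_homology C hC _ i (fun j _ _ => isZero_of_isLE _ 0 j (by lia))

lemma heart_single {n : ℕ} (hC : HasInjectiveDimensionLT C (n + 1)) [HasExt.{e} A] (M : A)
    (h : ∀ j : ℕ, 0 < j → Subsingleton (Abelian.Ext M C j)) :
    Heart ((singleFunctor A 0).obj C) ((singleFunctor A 0).obj M) := by
  intro i hi
  by_cases h0 : i < 0
  · exact W_single_neg C hC M i h0
  · obtain ⟨j, rfl⟩ := Int.eq_ofNat_of_zero_le (not_lt.1 h0)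
    have := h j (by lia)
    intro f
    exact (Abelian.Ext.homEquiv (X := M) (Y := C) (n := j)).symm.injective
      (Subsingleton.elim _ _)

lemma heart_retract {c X Y : DerivedCategory A} (hX : Heart c X) (i : Y ⟶ X) (r : X ⟶ Y)
    (h : i ≫ r = 𝟙 Y) : Heart c Y := fun j hj f => by
  rw [← id_comp f, ← h, assoc, hX j hj (r ≫ f), comp_zero]

variable [HasProducts.{v} A] [AB4Star A]

lemma PV_prod {n : ℕ} (hC : HasInjectiveDimensionLT C (n + 1)) (ι : Type v) :
    PV C (∏ᶜ fun _ : ι => C) 1 := fun X hX f =>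
  (prodGood C n hC ι X).1 f (fun a => hom_zero_of_W_zero (hX 0 le_rfl (by simp)) _)

lemma PV_retract {M N : A} {l : ℕ} (h : PV C N l) (i : M ⟶ N) (r : N ⟶ M) (hir : i ≫ r = 𝟙 M) :
    PV C M l := fun X hX f => by
  have := h X hX (f ≫ (singleFunctor A 0).map i)
  rw [← comp_id f, ← CategoryTheory.Functor.map_id, ← hir, Functor.map_comp, reassoc_of% this, zero_comp]

lemma exists_univ {n : ℕ} (hC : HasInjectiveDimensionLT C (n + 1)) (X : DerivedCategory A) :
    ∃ (ι : Type v) (u : X ⟶ (singleFunctor A 0).obj (∏ᶜ fun _ : ι => C)),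
      ∀ g : X ⟶ (singleFunctor A 0).obj C, ∃ e, g = u ≫ e := by
  have := small_hom C n hC X
  obtain ⟨u, hu⟩ := (prodGood C n hC (Shrink.{v} (X ⟶ (singleFunctor A 0).obj C)) X).2
    (fun a => (equivShrink _).symm a)
  exact ⟨_, u, fun g => ⟨_, by rw [hu (equivShrink _ g), Equiv.symm_apply_apply]⟩⟩

end
end Cot

namespace Cot
open CategoryTheory Category Limits DerivedCategory Pretriangulated
section
set_option linter.unusedSectionVars false
variable {R : Type v} [Ring R]
open PaperStmt

lemma exists_cogen [HasDerivedCategory.{w} (ModuleCat.{v} R)] [HasExt.{e} (ModuleCat.{v} R)]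
    {C : ModuleCat.{v} R} {n : ℕ} (hC : IsBigNCotilting n C) :
    ∃ (Q : ModuleCat.{v} R) (b : ℕ), Injective Q ∧ IsCoseparator Q ∧ PV C Q b := by
  obtain ⟨h1, -, r, S, hS, h0, hl, hprod, hinj, hcos⟩ := hC
  have hI := injDim h1
  have key : ∀ i : ℕ, ∀ hi : i ≤ r + 1, PV C (K S (i + 1) (by lia)) i := by
    intro i
    induction i with
    | zero => exact fun _ => PV_zero C (K_one S hS h0 (by lia))
    | succ i ih =>
      intro hi
      obtain ⟨f, g, w, hT⟩ := K_ses S hS (i + 1) (by lia)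
      obtain ⟨ι, s, p, hsp⟩ := hprod (i + 1) (by lia) (by lia)
      exact PV_step C hT i (ih (by lia)) (PV_retract C (PV_prod C hI ι) s p hsp)
  obtain ⟨e⟩ := K_last S hl
  exact ⟨_, r + 1, hinj, hcos, PV_iso C e (key (r + 1) le_rfl)⟩

theorem main [HasExt.{e} (ModuleCat.{v} R)] [HasDerivedCategory.{w} (ModuleCat.{v} R)]
    (C : ModuleCat.{v} R) (hC : IsBigCotilting C) :
    InHeart C ((singleFunctor (ModuleCat.{v} R) 0).obj C) ∧
    HeartInjective C ((singleFunctor (ModuleCat.{v} R) 0).obj C) ∧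
    HeartCogen C ((singleFunctor (ModuleCat.{v} R) 0).obj C) ∧
    (∀ W : DerivedCategory (ModuleCat.{v} R), InHeart C W →
      (HeartInjective C W ↔
        ∃ M : ModuleCat.{v} R, InProdOf C M ∧
          Nonempty (W ≅ (singleFunctor (ModuleCat.{v} R) 0).obj M))) := by
  obtain ⟨n, hn⟩ := hC
  obtain ⟨Q, b, hQ, hcos, hPV⟩ := exists_cogen hn
  have hI := injDim hn.1
  let s := singleFunctor (ModuleCat.{v} R) 0
  have hP : ∀ ι : Type v, Heart (s.obj C) (s.obj (∏ᶜ fun _ : ι => C)) := fun ι =>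
    heart_single C hI _ (hn.2.1 ι)
  have hE : HE (s.obj C) := fun X => by
    obtain ⟨ι, u, hu⟩ := exists_univ C hI X
    exact ⟨_, u, hP ι, hu⟩
  have hT : HT (s.obj C) := HT_holds C hI hcos hPV
  have hz := zero_holds C hcos hPV
  have hCh : Heart (s.obj C) (s.obj C) := by
    refine heart_retract (hP PUnit) (s.map (Pi.lift fun _ => 𝟙 C))
      (s.map (Pi.π (fun _ : PUnit => C) PUnit.unit)) ?_
    rw [← s.map_comp, Pi.lift_π, s.map_id]
  have hinj : ∀ ⦃X Y : DerivedCategory (ModuleCat.{v} R)⦄ (f : X ⟶ Y), HeartMono C f →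
      ∀ g : X ⟶ s.obj C, ∃ h : Y ⟶ s.obj C, f ≫ h = g := fun X Y f hf g =>
    ext_of_mono (s.obj C) hE hT hf.1 hf.2.1 f (fun Z hZ g hg =>
      hf.2.2 Z hZ g 0 (by rw [hg, zero_comp])) g
  have hcog : HeartCogen C (s.obj C) := fun X Y hX hY f g hfg => by
    rw [← sub_eq_zero]
    refine cogen (s.obj C) hE hT hz hX hY _ (fun h => ?_)
    rw [Preadditive.sub_comp, hfg, sub_self]
  refine ⟨hCh, ⟨hCh, hinj⟩, hcog, fun W hW => ⟨fun hWi => ?_, ?_⟩⟩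
  · obtain ⟨ι, u, hu⟩ := exists_univ C hI W
    obtain ⟨r, hr⟩ := hWi.2 u ⟨hW, hP ι, fun Z hZ g h hgh => hcog Z W hZ hW g h (fun k => by
      obtain ⟨e, rfl⟩ := hu k
      rw [reassoc_of% hgh])⟩ (𝟙 W)
    obtain ⟨p, hp⟩ := s.map_surjective (r ≫ u)
    have hpp : p ≫ p = p := s.map_injective (by
      rw [s.map_comp, hp, assoc, reassoc_of% hr])
    obtain ⟨M, i, q, hiq, hqi⟩ := IsIdempotentComplete.idempotents_split _ p hpp
    refine ⟨M, ⟨ι, i, q, hiq⟩, ⟨⟨u ≫ s.map q, s.map i ≫ r, ?_, ?_⟩⟩⟩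
    · rw [assoc, ← s.map_comp_assoc, hqi, hp, assoc, hr, comp_id, hr]
    · rw [assoc, ← assoc r, ← hp, ← s.map_comp, ← s.map_comp, ← hqi, assoc, hiq, comp_id, hiq,
        s.map_id]
  · rintro ⟨M, ⟨ι, i, q, hiq⟩, ⟨e⟩⟩
    refine ⟨hW, fun X Y f hf g => ?_⟩
    have := fun a : ι => hinj f hf (g ≫ e.hom ≫ s.map i ≫ s.map (Pi.π (fun _ : ι => C) a))
    choose k hk using this
    obtain ⟨h, hh⟩ := (prodGood C n hI ι Y).2 k
    have hfh : f ≫ h = g ≫ e.hom ≫ s.map i := by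
      rw [← sub_eq_zero]
      refine (prodGood C n hI ι X).1 _ (fun a => ?_)
      rw [Preadditive.sub_comp, assoc, hh, hk, assoc, assoc, sub_self]
    refine ⟨h ≫ s.map q ≫ e.inv, ?_⟩
    rw [reassoc_of% hfh, ← s.map_comp_assoc, hiq, s.map_id, id_comp, e.hom_inv_id, comp_id]

end
end Cot

open PaperStmt DerivedCategory

theorem statement18 (R : Type v) [Ring R] [HasExt.{e} (ModuleCat.{v} R)]
    [HasDerivedCategory.{w} (ModuleCat.{v} R)]
    (C : ModuleCat.{v} R) (hC : IsBigCotilting C) :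
    InHeart C ((singleFunctor (ModuleCat.{v} R) 0).obj C) ∧
    HeartInjective C ((singleFunctor (ModuleCat.{v} R) 0).obj C) ∧
    HeartCogen C ((singleFunctor (ModuleCat.{v} R) 0).obj C) ∧
    (∀ W : DerivedCategory (ModuleCat.{v} R), InHeart C W →
      (HeartInjective C W ↔
        ∃ M : ModuleCat.{v} R, InProdOf C M ∧
          Nonempty (W ≅ (singleFunctor (ModuleCat.{v} R) 0).obj M))) := by
  exact Cot.main C hC
end
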